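/- For every ε > 0 there exists δ > 0 with the following property: if (n,u,φ) is a global classical L²-compact solution of the 1D Euler–Poisson system (EPw), with shift function y ∈ C¹(ℝ,ℝ), which conserves the energy E (i.e. t ↦ E[n(t),u(t),φ(t)] is constant) and satisfies sup_{t∈ℝ} ‖u(t)‖_{L²} < ∞, sup_{t∈ℝ} (‖n(t)‖_{L²} + ‖n(t)‖_{L^∞}) < δ, and sup_{t∈ℝ} |y'(t)| < k/√(1+k) − ε, then (n,u,φ) is identically zero. -/

import Mathlib

open MeasureTheory Real
open scoped ENNReal

noncomputable section

def sech (x : ℝ) : ℝ := (Real.cosh x)⁻¹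

def qfun (x : ℝ) : ℝ := Real.exp x - 1

structure IsPressure (p : ℝ → ℝ) : Prop where
  smooth : ContDiffOn ℝ (⊤ : ℕ∞) p (Set.Ioi (0 : ℝ))
  deriv_pos : ∀ s : ℝ, 0 < s → 0 < deriv p s
  deriv2_nonneg : ∀ s : ℝ, 0 < s → 0 ≤ deriv (deriv p) s

def IsWFor (p w : ℝ → ℝ) : Prop :=
  w 0 = 0 ∧ ∀ s : ℝ, -1 < s → HasDerivAt w (deriv p (1 + s) / (1 + s)) s

def Wfun (w : ℝ → ℝ) (a : ℝ) : ℝ := ∫ s in (0:ℝ)..a, w s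

def Rfun (x : ℝ) : ℝ := x * qfun x - ∫ s in (0:ℝ)..x, qfun s

def energyDensity (w : ℝ → ℝ) (n u φ : ℝ → ℝ) (x : ℝ) : ℝ :=
  (1/2) * (1 + n x) * u x ^ 2 + Wfun w (n x) + (1/2) * (deriv φ x) ^ 2 + Rfun (φ x)

def energy (w : ℝ → ℝ) (n u φ : ℝ → ℝ) : ℝ := ∫ x : ℝ, energyDensity w n u φ x

structure IsEPwSolution (w : ℝ → ℝ) (n u φ : ℝ → ℝ → ℝ) : Prop where
  dens_pos : ∀ t x : ℝ, 0 < 1 + n t x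
  reg_n : ContDiff ℝ 1 (Function.uncurry n)
  reg_u : ContDiff ℝ 1 (Function.uncurry u)
  reg_phi_space : ∀ t : ℝ, ContDiff ℝ 2 (φ t)
  reg_phi_time : ∀ x : ℝ, ContDiff ℝ 1 (fun t => φ t x)
  eq_n : ∀ t x : ℝ, deriv (fun s => n s x) t = - deriv (fun z => (1 + n t z) * u t z) x
  eq_u : ∀ t x : ℝ, deriv (fun s => u s x) t
      = - deriv (fun z => u t z ^ 2 / 2 + w (n t z) + φ t z) x
  eq_phi : ∀ t x : ℝ, - deriv (deriv (φ t)) x + qfun (φ t x) = n t x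

def ConservesEnergy (w : ℝ → ℝ) (n u φ : ℝ → ℝ → ℝ) : Prop :=
  ∀ t₁ t₂ : ℝ, energy w (n t₁) (u t₁) (φ t₁) = energy w (n t₂) (u t₂) (φ t₂)

def L2CompactWith (n u : ℝ → ℝ → ℝ) (y : ℝ → ℝ) : Prop :=
  ∀ ε : ℝ, 0 < ε → ∃ R : ℝ, 0 < R ∧
    ∀ t : ℝ, (∫ x in {x : ℝ | R < |x - y t|}, (n t x ^ 2 + u t x ^ 2)) < ε

/-!
In the frame moving along `y`, with velocity `c = y'` and a cutoff `χ` at scale `R`, consider the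
virial `I = ∫ x χ n u + κ ∫ χ u (1 + ∂ₓ)⁻¹ (χ n)`, where `κ = 1 / (2 (1 + k))`. Since `n ≈ φ - φ''`
and hence `(1 + ∂ₓ)⁻¹ n ≈ φ - φ'`, at quadratic order the derivative of the first term is
`∫ (u² / 2 + k n² / 2 - c n u) - ½ ∫ φ'²`, while that of the second integral is at least
`(1 + k) ∫ φ'² - ∫ u²`. With the above `κ` the terms in `φ'` cancel and
`I' ≥ ∫ (k u² / (2 (1 + k)) + k n² / 2 - c n u) - (errors)`, a form that is coercive exactly when
`|c| < k / √(1 + k)`. The errors are a small multiple of the mass `∫ (n² + u²)`: the cubic ones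
because `n` and `φ` are small, those near `|x| = R` by compactness. Conservation of energy keeps the
mass of a nontrivial solution away from `0`, so `I` would grow linearly although it is bounded.

No decay of `φ` is assumed, and its smallness is derived from that of `n`. From above it is a
Keller–Osserman bound. From below, `φ` is concave where `exp φ` is well below `1`, so its slope
would be unbounded there, and the force `-φ'` would create more local momentum than the bound on `u`
in `L²` permits.
-/

section Development

open Set Filter Topology

section Calculus

variable {a b : ℝ} {f g h : ℝ → ℝ}

lemma continuous_of_hasDerivAt (hfg : ∀ x, HasDerivAt f (g x) x) : Continuous f :=
  continuous_iff_continuousAt.2 fun x => (hfg x).continuousAt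

lemma hasDerivAt_intervalIntegral_of_continuous {F F' : ℝ → ℝ → ℝ} (a b t : ℝ)
    (hF : ∀ s, Continuous (F s)) (hF' : Continuous (Function.uncurry F'))
    (hd : ∀ s x, HasDerivAt (fun r => F r x) (F' s x) s) :
    HasDerivAt (fun s => ∫ x in a..b, F s x) (∫ x in a..b, F' t x) t := by
  obtain ⟨C, hC⟩ := (((isCompact_Icc (a := t - 1) (b := t + 1)).prod
    (isCompact_uIcc (a := a) (b := b))).image hF').isBounded.exists_norm_le
  refine (intervalIntegral.hasDerivAt_integral_of_dominated_loc_of_deriv_le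
    (s := Icc (t - 1) (t + 1)) (bound := fun _ => C) (F := F) (F' := F')
    (Icc_mem_nhds (by linarith) (by linarith)) ?_ ((hF t).intervalIntegrable _ _) ?_ ?_
    (continuous_const.intervalIntegrable _ _) ?_).2
  · exact Eventually.of_forall fun s => (hF s).aestronglyMeasurable
  · exact (hF'.uncurry_left t).aestronglyMeasurable
  · exact Eventually.of_forall fun x hx s hs => hC _ ⟨(s, x), ⟨hs, uIoc_subset_uIcc hx⟩, rfl⟩
  · exact Eventually.of_forall fun x _ s _ => hd s x

lemma integral_eq_sub_of_continuous_deriv (hfg : ∀ x, HasDerivAt f (g x) x) (hg : Continuous g) :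
    ∫ x in a..b, g x = f b - f a :=
  intervalIntegral.integral_eq_sub_of_hasDerivAt (fun x _ => hfg x) (hg.intervalIntegrable _ _)

lemma integral_linear_comb (α β : ℝ) (hf : Continuous f) (hg : Continuous g) :
    ∫ x in a..b, (α * f x + β * g x) = α * (∫ x in a..b, f x) + β * ∫ x in a..b, g x := by
  rw [intervalIntegral.integral_add, intervalIntegral.integral_const_mul,
    intervalIntegral.integral_const_mul] <;> exact Continuous.intervalIntegrable (by fun_prop) _ _

lemma integral_le_linear_comb (hab : a ≤ b) {α β : ℝ} (hf : Continuous f) (hg : Continuous g)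
    (hh : Continuous h) (hle : ∀ x ∈ Icc a b, h x ≤ α * f x + β * g x) :
    ∫ x in a..b, h x ≤ α * (∫ x in a..b, f x) + β * ∫ x in a..b, g x := by
  rw [← integral_linear_comb α β hf hg]
  exact intervalIntegral.integral_mono_on hab (hh.intervalIntegrable _ _)
    (Continuous.intervalIntegrable (by fun_prop) _ _) hle

lemma linear_comb_le_integral (hab : a ≤ b) {α β : ℝ} (hf : Continuous f) (hg : Continuous g)
    (hh : Continuous h) (hle : ∀ x ∈ Icc a b, α * f x + β * g x ≤ h x) :
    α * (∫ x in a..b, f x) + β * (∫ x in a..b, g x) ≤ ∫ x in a..b, h x := by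
  rw [← integral_linear_comb α β hf hg]
  exact intervalIntegral.integral_mono_on hab (Continuous.intervalIntegrable (by fun_prop) _ _)
    (hh.intervalIntegrable _ _) hle

lemma abs_integral_mul_le (hab : a ≤ b) (hf : Continuous f) (hg : Continuous g) {ρ : ℝ}
    (hρ : 0 < ρ) :
    |∫ x in a..b, f x * g x|
      ≤ ρ / 2 * (∫ x in a..b, f x ^ 2) + 1 / (2 * ρ) * ∫ x in a..b, g x ^ 2 := by
  have hexpand : ∀ σ p q : ℝ, σ ^ 2 = 1 →
      1 / (2 * ρ) * (ρ * p + σ * q) ^ 2 = ρ / 2 * p ^ 2 + 1 / (2 * ρ) * q ^ 2 + σ * (p * q) := by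
    intro σ p q hσ
    rw [add_sq, mul_pow σ, hσ]
    field_simp
    ring
  have hpos : ∀ σ p q : ℝ, 0 ≤ 1 / (2 * ρ) * (ρ * p + σ * q) ^ 2 := fun σ p q => by positivity
  have hle := integral_le_linear_comb hab (α := ρ / 2) (β := 1 / (2 * ρ)) (f := fun x => f x ^ 2)
    (g := fun x => g x ^ 2) (h := fun x => f x * g x) (by fun_prop) (by fun_prop) (by fun_prop)
    fun x _ => by linarith [hpos (-1) (f x) (g x), hexpand (-1) (f x) (g x) (by norm_num)]
  have hge := linear_comb_le_integral hab (α := -(ρ / 2)) (β := -(1 / (2 * ρ)))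
    (f := fun x => f x ^ 2) (g := fun x => g x ^ 2) (h := fun x => f x * g x) (by fun_prop)
    (by fun_prop) (by fun_prop) fun x _ => by
      linarith [hpos 1 (f x) (g x), hexpand 1 (f x) (g x) (by norm_num)]
  exact abs_le.2 ⟨by linarith, hle⟩

lemma second_deriv_nonpos_of_isLocalMax {f' : ℝ → ℝ} {f'' x : ℝ}
    (hf : ∀ᶠ z in 𝓝 x, HasDerivAt f (f' z) z) (hf' : HasDerivAt f' f'' x)
    (hmax : IsLocalMax f x) : f'' ≤ 0 := by
  by_contra! hpos
  have hderiv : deriv f =ᶠ[𝓝 x] f' := hf.mono fun z hz => hz.deriv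
  have hderiv2 : deriv (deriv f) x = f'' := by rw [hderiv.deriv_eq, hf'.deriv]
  have hmin : IsLocalMin f x := isLocalMin_of_deriv_deriv_pos (hderiv2.symm ▸ hpos)
    hmax.deriv_eq_zero hf.self_of_nhds.continuousAt
  have hconst : f =ᶠ[𝓝 x] fun _ => f x := by
    filter_upwards [hmax, hmin] with z h₁ h₂ using le_antisymm h₁ h₂
  have hzero : deriv f =ᶠ[𝓝 x] fun _ => 0 := by simpa using hconst.deriv
  have : deriv (deriv f) x = 0 := by rw [hzero.deriv_eq, deriv_const]
  linarith

lemma second_deriv_nonneg_of_isLocalMin {f' : ℝ → ℝ} {f'' x : ℝ}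
    (hf : ∀ᶠ z in 𝓝 x, HasDerivAt f (f' z) z) (hf' : HasDerivAt f' f'' x)
    (hmin : IsLocalMin f x) : 0 ≤ f'' :=
  neg_nonpos.1 (second_deriv_nonpos_of_isLocalMax (hf.mono fun _ hz => hz.neg) hf'.neg hmin.neg)

end Calculus

section KellerOsserman

variable {v v' v'' : ℝ → ℝ} {c : ℝ}

lemma hasDerivAt_mul_sq_sub_sq (hv : ∀ x, HasDerivAt v (v' x) x) (x₀ l x : ℝ) :
    HasDerivAt (fun z => v z * (l ^ 2 - (z - x₀) ^ 2) ^ 2)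
      (v' x * (l ^ 2 - (x - x₀) ^ 2) ^ 2 - 4 * v x * (l ^ 2 - (x - x₀) ^ 2) * (x - x₀)) x := by
  refine ((hv x).fun_mul
    (((((hasDerivAt_id' x).sub_const x₀).fun_pow 2).const_sub (l ^ 2)).fun_pow 2)).congr_deriv ?_
  norm_num
  ring

lemma hasDerivAt_deriv_mul_sq_sub_sq (hv : ∀ x, HasDerivAt v (v' x) x)
    (hv' : ∀ x, HasDerivAt v' (v'' x) x) (x₀ l x : ℝ) :
    HasDerivAt (fun z => v' z * (l ^ 2 - (z - x₀) ^ 2) ^ 2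
        - 4 * v z * (l ^ 2 - (z - x₀) ^ 2) * (z - x₀))
      (v'' x * (l ^ 2 - (x - x₀) ^ 2) ^ 2 - 8 * v' x * (l ^ 2 - (x - x₀) ^ 2) * (x - x₀)
        + v x * (8 * (x - x₀) ^ 2 - 4 * (l ^ 2 - (x - x₀) ^ 2))) x := by
  have hsub := (hasDerivAt_id' x).sub_const x₀
  have hD := (hsub.fun_pow 2).const_sub (l ^ 2)
  refine (((hv' x).fun_mul (hD.fun_pow 2)).fun_sub
    ((((hv x).const_mul 4).fun_mul hD).fun_mul hsub)).congr_deriv ?_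
  norm_num
  ring

/- The comparison is made through the maximum of `v * (l² - (x - x₀)²)²` on `[x₀ - l, x₀ + l]`:
the weight vanishes at the ends, so a positive maximum is interior. -/
lemma mul_sq_le_of_sq_le_second_deriv (hv : ∀ x, HasDerivAt v (v' x) x)
    (hv' : ∀ x, HasDerivAt v' (v'' x) x) (h : ∀ x, 0 < v x → c * v x ^ 2 ≤ v'' x) (hc : 0 < c)
    {x₀ l : ℝ} (hl : 0 < l) (hpos : 0 < v x₀) : c * v x₀ * l ^ 2 ≤ 28 := by
  have hcont : Continuous v := continuous_of_hasDerivAt hv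
  obtain ⟨x₁, hx₁, hmax⟩ := (isCompact_Icc (a := x₀ - l) (b := x₀ + l)).exists_isMaxOn
    ⟨x₀, by constructor <;> linarith⟩
    (f := fun x => v x * (l ^ 2 - (x - x₀) ^ 2) ^ 2) (by fun_prop)
  have hval : v x₀ * (l ^ 2 - (x₀ - x₀) ^ 2) ^ 2 ≤ v x₁ * (l ^ 2 - (x₁ - x₀) ^ 2) ^ 2 :=
    hmax (show x₀ ∈ Icc (x₀ - l) (x₀ + l) by constructor <;> linarith)
  have hfirst := hasDerivAt_mul_sq_sub_sq hv x₀ l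
  have hsecond := hasDerivAt_deriv_mul_sq_sub_sq hv hv' x₀ l x₁
  have hx₀ : 0 < v x₀ * (l ^ 2 - (x₀ - x₀) ^ 2) ^ 2 := by
    rw [sub_self, zero_pow two_ne_zero, sub_zero]; positivity
  have hv₁ : 0 < v x₁ := pos_of_mul_pos_left (hx₀.trans_le hval) (sq_nonneg _)
  set s := x₁ - x₀ with hs
  have hD : 0 < l ^ 2 - s ^ 2 := by
    refine lt_of_le_of_ne (by nlinarith [hx₁.1, hx₁.2]) fun h0 => ?_
    rw [← h0] at hval
    linarith
  have hsl : |s| < l := abs_lt_of_sq_lt_sq (by linarith) hl.le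
  have hloc : IsLocalMax (fun x => v x * (l ^ 2 - (x - x₀) ^ 2) ^ 2) x₁ :=
    hmax.isLocalMax (Icc_mem_nhds (by linarith [(abs_lt.1 hsl).1]) (by linarith [(abs_lt.1 hsl).2]))
  have hcrit : v' x₁ * (l ^ 2 - s ^ 2) = 4 * v x₁ * s := by
    have h0 := hloc.hasDerivAt_eq_zero (hfirst x₁)
    refine mul_right_cancel₀ hD.ne' ?_
    linear_combination h0
  have hconc := second_deriv_nonpos_of_isLocalMax (Eventually.of_forall hfirst) hsecond hloc
  have hquad : v x₁ * (c * v x₁ * (l ^ 2 - s ^ 2) ^ 2) ≤ v x₁ * (28 * l ^ 2) := by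
    have h₁ := mul_le_mul_of_nonneg_right (h x₁ hv₁) (sq_nonneg (l ^ 2 - s ^ 2))
    have h₂ : 0 ≤ v x₁ * (l ^ 2 - s ^ 2) := by positivity
    nlinarith [congrArg (· * (8 * s)) hcrit]
  have hprod := le_of_mul_le_mul_left hquad hv₁
  have : c * v x₀ * l ^ 2 * l ^ 2 ≤ 28 * l ^ 2 := by
    rw [sub_self] at hval
    nlinarith
  exact le_of_mul_le_mul_right this (by positivity)

theorem nonpos_of_sq_le_second_deriv (hv : ∀ x, HasDerivAt v (v' x) x)
    (hv' : ∀ x, HasDerivAt v' (v'' x) x) (hc : 0 < c)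
    (h : ∀ x, 0 < v x → c * v x ^ 2 ≤ v'' x) (x : ℝ) : v x ≤ 0 := by
  by_contra! hpos
  obtain ⟨l, hl, hbig⟩ := (((tendsto_pow_atTop (α := ℝ) two_ne_zero).const_mul_atTop
    (mul_pos hc hpos)).eventually_gt_atTop 28 |>.and (eventually_gt_atTop 0)).exists.imp
    fun _ => And.symm
  exact hbig.not_ge (mul_sq_le_of_sq_le_second_deriv hv hv' h hc hl hpos)

end KellerOsserman

/-- The potential `φ` generated by the density perturbation `n` through the nonlinear Poisson
equation `-φ'' + q(φ) = n`, `q(φ) = exp φ - 1`. No decay at infinity is assumed. -/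
structure SolvesPoisson (n φ : ℝ → ℝ) : Prop where
  contDiff : ContDiff ℝ 2 φ
  poisson : ∀ x, -deriv (deriv φ) x + qfun (φ x) = n x

lemma continuous_qfun : Continuous qfun := by
  unfold qfun
  fun_prop

namespace SolvesPoisson

variable {n φ : ℝ → ℝ} {δ : ℝ}

lemma hasDerivAt (hφ : SolvesPoisson n φ) (x : ℝ) : HasDerivAt φ (deriv φ x) x :=
  (hφ.contDiff.differentiable two_ne_zero x).hasDerivAt

lemma hasDerivAt_deriv (hφ : SolvesPoisson n φ) (x : ℝ) :
    HasDerivAt (deriv φ) (qfun (φ x) - n x) x := by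
  have hd : ContDiff ℝ 1 (deriv φ) :=
    (contDiff_succ_iff_deriv (n := 1).1 (by simpa [one_add_one_eq_two] using hφ.contDiff)).2.2
  exact (hd.differentiable one_ne_zero x).hasDerivAt.congr_deriv (by linarith [hφ.poisson x])

lemma continuous (hφ : SolvesPoisson n φ) : Continuous φ := hφ.contDiff.continuous

lemma continuous_deriv (hφ : SolvesPoisson n φ) : Continuous (deriv φ) :=
  continuous_of_hasDerivAt hφ.hasDerivAt_deriv

lemma comp_neg (hφ : SolvesPoisson n φ) :
    SolvesPoisson (fun x => n (-x)) (fun x => φ (-x)) where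
  contDiff := hφ.contDiff.comp contDiff_neg
  poisson x := by
    have h : deriv (fun z => φ (-z)) = fun z => -deriv φ (-z) := funext fun z => deriv_comp_neg φ z
    rw [h, deriv.fun_neg, deriv_comp_neg (deriv φ), neg_neg]
    exact hφ.poisson (-x)

lemma comp_add_const (hφ : SolvesPoisson n φ) (y : ℝ) :
    SolvesPoisson (fun x => n (x + y)) (fun x => φ (x + y)) where
  contDiff := hφ.contDiff.comp (contDiff_id.add contDiff_const)
  poisson x := by
    have h : deriv (fun z => φ (z + y)) = fun z => deriv φ (z + y) :=
      funext fun z => deriv_comp_add_const φ y z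
    rw [h, deriv_comp_add_const (deriv φ)]
    exact hφ.poisson (x + y)

theorem le_log (hφ : SolvesPoisson n φ) (hδ : 0 ≤ δ) (hn : ∀ x, n x ≤ δ) (x : ℝ) :
    φ x ≤ Real.log (1 + δ) := by
  suffices ∀ x, φ x - Real.log (1 + δ) ≤ 0 from sub_nonpos.1 (this x)
  refine nonpos_of_sq_le_second_deriv (fun x => (hφ.hasDerivAt x).sub_const _)
    hφ.hasDerivAt_deriv one_half_pos fun x hpos => ?_
  set v := φ x - Real.log (1 + δ) with hv
  have hexp : Real.exp (φ x) = (1 + δ) * Real.exp v := by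
    rw [hv, Real.exp_sub, Real.exp_log (by linarith)]
    field_simp
  have hquad := mul_le_mul_of_nonneg_left (Real.quadratic_le_exp_of_nonneg hpos.le)
    (show 0 ≤ 1 + δ by linarith)
  have hδv : 0 ≤ δ * (v + v ^ 2 / 2) := by positivity
  rw [qfun, hexp]
  linarith [hn x]

end SolvesPoisson

/-- The `C¹` bump `χ_R(x) = (1 - (x/R)²)²` on `[-R, R]`. It is never used outside that interval,
where the polynomial does not vanish. -/
def cutoff (R x : ℝ) : ℝ := (1 - (x / R) ^ 2) ^ 2

/-- The derivative `χ_R'` of `cutoff R`. -/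
def cutoffDeriv (R x : ℝ) : ℝ := -4 * (x / R) * (1 / R) * (1 - (x / R) ^ 2)

/-- The second derivative `χ_R''` of `cutoff R`. -/
def cutoffDeriv₂ (R x : ℝ) : ℝ := (12 * (x / R) ^ 2 - 4) / R ^ 2

/-- The derivative `(x χ_R)'` of the truncated multiplier `x χ_R` of the virial identity. -/
def virialWeight (R x : ℝ) : ℝ := (1 - (x / R) ^ 2) * (1 - 5 * (x / R) ^ 2)

section Cutoff

variable {R x : ℝ}

lemma sq_div_le_one (hR : 0 < R) (hx : x ∈ Icc (-R) R) : (x / R) ^ 2 ≤ 1 := by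
  rw [div_pow, div_le_one (by positivity)]
  exact sq_le_sq' hx.1 hx.2

lemma hasDerivAt_cutoff (R x : ℝ) : HasDerivAt (cutoff R) (cutoffDeriv R x) x := by
  refine (((((hasDerivAt_id' x).div_const R).fun_pow 2).const_sub 1).fun_pow 2).congr_deriv ?_
  rw [cutoffDeriv]
  norm_num
  ring

lemma hasDerivAt_cutoffDeriv (R x : ℝ) :
    HasDerivAt (cutoffDeriv R) (cutoffDeriv₂ R x) x := by
  have hs := (hasDerivAt_id' x).div_const R
  refine (((hs.const_mul (-4)).mul_const (1 / R)).fun_mul ((hs.fun_pow 2).const_sub 1)).congr_deriv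
    ?_
  rw [cutoffDeriv₂]
  norm_num
  ring

lemma hasDerivAt_id_mul_cutoff (hR : R ≠ 0) (x : ℝ) :
    HasDerivAt (fun z => z * cutoff R z) (virialWeight R x) x := by
  refine ((hasDerivAt_id' x).fun_mul (hasDerivAt_cutoff R x)).congr_deriv ?_
  rw [cutoff, cutoffDeriv, virialWeight]
  field_simp
  ring

@[fun_prop]
lemma continuous_cutoff (R : ℝ) : Continuous (cutoff R) := by
  unfold cutoff
  fun_prop

@[fun_prop]
lemma continuous_cutoffDeriv (R : ℝ) : Continuous (cutoffDeriv R) := by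
  unfold cutoffDeriv
  fun_prop

@[fun_prop]
lemma continuous_cutoffDeriv₂ (R : ℝ) : Continuous (cutoffDeriv₂ R) := by
  unfold cutoffDeriv₂
  fun_prop

@[fun_prop]
lemma continuous_virialWeight (R : ℝ) : Continuous (virialWeight R) := by
  unfold virialWeight
  fun_prop

lemma cutoff_self (hR : R ≠ 0) : cutoff R R = 0 := by simp [cutoff, hR]

lemma cutoff_neg_self (hR : R ≠ 0) : cutoff R (-R) = 0 := by simp [cutoff, hR]

lemma cutoffDeriv_self (hR : R ≠ 0) : cutoffDeriv R R = 0 := by simp [cutoffDeriv, hR]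

lemma cutoffDeriv_neg_self (hR : R ≠ 0) : cutoffDeriv R (-R) = 0 := by simp [cutoffDeriv, hR]

lemma cutoff_nonneg (R x : ℝ) : 0 ≤ cutoff R x := sq_nonneg _

lemma cutoff_le_one (hR : 0 < R) (hx : x ∈ Icc (-R) R) : cutoff R x ≤ 1 := by
  have := sq_div_le_one hR hx
  rw [cutoff]
  nlinarith [sq_nonneg (x / R)]

lemma one_sub_cutoff_le (R x : ℝ) : 1 - cutoff R x ≤ 2 * (x / R) ^ 2 := by
  rw [cutoff]
  linarith [sq_nonneg ((x / R) ^ 2)]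

lemma cutoffDeriv_sq_le (hR : 0 < R) (hx : x ∈ Icc (-R) R) :
    cutoffDeriv R x ^ 2 ≤ 16 / R ^ 2 * cutoff R x := by
  calc cutoffDeriv R x ^ 2 = 16 / R ^ 2 * cutoff R x * (x / R) ^ 2 := by
        rw [cutoffDeriv, cutoff]
        ring
    _ ≤ 16 / R ^ 2 * cutoff R x :=
        mul_le_of_le_one_right (mul_nonneg (by positivity) (cutoff_nonneg R x))
          (sq_div_le_one hR hx)

lemma abs_cutoffDeriv_le (hR : 0 < R) (hx : x ∈ Icc (-R) R) : |cutoffDeriv R x| ≤ 4 / R := by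
  refine abs_le_of_sq_le_sq ((cutoffDeriv_sq_le hR hx).trans ?_) (by positivity)
  calc 16 / R ^ 2 * cutoff R x ≤ 16 / R ^ 2 :=
        mul_le_of_le_one_right (by positivity) (cutoff_le_one hR hx)
    _ = (4 / R) ^ 2 := by ring

lemma abs_cutoffDeriv₂_le (hR : 0 < R) (hx : x ∈ Icc (-R) R) : |cutoffDeriv₂ R x| ≤ 8 / R ^ 2 := by
  have hs := sq_div_le_one hR hx
  have hs0 := sq_nonneg (x / R)
  rw [cutoffDeriv₂, abs_div, abs_of_pos (show 0 < R ^ 2 by positivity)]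
  gcongr
  rw [abs_le]
  constructor <;> linarith

lemma virialWeight_le_one (hR : 0 < R) (hx : x ∈ Icc (-R) R) : virialWeight R x ≤ 1 := by
  have := mul_nonneg (sq_nonneg (x / R)) (sub_nonneg.2 (sq_div_le_one hR hx))
  rw [virialWeight]
  linarith [sq_nonneg (x / R)]

lemma one_sub_virialWeight_le (R x : ℝ) : 1 - virialWeight R x ≤ 6 * (x / R) ^ 2 := by
  rw [virialWeight]
  linarith [sq_nonneg ((x / R) ^ 2)]

lemma neg_one_le_virialWeight (R x : ℝ) : -1 ≤ virialWeight R x := by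
  rw [virialWeight]
  linarith [sq_nonneg (5 * (x / R) ^ 2 - 3)]

lemma integral_cutoff (hR : R ≠ 0) : ∫ x in (-R)..R, cutoff R x = 16 / 15 * R := by
  have h : ∀ x, HasDerivAt (fun z => R * (z / R - 2 / 3 * (z / R) ^ 3 + 1 / 5 * (z / R) ^ 5))
      (cutoff R x) x := by
    intro x
    have hs := (hasDerivAt_id' x).div_const R
    refine (((hs.fun_sub ((hs.fun_pow 3).const_mul (2 / 3))).fun_add
      ((hs.fun_pow 5).const_mul (1 / 5))).const_mul R).congr_deriv ?_
    rw [cutoff]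
    norm_num
    field_simp
    ring
  rw [integral_eq_sub_of_continuous_deriv h (by fun_prop), neg_div, div_self hR]
  ring

end Cutoff

section LowerBound

lemma le_of_isLocalMin_imp_gt {f : ℝ → ℝ} {a b β z : ℝ} (hf : Continuous f)
    (hmin : ∀ x, IsLocalMin f x → β < f x) (hab : a < b) (hba : f b < f a) (hb : f b ≤ β)
    (hz : b ≤ z) : f z ≤ f b := by
  by_contra! hlt
  obtain ⟨m, hm, hle⟩ := (isCompact_Icc (a := a) (b := z)).exists_isMinOn
    ⟨a, by constructor <;> linarith⟩ hf.continuousOn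
  have hmb : f m ≤ f b := hle ⟨hab.le, hz⟩
  have ham : a < m := hm.1.lt_of_ne (by rintro rfl; linarith)
  have hmz : m < z := hm.2.lt_of_ne (by rintro rfl; linarith)
  exact (hmin m (hle.isLocalMin (Icc_mem_nhds ham hmz))).not_ge (hmb.trans hb)

lemma deriv_nonpos_of_forall_ge_le {f : ℝ → ℝ} {f' b : ℝ} (hf : HasDerivAt f f' b)
    (h : ∀ z, b ≤ z → f z ≤ f b) : f' ≤ 0 := by
  have hslope : Tendsto (slope f b) (𝓝[>] b) (𝓝 f') :=
    (hasDerivAt_iff_tendsto_slope.1 hf).mono_left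
      (nhdsWithin_mono b fun z (hz : b < z) => hz.ne')
  refine le_of_tendsto hslope ?_
  filter_upwards [self_mem_nhdsWithin] with z (hz : b < z)
  rw [slope_def_field]
  exact div_nonpos_of_nonpos_of_nonneg (sub_nonpos.2 (h z hz.le)) (sub_nonneg.2 hz.le)

lemma deriv_le_of_second_deriv_le {f f' f'' : ℝ → ℝ} {a b β c z : ℝ}
    (hf : ∀ x, HasDerivAt f (f' x) x) (hf' : ∀ x, HasDerivAt f' (f'' x) x) (hc : 0 < c)
    (hconc : ∀ x, f x ≤ β → f'' x ≤ -c) (hab : a < b) (hba : f b < f a) (hb : f b ≤ β)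
    (hz : b ≤ z) : f' z ≤ -c * (z - b) := by
  have hmin : ∀ x, IsLocalMin f x → β < f x := fun x hx => by
    by_contra! hle
    linarith [hconc x hle,
      second_deriv_nonneg_of_isLocalMin (Eventually.of_forall hf) (hf' x) hx]
  have hle : ∀ x, b ≤ x → f x ≤ f b := fun x =>
    le_of_isLocalMin_imp_gt (continuous_of_hasDerivAt hf) hmin hab hba hb
  have hb' : f' b ≤ 0 := deriv_nonpos_of_forall_ge_le (hf b) hle
  have := (convex_Ici b).image_sub_le_mul_sub_of_deriv_le
    (continuous_of_hasDerivAt hf').continuousOn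
    (fun x _ => (hf' x).differentiableAt.differentiableWithinAt) (C := -c)
    (fun x hx => by
      rw [interior_Ici] at hx
      rw [(hf' x).deriv]
      exact hconc x ((hle x hx.le).trans hb))
    b self_mem_Ici z hz hz
  linarith

/-- A solution of the momentum equation `∂ₜu = -∂ₓ(u²/2 + g + φ)` with `ut = ∂ₜu`, where `φ` is the
potential of `n`, the enthalpy satisfies `|g| ≤ G`, and `∫ u² ≤ M` over every interval. -/
structure IsBoundedMomentumFlow (G M : ℝ) (n u g φ ut : ℝ → ℝ → ℝ) : Prop where
  continuous_u : ∀ t, Continuous (u t)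
  continuous_ut : Continuous (Function.uncurry ut)
  solvesPoisson : ∀ t, SolvesPoisson (n t) (φ t)
  continuous_time : ∀ x, Continuous fun t => φ t x
  abs_enthalpy_le : ∀ t x, |g t x| ≤ G
  integral_sq_le : ∀ t a b, a ≤ b → ∫ x in a..b, u t x ^ 2 ≤ M
  hasDerivAt_time : ∀ t x, HasDerivAt (fun s => u s x) (ut t x) t
  hasDerivAt_flux : ∀ t x, HasDerivAt (fun z => u t z ^ 2 / 2 + g t z + φ t z) (-ut t x) x

namespace IsBoundedMomentumFlow

variable {G M : ℝ} {n u g φ ut : ℝ → ℝ → ℝ}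

lemma nonneg_enthalpy (h : IsBoundedMomentumFlow G M n u g φ ut) : 0 ≤ G :=
  (abs_nonneg _).trans (h.abs_enthalpy_le 0 0)

lemma nonneg_kinetic (h : IsBoundedMomentumFlow G M n u g φ ut) : 0 ≤ M := by
  simpa using h.integral_sq_le 0 0 0 le_rfl

lemma hasDerivAt_flux_sub (h : IsBoundedMomentumFlow G M n u g φ ut) (t x : ℝ) :
    HasDerivAt (fun z => u t z ^ 2 / 2 + g t z) (-ut t x - deriv (φ t) x) x := by
  simpa using (h.hasDerivAt_flux t x).fun_sub ((h.solvesPoisson t).hasDerivAt x)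

lemma comp_add_const (h : IsBoundedMomentumFlow G M n u g φ ut) (y : ℝ) :
    IsBoundedMomentumFlow G M (fun t x => n t (x + y)) (fun t x => u t (x + y))
      (fun t x => g t (x + y)) (fun t x => φ t (x + y)) (fun t x => ut t (x + y)) where
  continuous_u t := (h.continuous_u t).comp (continuous_add_const y)
  continuous_ut := h.continuous_ut.comp (by fun_prop : Continuous fun p : ℝ × ℝ => (p.1, p.2 + y))
  solvesPoisson t := (h.solvesPoisson t).comp_add_const y
  continuous_time x := h.continuous_time (x + y)
  abs_enthalpy_le t x := h.abs_enthalpy_le t (x + y)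
  integral_sq_le t a b hab := by
    rw [intervalIntegral.integral_comp_add_right (fun x => u t x ^ 2)]
    exact h.integral_sq_le t _ _ (by linarith)
  hasDerivAt_time t x := h.hasDerivAt_time t (x + y)
  hasDerivAt_flux t x := (h.hasDerivAt_flux t (x + y)).comp_add_const x y

lemma comp_neg (h : IsBoundedMomentumFlow G M n u g φ ut) :
    IsBoundedMomentumFlow G M (fun t x => n t (-x)) (fun t x => -u t (-x))
      (fun t x => g t (-x)) (fun t x => φ t (-x)) (fun t x => -ut t (-x)) where
  continuous_u t := ((h.continuous_u t).comp continuous_neg).neg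
  continuous_ut :=
    (h.continuous_ut.comp (by fun_prop : Continuous fun p : ℝ × ℝ => (p.1, -p.2))).neg
  solvesPoisson t := (h.solvesPoisson t).comp_neg
  continuous_time x := h.continuous_time (-x)
  abs_enthalpy_le t x := h.abs_enthalpy_le t (-x)
  integral_sq_le t a b hab := by
    simp_rw [neg_sq]
    rw [intervalIntegral.integral_comp_neg (fun x => u t x ^ 2)]
    exact h.integral_sq_le t _ _ (by linarith)
  hasDerivAt_time t x := (h.hasDerivAt_time t (-x)).fun_neg
  hasDerivAt_flux t x := by
    simpa [Function.comp_def] using (h.hasDerivAt_flux t (-x)).comp x (hasDerivAt_neg x)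

lemma hasDerivAt_local_momentum (h : IsBoundedMomentumFlow G M n u g φ ut) (t : ℝ) :
    HasDerivAt (fun s => ∫ x in (-1)..1, cutoff 1 x * u s x)
      (∫ x in (-1)..1, cutoff 1 x * ut t x) t := by
  have hut := h.continuous_ut
  refine hasDerivAt_intervalIntegral_of_continuous _ _ t
    (fun s => (continuous_cutoff 1).mul (h.continuous_u s)) ?_
    fun s x => (h.hasDerivAt_time s x).const_mul _
  exact (by fun_prop : Continuous fun p : ℝ × ℝ => cutoff 1 p.2 * Function.uncurry ut p)

lemma abs_local_momentum_le (h : IsBoundedMomentumFlow G M n u g φ ut) (t : ℝ) :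
    |∫ x in (-1)..1, cutoff 1 x * u t x| ≤ 2 + M := by
  have hu := h.continuous_u t
  have hpt : ∀ x ∈ Icc (-1 : ℝ) 1, |cutoff 1 x * u t x| ≤ 1 * 1 + 1 * u t x ^ 2 := fun x hx => by
    rw [abs_mul, abs_of_nonneg (cutoff_nonneg 1 x), ← sq_abs (u t x)]
    nlinarith [cutoff_le_one one_pos hx, abs_nonneg (u t x), sq_nonneg (|u t x| - 1)]
  calc |∫ x in (-1)..1, cutoff 1 x * u t x| ≤ ∫ x in (-1)..1, |cutoff 1 x * u t x| :=
        intervalIntegral.abs_integral_le_integral_abs (by norm_num)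
    _ ≤ 1 * (∫ _ in (-1 : ℝ)..1, (1 : ℝ)) + 1 * ∫ x in (-1)..1, u t x ^ 2 :=
        integral_le_linear_comb (by norm_num) continuous_const (by fun_prop) (by fun_prop) hpt
    _ ≤ 2 + M := by
        rw [intervalIntegral.integral_const, smul_eq_mul]
        linarith [h.integral_sq_le t (-1) 1 (by norm_num)]

lemma le_deriv_local_momentum (h : IsBoundedMomentumFlow G M n u g φ ut) {B t : ℝ}
    (hB : ∀ x ∈ Icc (-1 : ℝ) 1, deriv (φ t) x ≤ -B) :
    16 / 15 * B - (2 * M + 8 * G) ≤ ∫ x in (-1)..1, cutoff 1 x * ut t x := by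
  have hu := h.continuous_u t
  have hut : Continuous (ut t) := h.continuous_ut.uncurry_left t
  have hφ := (h.solvesPoisson t).continuous_deriv
  have hg : Continuous fun z => u t z ^ 2 / 2 + g t z :=
    continuous_of_hasDerivAt (h.hasDerivAt_flux_sub t)
  have hflux : Continuous fun x => cutoffDeriv 1 x * (u t x ^ 2 / 2 + g t x)
      + cutoff 1 x * (-ut t x - deriv (φ t) x) := by fun_prop
  have hmom : Continuous fun x => cutoff 1 x * ut t x := by fun_prop
  have hparts := integral_eq_sub_of_continuous_deriv (a := -1) (b := 1)
    (fun x => (hasDerivAt_cutoff 1 x).fun_mul (h.hasDerivAt_flux_sub t x)) hflux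
  rw [cutoff_self one_ne_zero, cutoff_neg_self one_ne_zero, zero_mul, zero_mul, sub_zero] at hparts
  have hpt : ∀ x ∈ Icc (-1 : ℝ) 1, -2 * u t x ^ 2 + 1 * (B * cutoff 1 x - 4 * G)
      ≤ 1 * (cutoffDeriv 1 x * (u t x ^ 2 / 2 + g t x)
        + cutoff 1 x * (-ut t x - deriv (φ t) x)) + 1 * (cutoff 1 x * ut t x) := fun x hx => by
    have hF : |u t x ^ 2 / 2 + g t x| ≤ u t x ^ 2 / 2 + G :=
      (abs_add_le _ _).trans (add_le_add (abs_of_nonneg (by positivity)).le (h.abs_enthalpy_le t x))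
    have hcut : |cutoffDeriv 1 x * (u t x ^ 2 / 2 + g t x)| ≤ 4 / 1 * (u t x ^ 2 / 2 + G) := by
      rw [abs_mul]
      exact mul_le_mul (abs_cutoffDeriv_le one_pos hx) hF (abs_nonneg _) (by norm_num)
    have hpush := mul_le_mul_of_nonneg_left (hB x hx) (cutoff_nonneg 1 x)
    linarith [neg_le_of_abs_le hcut]
  have hle := linear_comb_le_integral (by norm_num) (by fun_prop) (by fun_prop) (by fun_prop) hpt
  rw [integral_linear_comb 1 1 hflux hmom, hparts,
    intervalIntegral.integral_sub (Continuous.intervalIntegrable (by fun_prop) _ _)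
      intervalIntegrable_const, intervalIntegral.integral_const_mul, integral_cutoff one_ne_zero,
    intervalIntegral.integral_const, smul_eq_mul] at hle
  linarith [h.integral_sq_le t (-1) 1 (by norm_num)]

/- The force `-φ'` cannot stay large near a point: the local momentum `∫ χ u` is bounded. -/
lemma exists_forall_exists_neg_lt_deriv (h : IsBoundedMomentumFlow G M n u g φ ut) {τ : ℝ}
    (hτ : 0 < τ) (t₀ : ℝ) : ∃ B, ∀ X, ∃ t, |t - t₀| < τ ∧ ∃ x ∈ Icc (X - 1) (X + 1),
      -B < deriv (φ t) x := by
  refine ⟨2 * M + 8 * G + (2 * (2 + M) + 1) / (τ / 2), fun X => ?_⟩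
  set B := 2 * M + 8 * G + (2 * (2 + M) + 1) / (τ / 2) with hBdef
  have hM := h.nonneg_kinetic
  have hG := h.nonneg_enthalpy
  have hB : 0 ≤ B := by positivity
  by_contra! hall
  have hX := h.comp_add_const X
  obtain ⟨t, ht, hslope⟩ := exists_hasDerivAt_eq_slope _ _ (show t₀ < t₀ + τ / 2 by linarith)
    (continuous_of_hasDerivAt hX.hasDerivAt_local_momentum).continuousOn
    fun t _ => hX.hasDerivAt_local_momentum t
  have hforce : ∀ x ∈ Icc (-1 : ℝ) 1, deriv (fun z => φ t (z + X)) x ≤ -B := fun x hx => by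
    rw [deriv_comp_add_const (φ t)]
    exact hall t (by rw [abs_lt]; constructor <;> linarith [ht.1, ht.2]) _
      ⟨by linarith [hx.1], by linarith [hx.2]⟩
  have hlow := hX.le_deriv_local_momentum hforce
  rw [hslope, add_sub_cancel_left] at hlow
  have hdiv : (2 * (2 + M) + 1) / (τ / 2) ≤ _ / (τ / 2) := le_trans (by linarith) hlow
  rw [div_le_div_iff_of_pos_right (by positivity)] at hdiv
  linarith [abs_le.1 (hX.abs_local_momentum_le (t₀ + τ / 2)),
    abs_le.1 (hX.abs_local_momentum_le t₀)]

/- Where `exp φ < 1 - δ` the potential is concave, so once it decreases its slope goes to `-∞`. -/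
lemma not_lt_of_exp_lt (h : IsBoundedMomentumFlow G M n u g φ ut) {δ a b t₀ : ℝ}
    (hn : ∀ t x, -δ ≤ n t x) (hab : a < b) (hb : Real.exp (φ t₀ b) < 1 - δ) :
    ¬ φ t₀ b < φ t₀ a := by
  intro hba
  obtain ⟨β, hβ, hexp⟩ : ∃ β, φ t₀ b < β ∧ Real.exp β < 1 - δ := by
    have hnear : ∀ᶠ z in 𝓝[>] (φ t₀ b), Real.exp z < 1 - δ :=
      nhdsWithin_le_nhds (Real.continuous_exp.continuousAt.eventually (gt_mem_nhds hb))
    exact (eventually_mem_nhdsWithin.and hnear).exists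
  obtain ⟨τ, hτ, hball⟩ := Metric.eventually_nhds_iff.1
    (((h.continuous_time b).continuousAt.eventually_lt (h.continuous_time a).continuousAt hba).and
      ((h.continuous_time b).continuousAt.eventually (gt_mem_nhds hβ)))
  set c := 1 - δ - Real.exp β
  have hc0 : 0 < c := sub_pos.2 hexp
  obtain ⟨B, hB⟩ := h.exists_forall_exists_neg_lt_deriv hτ t₀
  obtain ⟨t, ht, x, hx, hslope⟩ := hB (b + 1 + |B| / c)
  obtain ⟨hba', hbβ⟩ := hball (show dist t t₀ < τ from ht)
  have hpos : 0 ≤ |B| / c := by positivity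
  have hsteep := deriv_le_of_second_deriv_le (h.solvesPoisson t).hasDerivAt
    (h.solvesPoisson t).hasDerivAt_deriv hc0
    (fun z hz => by rw [qfun]; linarith [hn t z, Real.exp_le_exp.2 hz]) hab hba' hbβ.le
    (show b ≤ x by linarith [hx.1])
  have hfar : |B| ≤ c * (x - b) := (div_le_iff₀' hc0).1 (by linarith [hx.1])
  linarith [le_abs_self B]

theorem one_sub_le_exp (h : IsBoundedMomentumFlow G M n u g φ ut) {δ : ℝ}
    (hn : ∀ t x, -δ ≤ n t x) (t x : ℝ) : 1 - δ ≤ Real.exp (φ t x) := by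
  by_contra! hlt
  have hnot_min : ¬ IsLocalMin (φ t) x := fun hmin => by
    have := second_deriv_nonneg_of_isLocalMin
      (Eventually.of_forall (h.solvesPoisson t).hasDerivAt)
      ((h.solvesPoisson t).hasDerivAt_deriv x) hmin
    rw [qfun] at this
    linarith [hn t x]
  obtain ⟨b, hb⟩ : ∃ b, φ t b < φ t x := by
    by_contra! hall
    exact hnot_min (Eventually.of_forall hall)
  have hexp : Real.exp (φ t b) < 1 - δ := (Real.exp_lt_exp.2 hb).trans hlt
  rcases lt_trichotomy x b with hxb | rfl | hbx
  · exact h.not_lt_of_exp_lt hn hxb hexp hb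
  · exact lt_irrefl _ hb
  · exact h.comp_neg.not_lt_of_exp_lt (fun t x => hn t (-x)) (neg_lt_neg hbx)
      (by rwa [neg_neg]) (by rwa [neg_neg, neg_neg])

theorem abs_potential_le (h : IsBoundedMomentumFlow G M n u g φ ut) {δ : ℝ} (hδ0 : 0 ≤ δ)
    (hδ : δ ≤ 1 / 2) (hn : ∀ t x, |n t x| ≤ δ) (t x : ℝ) : |φ t x| ≤ 2 * δ := by
  have hupper := (h.solvesPoisson t).le_log hδ0 (fun z => (abs_le.1 (hn t z)).2) x
  have hlog := Real.log_le_sub_one_of_pos (show 0 < 1 + δ by linarith)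
  have hlower := h.one_sub_le_exp (fun t z => (abs_le.1 (hn t z)).1) t x
  have hexp := Real.add_one_le_exp (-φ t x)
  have hprod : Real.exp (-φ t x) * Real.exp (φ t x) = 1 := by
    rw [← Real.exp_add, neg_add_cancel, Real.exp_zero]
  rw [abs_le]
  refine ⟨?_, by linarith⟩
  by_contra! hlt
  nlinarith [Real.exp_pos (-φ t x)]

end IsBoundedMomentumFlow

end LowerBound

section EllipticEstimate

lemma abs_qfun_sub_self_le {x : ℝ} (hx : |x| ≤ 1) : |qfun x - x| ≤ x ^ 2 :=
  Real.abs_exp_sub_one_sub_id_le hx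

lemma sq_le_mul_qfun {x : ℝ} (hx : |x| ≤ 1 / 4) : 3 / 4 * x ^ 2 ≤ x * qfun x := by
  have h : |x * (qfun x - x)| ≤ 1 / 4 * x ^ 2 := by
    rw [abs_mul]
    exact mul_le_mul hx (abs_qfun_sub_self_le (by linarith)) (abs_nonneg _) (by norm_num)
  linarith [neg_le_of_abs_le h]

/-- A weight `ζ` with values in `[0, 1]` and derivative `ζ'`, varying slowly enough to be absorbed
in energy estimates for `-φ'' + q(φ) = n`. -/
structure IsSlowWeight (ζ ζ' : ℝ → ℝ) : Prop where
  hasDerivAt : ∀ x, HasDerivAt ζ (ζ' x) x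
  continuous_deriv : Continuous ζ'
  nonneg : ∀ x, 0 ≤ ζ x
  le_one : ∀ x, ζ x ≤ 1
  abs_deriv_le : ∀ x, |ζ' x| ≤ ζ x / 4

lemma IsSlowWeight.continuous {ζ ζ' : ℝ → ℝ} (hζ : IsSlowWeight ζ ζ') : Continuous ζ :=
  continuous_of_hasDerivAt hζ.hasDerivAt

/- Pointwise form of testing `-φ'' + q(φ) = n` with `ζ χ φ`: here `f = φ`, `g = φ'`, and the last
bracket is the derivative of `ζ χ φ φ'`. -/
lemma elliptic_pointwise {ζ ζ' χ χ' f g q n e : ℝ} (hζ0 : 0 ≤ ζ) (hζ1 : ζ ≤ 1)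
    (hζ' : |ζ'| ≤ ζ / 4) (hχ0 : 0 ≤ χ) (hχ1 : χ ≤ 1) (hχ' : χ' ^ 2 ≤ 16 * e ^ 2 * χ)
    (hq : 3 / 4 * f ^ 2 ≤ f * q) :
    ζ * χ * (f ^ 2 + g ^ 2) ≤ 8 / 3 * (ζ * n ^ 2) + 8 / 3 * (16 * e ^ 2 * f ^ 2
      + ((ζ' * χ + ζ * χ') * (f * g) + ζ * χ * (g * g + f * (q - n)))) := by
  have hweight : |ζ' * (f * g)| ≤ ζ / 4 * ((f ^ 2 + g ^ 2) / 2) := by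
    rw [abs_mul]
    refine mul_le_mul hζ' (abs_le.2 ⟨?_, ?_⟩) (abs_nonneg _) (by positivity)
    · linarith [sq_nonneg (f + g)]
    · linarith [sq_nonneg (f - g)]
  have hcut : |χ' * (f * g)| ≤ χ / 4 * g ^ 2 + 16 * e ^ 2 * f ^ 2 := by
    refine abs_le_of_sq_le_sq ?_ (by positivity)
    have := mul_le_mul_of_nonneg_right hχ' (show 0 ≤ (f * g) ^ 2 by positivity)
    linarith [sq_nonneg (χ / 4 * g ^ 2 - 16 * e ^ 2 * f ^ 2)]
  have hreact : 3 / 4 * f ^ 2 - (1 / 4 * f ^ 2 + n ^ 2) ≤ f * (q - n) := by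
    linarith [sq_nonneg (1 / 2 * f - n)]
  have hweightχ := mul_le_mul_of_nonneg_right (neg_le_of_abs_le hweight) hχ0
  have hcutζ := mul_le_mul_of_nonneg_right (neg_le_of_abs_le hcut) hζ0
  have hreactζ := mul_le_mul_of_nonneg_left hreact (mul_nonneg hζ0 hχ0)
  have hf := mul_le_mul_of_nonneg_right hζ1 (show 0 ≤ 16 * e ^ 2 * f ^ 2 by positivity)
  have hg : 0 ≤ ζ * χ * g ^ 2 := by positivity
  have hn := mul_le_mul_of_nonneg_right hχ1 (show 0 ≤ ζ * n ^ 2 by positivity)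
  linarith

variable {n φ ζ ζ' : ℝ → ℝ} {L : ℝ}

lemma IsSlowWeight.integral_cutoff_mul_le (hζ : IsSlowWeight ζ ζ') (hφ : SolvesPoisson n φ)
    (hn : Continuous n) (hsmall : ∀ x, |φ x| ≤ 1 / 4)
    (hi : Integrable fun x => ζ x * n x ^ 2) (hL : 0 < L) :
    ∫ x in (-L)..L, ζ x * cutoff L x * (φ x ^ 2 + deriv φ x ^ 2)
      ≤ 8 / 3 * ((∫ x, ζ x * n x ^ 2) + 2 / L) := by
  have hφc := hφ.continuous
  have hφ'c := hφ.continuous_deriv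
  have hζc := hζ.continuous
  have hζ'c := hζ.continuous_deriv
  have hq := continuous_qfun.comp hφc
  have hflux : Continuous fun x => (ζ' x * cutoff L x + ζ x * cutoffDeriv L x)
      * (φ x * deriv φ x) + ζ x * cutoff L x *
        (deriv φ x * deriv φ x + φ x * (qfun (φ x) - n x)) := by
    simp only [Function.comp_def] at hq
    fun_prop
  have hparts := integral_eq_sub_of_continuous_deriv (a := -L) (b := L) (fun x =>
    ((hζ.hasDerivAt x).fun_mul (hasDerivAt_cutoff L x)).fun_mul
      ((hφ.hasDerivAt x).fun_mul (hφ.hasDerivAt_deriv x))) hflux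
  rw [cutoff_self hL.ne', cutoff_neg_self hL.ne', mul_zero, mul_zero, zero_mul, zero_mul,
    sub_zero] at hparts
  have hle := integral_le_linear_comb (neg_le_self hL.le) (α := 8 / 3) (β := 8 / 3)
    (f := fun x => ζ x * n x ^ 2) (by fun_prop)
    (h := fun x => ζ x * cutoff L x * (φ x ^ 2 + deriv φ x ^ 2))
    ((continuous_const (y := L⁻¹ ^ 2)).fun_add hflux) (by fun_prop) fun x hx => by
      refine (elliptic_pointwise (hζ.nonneg x) (hζ.le_one x) (hζ.abs_deriv_le x)
        (cutoff_nonneg L x) (cutoff_le_one hL hx) (n := n x) (e := L⁻¹)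
        ((cutoffDeriv_sq_le hL hx).trans_eq (by rw [inv_pow]; rfl))
        (sq_le_mul_qfun (hsmall x))).trans ?_
      have : φ x ^ 2 ≤ 1 / 16 := by
        rw [← sq_abs]
        nlinarith [hsmall x, abs_nonneg (φ x)]
      linarith [mul_le_mul_of_nonneg_left this (show 0 ≤ L⁻¹ ^ 2 by positivity)]
  rw [intervalIntegral.integral_add intervalIntegrable_const (hflux.intervalIntegrable _ _),
    hparts, intervalIntegral.integral_const, smul_eq_mul,
    show (L - -L) * L⁻¹ ^ 2 + 0 = 2 / L by field_simp; ring] at hle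
  have hset : ∫ x in (-L)..L, ζ x * n x ^ 2 ≤ ∫ x, ζ x * n x ^ 2 := by
    rw [intervalIntegral.integral_of_le (neg_le_self hL.le)]
    exact setIntegral_le_integral hi (Eventually.of_forall fun x =>
      mul_nonneg (hζ.nonneg x) (sq_nonneg _))
  linarith

lemma IsSlowWeight.intervalIntegral_le (hζ : IsSlowWeight ζ ζ') (hφ : SolvesPoisson n φ)
    (hn : Continuous n) (hsmall : ∀ x, |φ x| ≤ 1 / 4)
    (hi : Integrable fun x => ζ x * n x ^ 2) (hL : 0 < L) :
    ∫ x in (-L)..L, ζ x * (φ x ^ 2 + deriv φ x ^ 2) ≤ 5 * (∫ x, ζ x * n x ^ 2) + 5 / L := by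
  have hφc := hφ.continuous
  have hφ'c := hφ.continuous_deriv
  have hζc := hζ.continuous
  have hnonneg : ∀ x, 0 ≤ ζ x * (φ x ^ 2 + deriv φ x ^ 2) := fun x =>
    mul_nonneg (hζ.nonneg x) (by positivity)
  have hcut : ∀ x ∈ Icc (-L) L, 9 / 16 ≤ cutoff (2 * L) x := fun x hx => by
    have hs := sq_div_le_one hL hx
    have hhalf : x / (2 * L) = x / L / 2 := by rw [mul_comm, div_mul_eq_div_div]
    rw [cutoff, hhalf]
    nlinarith
  have hinner : 9 / 16 * ∫ x in (-L)..L, ζ x * (φ x ^ 2 + deriv φ x ^ 2)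
      ≤ ∫ x in (-L)..L, ζ x * cutoff (2 * L) x * (φ x ^ 2 + deriv φ x ^ 2) := by
    rw [← intervalIntegral.integral_const_mul]
    refine intervalIntegral.integral_mono_on (neg_le_self hL.le)
      (Continuous.intervalIntegrable (by fun_prop) _ _)
      (Continuous.intervalIntegrable (by fun_prop) _ _) fun x hx => ?_
    linarith [mul_le_mul_of_nonneg_right (hcut x hx) (hnonneg x)]
  have houter : ∫ x in (-L)..L, ζ x * cutoff (2 * L) x * (φ x ^ 2 + deriv φ x ^ 2)
      ≤ ∫ x in (-(2 * L))..(2 * L), ζ x * cutoff (2 * L) x * (φ x ^ 2 + deriv φ x ^ 2) :=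
    intervalIntegral.integral_mono_interval (by linarith) (by linarith) (by linarith)
      (Eventually.of_forall fun x => mul_nonneg
        (mul_nonneg (hζ.nonneg x) (cutoff_nonneg _ x)) (by positivity))
      (Continuous.intervalIntegrable (by fun_prop) _ _)
  have hdouble := hζ.integral_cutoff_mul_le hφ hn hsmall hi (show 0 < 2 * L by linarith)
  have hI : 0 ≤ ∫ x, ζ x * n x ^ 2 :=
    integral_nonneg fun x => mul_nonneg (hζ.nonneg x) (sq_nonneg _)
  have hinv : 0 ≤ 1 / L := by positivity
  rw [show 2 / (2 * L) = 1 / L by field_simp] at hdouble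
  rw [show 5 / L = 5 * (1 / L) by ring]
  linarith

theorem IsSlowWeight.integrable_poisson (hζ : IsSlowWeight ζ ζ') (hφ : SolvesPoisson n φ)
    (hn : Continuous n) (hsmall : ∀ x, |φ x| ≤ 1 / 4)
    (hi : Integrable fun x => ζ x * n x ^ 2) :
    Integrable fun x => ζ x * (φ x ^ 2 + deriv φ x ^ 2) := by
  have hφc := hφ.continuous
  have hφ'c := hφ.continuous_deriv
  have hζc := hζ.continuous
  refine integrable_of_intervalIntegral_norm_bounded (5 * (∫ x, ζ x * n x ^ 2) + 5)
    (fun L => (Continuous.integrableOn_Icc (by fun_prop)).mono_set Ioc_subset_Icc_self)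
    tendsto_neg_atTop_atBot tendsto_id ?_
  filter_upwards [eventually_ge_atTop 1] with L hL
  have hnorm : ∀ x, ‖ζ x * (φ x ^ 2 + deriv φ x ^ 2)‖ = ζ x * (φ x ^ 2 + deriv φ x ^ 2) :=
    fun x => Real.norm_of_nonneg (mul_nonneg (hζ.nonneg x) (by positivity))
  simp_rw [hnorm]
  have := hζ.intervalIntegral_le hφ hn hsmall hi (one_pos.trans_le hL)
  exact this.trans (add_le_add_right (div_le_self (by norm_num) hL) _)

theorem IsSlowWeight.integral_poisson_le (hζ : IsSlowWeight ζ ζ') (hφ : SolvesPoisson n φ)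
    (hn : Continuous n) (hsmall : ∀ x, |φ x| ≤ 1 / 4)
    (hi : Integrable fun x => ζ x * n x ^ 2) :
    ∫ x, ζ x * (φ x ^ 2 + deriv φ x ^ 2) ≤ 5 * ∫ x, ζ x * n x ^ 2 := by
  have hleft := intervalIntegral_tendsto_integral (hζ.integrable_poisson hφ hn hsmall hi)
    (l := atTop) tendsto_neg_atTop_atBot tendsto_id
  have hright : Tendsto (fun L : ℝ => 5 * (∫ x, ζ x * n x ^ 2) + 5 / L) atTop
      (𝓝 (5 * (∫ x, ζ x * n x ^ 2) + 0)) :=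
    tendsto_const_nhds.add (tendsto_const_nhds.div_atTop tendsto_id)
  rw [add_zero] at hright
  refine le_of_tendsto_of_tendsto hleft hright ?_
  filter_upwards [eventually_gt_atTop 0] with L hL
  exact hζ.intervalIntegral_le hφ hn hsmall hi hL

end EllipticEstimate

section Resolvent

/-- The solution operator `f ↦ (1 + ∂ₓ)⁻¹ f` with zero data at `a`. -/
def causalResolvent (a : ℝ) (f : ℝ → ℝ) (x : ℝ) : ℝ :=
  Real.exp (-x) * ∫ z in a..x, Real.exp z * f z

variable {a b : ℝ} {f g : ℝ → ℝ}

lemma causalResolvent_self (a : ℝ) (f : ℝ → ℝ) : causalResolvent a f a = 0 := by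
  simp [causalResolvent]

lemma hasDerivAt_causalResolvent (a : ℝ) (hf : Continuous f) (x : ℝ) :
    HasDerivAt (causalResolvent a f) (f x - causalResolvent a f x) x := by
  have hprim := (Real.continuous_exp.mul hf).integral_hasStrictDerivAt a x |>.hasDerivAt
  have hexp : Real.exp (-x) * Real.exp x = 1 := by simp [← Real.exp_add]
  refine ((hasDerivAt_id' x).fun_neg.exp.fun_mul hprim).congr_deriv ?_
  simp only [causalResolvent, Pi.mul_apply]
  linear_combination f x * hexp

@[fun_prop]
lemma continuous_causalResolvent (a : ℝ) (hf : Continuous f) : Continuous (causalResolvent a f) :=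
  continuous_of_hasDerivAt (hasDerivAt_causalResolvent a hf)

lemma eq_causalResolvent (hf : Continuous f) (hg : ∀ x, HasDerivAt g (f x - g x) x) (ha : g a = 0)
    (x : ℝ) : g x = causalResolvent a f x := by
  have hexp : Real.exp (-x) * Real.exp x = 1 := by simp [← Real.exp_add]
  have h := integral_eq_sub_of_continuous_deriv (a := a) (b := x)
    (fun z => ((Real.hasDerivAt_exp z).fun_mul (hg z)).congr_deriv
      (show _ = Real.exp z * f z by ring)) (by fun_prop)
  rw [causalResolvent, h, ha]
  linear_combination (-g x) * hexp

lemma causalResolvent_add (a : ℝ) (hf : Continuous f) (hg : Continuous g) (x : ℝ) :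
    causalResolvent a (fun z => f z + g z) x = causalResolvent a f x + causalResolvent a g x :=
  (eq_causalResolvent (hf.fun_add hg) (fun z => ((hasDerivAt_causalResolvent a hf z).fun_add
    (hasDerivAt_causalResolvent a hg z)).congr_deriv (by ring))
    (by rw [causalResolvent_self, causalResolvent_self, add_zero]) x).symm

lemma abs_causalResolvent_le {C x : ℝ} (hC : 0 ≤ C) (hx : x ∈ Icc a b)
    (hf : ∀ z ∈ Icc a b, |f z| ≤ C) : |causalResolvent a f x| ≤ C := by
  have hmono : |∫ z in a..x, Real.exp z * f z| ≤ ∫ z in a..x, Real.exp z * C := by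
    rw [← Real.norm_eq_abs]
    refine intervalIntegral.norm_integral_le_of_norm_le hx.1 (Eventually.of_forall fun z hz => ?_)
      (Continuous.intervalIntegrable (by fun_prop) _ _)
    rw [Real.norm_eq_abs, abs_mul, abs_of_pos (Real.exp_pos z)]
    exact mul_le_mul_of_nonneg_left (hf z ⟨hz.1.le, hz.2.trans hx.2⟩) (Real.exp_pos z).le
  rw [intervalIntegral.integral_mul_const, integral_exp] at hmono
  rw [causalResolvent, abs_mul, abs_of_pos (Real.exp_pos _)]
  calc Real.exp (-x) * |∫ z in a..x, Real.exp z * f z|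
      ≤ Real.exp (-x) * (Real.exp x * C) := by
        gcongr
        exact hmono.trans (by gcongr; linarith [Real.exp_pos a])
    _ = C := by rw [← mul_assoc, ← Real.exp_add, neg_add_cancel, Real.exp_zero, one_mul]

lemma integral_causalResolvent_mul_deriv_nonneg (a b : ℝ) (hf : Continuous f) :
    0 ≤ ∫ x in a..b, causalResolvent a f x * (f x - causalResolvent a f x) := by
  have h := integral_eq_sub_of_continuous_deriv (a := a) (b := b)
    (fun x => (((hasDerivAt_causalResolvent a hf x).fun_pow 2).div_const 2).congr_deriv
      (show _ = causalResolvent a f x * (f x - causalResolvent a f x) by norm_num; ring))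
    (by fun_prop)
  rw [h, causalResolvent_self]
  linarith [sq_nonneg (causalResolvent a f b)]

lemma integral_mul_causalResolvent_nonneg (hab : a ≤ b) (hf : Continuous f) :
    0 ≤ ∫ x in a..b, f x * causalResolvent a f x := by
  have h := linear_comb_le_integral hab (α := 1) (β := 1)
    (f := fun x => causalResolvent a f x * (f x - causalResolvent a f x))
    (g := fun x => causalResolvent a f x ^ 2)
    (h := fun x => f x * causalResolvent a f x) (by fun_prop) (by fun_prop) (by fun_prop)
    fun x _ => by linarith
  have hsq : 0 ≤ ∫ x in a..b, causalResolvent a f x ^ 2 :=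
    intervalIntegral.integral_nonneg hab fun x _ => sq_nonneg _
  linarith [integral_causalResolvent_mul_deriv_nonneg a b hf]

lemma integral_sub_causalResolvent_sq_le_integral_mul (hab : a ≤ b) (hf : Continuous f) :
    ∫ x in a..b, (f x - causalResolvent a f x) ^ 2
      ≤ ∫ x in a..b, f x * (f x - causalResolvent a f x) := by
  have h := integral_le_linear_comb hab (α := 1) (β := -1)
    (f := fun x => f x * (f x - causalResolvent a f x))
    (g := fun x => causalResolvent a f x * (f x - causalResolvent a f x))
    (h := fun x => (f x - causalResolvent a f x) ^ 2) (by fun_prop) (by fun_prop) (by fun_prop)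
    fun x _ => by linarith
  linarith [integral_causalResolvent_mul_deriv_nonneg a b hf]

lemma integral_mul_sub_causalResolvent_le (hab : a ≤ b) (hf : Continuous f) :
    ∫ x in a..b, f x * (f x - causalResolvent a f x) ≤ ∫ x in a..b, f x ^ 2 := by
  have h := integral_le_linear_comb hab (α := 1) (β := -1) (f := fun x => f x ^ 2)
    (g := fun x => f x * causalResolvent a f x)
    (h := fun x => f x * (f x - causalResolvent a f x)) (by fun_prop) (by fun_prop) (by fun_prop)
    fun x _ => by linarith
  linarith [integral_mul_causalResolvent_nonneg hab hf]

lemma integral_causalResolvent_sq_le (hab : a ≤ b) (hf : Continuous f) :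
    ∫ x in a..b, causalResolvent a f x ^ 2 ≤ ∫ x in a..b, f x ^ 2 := by
  have h := integral_le_linear_comb hab (α := 1) (β := -2)
    (f := fun x => f x ^ 2)
    (g := fun x => causalResolvent a f x * (f x - causalResolvent a f x))
    (h := fun x => causalResolvent a f x ^ 2) (by fun_prop) (by fun_prop) (by fun_prop)
    fun x _ => by linarith [sq_nonneg (f x - causalResolvent a f x)]
  linarith [integral_causalResolvent_mul_deriv_nonneg a b hf]

lemma integral_sub_causalResolvent_sq_le (hab : a ≤ b) (hf : Continuous f) :
    ∫ x in a..b, (f x - causalResolvent a f x) ^ 2 ≤ ∫ x in a..b, f x ^ 2 := by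
  have h := integral_le_linear_comb hab (α := 1) (β := -2)
    (f := fun x => f x ^ 2)
    (g := fun x => causalResolvent a f x * (f x - causalResolvent a f x))
    (h := fun x => (f x - causalResolvent a f x) ^ 2) (by fun_prop) (by fun_prop) (by fun_prop)
    fun x _ => by linarith [sq_nonneg (causalResolvent a f x)]
  linarith [integral_causalResolvent_mul_deriv_nonneg a b hf]

end Resolvent

section TruncatedPoisson

/-- `f = ψ - ψ'' + m` on `[a, b]`, where `ψ` and `ψ'` vanish at both endpoints. -/
structure IsTruncatedPoisson (a b : ℝ) (f m ψ ψ' ψ'' : ℝ → ℝ) : Prop where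
  hasDerivAt : ∀ x, HasDerivAt ψ (ψ' x) x
  hasDerivAt_deriv : ∀ x, HasDerivAt ψ' (ψ'' x) x
  continuous_second_deriv : Continuous ψ''
  continuous_error : Continuous m
  eq_sub_add : ∀ x, f x = ψ x - ψ'' x + m x
  left : ψ a = 0
  right : ψ b = 0
  deriv_left : ψ' a = 0
  deriv_right : ψ' b = 0

namespace IsTruncatedPoisson

variable {a b θ : ℝ} {f m ψ ψ' ψ'' : ℝ → ℝ}

lemma continuous (h : IsTruncatedPoisson a b f m ψ ψ' ψ'') : Continuous ψ :=
  continuous_of_hasDerivAt h.hasDerivAt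

lemma continuous_deriv (h : IsTruncatedPoisson a b f m ψ ψ' ψ'') : Continuous ψ' :=
  continuous_of_hasDerivAt h.hasDerivAt_deriv

lemma continuous_source (h : IsTruncatedPoisson a b f m ψ ψ' ψ'') : Continuous f := by
  rw [funext h.eq_sub_add]
  exact (h.continuous.sub h.continuous_second_deriv).add h.continuous_error

lemma sub_causalResolvent_eq (h : IsTruncatedPoisson a b f m ψ ψ' ψ'') (x : ℝ) :
    f x - causalResolvent a f x = (ψ' x - ψ'' x) + (m x - causalResolvent a m x) := by
  have hsolves := eq_causalResolvent (a := a) (g := fun z => ψ z - ψ' z + causalResolvent a m z)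
    h.continuous_source (fun z => (((h.hasDerivAt z).fun_sub (h.hasDerivAt_deriv z)).fun_add
      (hasDerivAt_causalResolvent a h.continuous_error z)).congr_deriv (by
        rw [h.eq_sub_add z]
        ring)) (by simp [h.left, h.deriv_left, causalResolvent_self]) x
  rw [← hsolves, h.eq_sub_add x]
  ring

lemma integral_deriv_sq_le (h : IsTruncatedPoisson a b f m ψ ψ' ψ'') (hab : a ≤ b) :
    ∫ x in a..b, ψ' x ^ 2 ≤ ∫ x in a..b, (ψ' x - ψ'' x) ^ 2 := by
  have hψ' := h.continuous_deriv
  have hψ'' := h.continuous_second_deriv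
  have hbdry := integral_eq_sub_of_continuous_deriv (a := a) (b := b)
    (fun x => ((h.hasDerivAt_deriv x).fun_pow 2).congr_deriv
      (show _ = 2 * ψ' x * ψ'' x by norm_num)) (by fun_prop)
  have hle := linear_comb_le_integral hab (α := 1) (β := -1) (f := fun x => ψ' x ^ 2)
    (g := fun x => 2 * ψ' x * ψ'' x) (h := fun x => (ψ' x - ψ'' x) ^ 2)
    (by fun_prop) (by fun_prop) (by fun_prop) fun x _ => by linarith [sq_nonneg (ψ'' x)]
  rw [hbdry, h.deriv_left, h.deriv_right] at hle
  linarith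

lemma integral_mul_sub_eq (h : IsTruncatedPoisson a b f m ψ ψ' ψ'') :
    ∫ x in a..b, ψ x * (ψ' x - ψ'' x) = ∫ x in a..b, ψ' x ^ 2 := by
  have hψ := h.continuous
  have hψ' := h.continuous_deriv
  have hψ'' := h.continuous_second_deriv
  have hbdry := integral_eq_sub_of_continuous_deriv (a := a) (b := b)
    (fun x => ((((h.hasDerivAt x).fun_pow 2).div_const 2).fun_sub
      ((h.hasDerivAt x).fun_mul (h.hasDerivAt_deriv x))).congr_deriv
        (show _ = ψ x * (ψ' x - ψ'' x) - ψ' x ^ 2 by norm_num; ring)) (by fun_prop)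
  rw [intervalIntegral.integral_sub (Continuous.intervalIntegrable (by fun_prop) _ _)
    (Continuous.intervalIntegrable (by fun_prop) _ _), h.left, h.right, h.deriv_left,
    h.deriv_right] at hbdry
  linarith

lemma integral_sub_causalResolvent_sq_ge (h : IsTruncatedPoisson a b f m ψ ψ' ψ'') (hab : a ≤ b)
    (hθ0 : 0 < θ) (hθ1 : θ ≤ 1) :
    (1 - θ) * (∫ x in a..b, ψ' x ^ 2) - θ⁻¹ * (∫ x in a..b, m x ^ 2)
      ≤ ∫ x in a..b, (f x - causalResolvent a f x) ^ 2 := by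
  have hψ' := h.continuous_deriv
  have hψ'' := h.continuous_second_deriv
  have hm := h.continuous_error
  have hf := h.continuous_source
  have hle := linear_comb_le_integral hab (α := 1 - θ) (β := -θ⁻¹)
    (f := fun x => (ψ' x - ψ'' x) ^ 2) (g := fun x => (m x - causalResolvent a m x) ^ 2)
    (h := fun x => (f x - causalResolvent a f x) ^ 2) (by fun_prop) (by fun_prop) (by fun_prop)
    fun x _ => by
      rw [h.sub_causalResolvent_eq]
      set p := ψ' x - ψ'' x
      set r := m x - causalResolvent a m x
      have : 0 ≤ θ⁻¹ * (θ * p + r) ^ 2 := by positivity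
      have hexpand : θ⁻¹ * (θ * p + r) ^ 2 = θ * p ^ 2 + 2 * p * r + θ⁻¹ * r ^ 2 := by
        field_simp
        ring
      linarith [sq_nonneg r]
  have hderiv := mul_le_mul_of_nonneg_left (h.integral_deriv_sq_le hab) (sub_nonneg.2 hθ1)
  have herror := mul_le_mul_of_nonneg_left (integral_sub_causalResolvent_sq_le hab hm)
    (inv_nonneg.2 hθ0.le)
  linarith

lemma integral_mul_sub_causalResolvent_ge (h : IsTruncatedPoisson a b f m ψ ψ' ψ'') (hab : a ≤ b)
    (hθ : 0 < θ) :
    (∫ x in a..b, ψ' x ^ 2) - θ * (∫ x in a..b, ψ x ^ 2) - θ⁻¹ / 4 * (∫ x in a..b, m x ^ 2)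
      ≤ ∫ x in a..b, ψ x * (f x - causalResolvent a f x) := by
  have hψ := h.continuous
  have hψ' := h.continuous_deriv
  have hψ'' := h.continuous_second_deriv
  have hm := h.continuous_error
  have hf := h.continuous_source
  have hle := linear_comb_le_integral hab (α := 1) (β := -(θ⁻¹ / 4))
    (f := fun x => ψ x * (ψ' x - ψ'' x) - θ * ψ x ^ 2)
    (g := fun x => (m x - causalResolvent a m x) ^ 2)
    (h := fun x => ψ x * (f x - causalResolvent a f x)) (by fun_prop) (by fun_prop) (by fun_prop)
    fun x _ => by
      rw [h.sub_causalResolvent_eq]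
      set r := m x - causalResolvent a m x
      have : 0 ≤ θ⁻¹ / 4 * (2 * θ * ψ x + r) ^ 2 := by positivity
      have hexpand : θ⁻¹ / 4 * (2 * θ * ψ x + r) ^ 2
          = θ * ψ x ^ 2 + ψ x * r + θ⁻¹ / 4 * r ^ 2 := by
        field_simp
        ring
      linarith
  rw [intervalIntegral.integral_sub (Continuous.intervalIntegrable (by fun_prop) _ _)
    (Continuous.intervalIntegrable (by fun_prop) _ _), h.integral_mul_sub_eq,
    intervalIntegral.integral_const_mul] at hle
  have herror := mul_le_mul_of_nonneg_left (integral_sub_causalResolvent_sq_le hab hm)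
    (show 0 ≤ θ⁻¹ / 4 by positivity)
  linarith

end IsTruncatedPoisson

/-- The localization `χ_R f` of a function on `[-R, R]`. -/
def truncate (R : ℝ) (f : ℝ → ℝ) (x : ℝ) : ℝ := cutoff R x * f x

/-- The derivative `(χ_R φ)'`. -/
def truncateDeriv (R : ℝ) (φ : ℝ → ℝ) (x : ℝ) : ℝ := cutoffDeriv R x * φ x + cutoff R x * deriv φ x

/-- The defect `χ_R (q(φ) - φ) + 2 χ_R' φ' + χ_R'' φ` with which `χ_R φ` solves the linear equation
`-ψ'' + ψ = χ_R n`. -/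
def truncationError (R : ℝ) (φ : ℝ → ℝ) (x : ℝ) : ℝ :=
  cutoff R x * (qfun (φ x) - φ x) + 2 * cutoffDeriv R x * deriv φ x + cutoffDeriv₂ R x * φ x

@[fun_prop]
lemma continuous_truncate (R : ℝ) {f : ℝ → ℝ} (hf : Continuous f) : Continuous (truncate R f) :=
  (continuous_cutoff R).mul hf

lemma SolvesPoisson.isTruncatedPoisson {n φ : ℝ → ℝ} (hφ : SolvesPoisson n φ) (hn : Continuous n)
    {R : ℝ} (hR : R ≠ 0) :
    IsTruncatedPoisson (-R) R (truncate R n) (truncationError R φ) (truncate R φ)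
      (truncateDeriv R φ) fun x => cutoffDeriv₂ R x * φ x + 2 * cutoffDeriv R x * deriv φ x
        + cutoff R x * (qfun (φ x) - n x) where
  hasDerivAt x := (hasDerivAt_cutoff R x).fun_mul (hφ.hasDerivAt x)
  hasDerivAt_deriv x := (((hasDerivAt_cutoffDeriv R x).fun_mul (hφ.hasDerivAt x)).fun_add
    ((hasDerivAt_cutoff R x).fun_mul (hφ.hasDerivAt_deriv x))).congr_deriv (by ring)
  continuous_second_deriv := by
    have hφc := hφ.continuous
    have hφ'c := hφ.continuous_deriv
    have hq := continuous_qfun.comp' hφc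
    fun_prop
  continuous_error := by
    have hφc := hφ.continuous
    have hφ'c := hφ.continuous_deriv
    have hq := continuous_qfun.comp' hφc
    unfold truncationError
    fun_prop
  eq_sub_add x := by
    rw [truncate, truncate, truncationError]
    ring
  left := by rw [truncate, cutoff_neg_self hR, zero_mul]
  right := by rw [truncate, cutoff_self hR, zero_mul]
  deriv_left := by simp [truncateDeriv, cutoff_neg_self hR, cutoffDeriv_neg_self hR]
  deriv_right := by simp [truncateDeriv, cutoff_self hR, cutoffDeriv_self hR]

end TruncatedPoisson

section StaticEstimate

/-- A small state `(n, u, φ)` seen through the window `[-R, R]`: `g = w(n)` is the enthalpy, `W` the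
internal energy, `k` the squared sound speed of the background, `θ` the smallness parameter and `S`
a bound for the mass `∫ (n² + u²)`, at most a fraction `O(θ)` of which is near `|x| = R`. -/
structure IsLocalizedState (k θ R S : ℝ) (n u φ g W : ℝ → ℝ) : Prop where
  k_pos : 0 < k
  θ_pos : 0 < θ
  θ_le : θ ≤ 1 / 4
  R_pos : 0 < R
  inv_R_le : 1 / R ≤ θ
  continuous_n : Continuous n
  continuous_u : Continuous u
  continuous_enthalpy : Continuous g
  continuous_internal : Continuous W
  solvesPoisson : SolvesPoisson n φ
  abs_n_le : ∀ x, |n x| ≤ θ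
  abs_φ_le : ∀ x, |φ x| ≤ θ
  abs_enthalpy_sub_le : ∀ x, |g x - k * n x| ≤ θ * |n x|
  abs_internal_sub_le : ∀ x, |W x - k / 2 * n x ^ 2| ≤ θ * n x ^ 2
  integral_sq_le : ∫ x in (-R)..R, (n x ^ 2 + u x ^ 2) ≤ S
  integral_poisson_le : ∫ x in (-R)..R, (φ x ^ 2 + deriv φ x ^ 2) ≤ 5 * S
  integral_tail_le : ∫ x in (-R)..R,
    (x / R) ^ 2 * (n x ^ 2 + u x ^ 2 + (φ x ^ 2 + deriv φ x ^ 2)) ≤ 12 * θ * S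

/-- The contribution `∫ χ_R' A (G - c u)` to the derivative of `∫ χ_R u A`, in which the momentum
flux meets the derivative of the cutoff; here `A = (1 + ∂ₓ)⁻¹ (χ_R n)` and `G = u²/2 + g + φ`. -/
def cutoffFluxRate (c R : ℝ) (n u φ g : ℝ → ℝ) : ℝ :=
  ∫ x in (-R)..R, cutoffDeriv R x * causalResolvent (-R) (truncate R n) x
    * (u x ^ 2 / 2 + g x + φ x - c * u x)

/-- The contribution `∫ χ_R A' G` to the derivative of `∫ χ_R u A`, in the notation of
`cutoffFluxRate`. -/
def pressureRate (R : ℝ) (n u φ g : ℝ → ℝ) : ℝ :=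
  ∫ x in (-R)..R, cutoff R x * (truncate R n x - causalResolvent (-R) (truncate R n) x)
    * (u x ^ 2 / 2 + g x + φ x)

/-- The contribution of `∂ₜn = -∂ₓ((1 + n) u)`, up to cutoff errors, to minus the derivative of
`∫ χ_R u A`. -/
def transportRate (R : ℝ) (n u : ℝ → ℝ) : ℝ :=
  ∫ x in (-R)..R, truncate R u x * (truncate R (fun z => (1 + n z) * u z) x
    - causalResolvent (-R) (truncate R fun z => (1 + n z) * u z) x)

/-- The contribution to the derivative of `∫ χ_R u A` in which the mass flux meets the derivative
of the cutoff. -/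
def cutoffMassRate (c R : ℝ) (n u : ℝ → ℝ) : ℝ :=
  ∫ x in (-R)..R, truncate R u x
    * causalResolvent (-R) (fun z => cutoffDeriv R z * ((1 + n z) * u z - c * n z)) x

/-- The derivative of `∫ x χ_R n u`, namely `∫ (x χ_R)' Π` with the flux `Π` of the momentum density
`n u`. -/
def momentumRate (c R : ℝ) (n u φ g W : ℝ → ℝ) : ℝ :=
  ∫ x in (-R)..R, virialWeight R x * ((1 / 2 + n x) * u x ^ 2 + (n x * g x - W x)
    + (Real.exp (φ x) - 1 - φ x) - deriv φ x ^ 2 / 2 - c * n x * u x)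

/-- The quadratic part `u²/2 + k n²/2 - φ'²/2 - c n u` of the momentum flux. -/
def quadraticFlux (k c : ℝ) (n u φ : ℝ → ℝ) (x : ℝ) : ℝ :=
  u x ^ 2 / 2 + k / 2 * n x ^ 2 - c * (n x * u x) - deriv φ x ^ 2 / 2

lemma abs_quadraticFlux_add_le {k c : ℝ} {n u φ : ℝ → ℝ} (hc : |c| ≤ k) (x : ℝ) :
    |quadraticFlux k c n u φ x + deriv φ x ^ 2 / 2| ≤ (1 + k) * (n x ^ 2 + u x ^ 2) := by
  have hcross : |c * (n x * u x)| ≤ k * ((n x ^ 2 + u x ^ 2) / 2) := by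
    rw [abs_mul]
    gcongr
    · exact (abs_nonneg c).trans hc
    · exact abs_le.2 ⟨by linarith [sq_nonneg (n x + u x)], by linarith [sq_nonneg (n x - u x)]⟩
  have hk : 0 ≤ k * u x ^ 2 := mul_nonneg ((abs_nonneg c).trans hc) (sq_nonneg _)
  have hk' : 0 ≤ k * n x ^ 2 := mul_nonneg ((abs_nonneg c).trans hc) (sq_nonneg _)
  rw [quadraticFlux, abs_le]
  constructor <;> linarith [abs_le.1 hcross, sq_nonneg (n x), sq_nonneg (u x)]

namespace IsLocalizedState

variable {k θ R S c : ℝ} {n u φ g W : ℝ → ℝ}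

lemma neg_le_self (h : IsLocalizedState k θ R S n u φ g W) : -R ≤ R := by linarith [h.R_pos]

lemma nonneg_S (h : IsLocalizedState k θ R S n u φ g W) : 0 ≤ S :=
  (intervalIntegral.integral_nonneg h.neg_le_self fun x _ => by positivity).trans h.integral_sq_le

lemma integral_field_le (h : IsLocalizedState k θ R S n u φ g W) :
    ∫ x in (-R)..R, (n x ^ 2 + u x ^ 2 + (φ x ^ 2 + deriv φ x ^ 2)) ≤ 6 * S := by
  have hn := h.continuous_n
  have hu := h.continuous_u
  have hφ := h.solvesPoisson.continuous
  have hφ' := h.solvesPoisson.continuous_deriv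
  rw [intervalIntegral.integral_add (Continuous.intervalIntegrable (by fun_prop) _ _)
    (Continuous.intervalIntegrable (by fun_prop) _ _)]
  linarith [h.integral_sq_le, h.integral_poisson_le]

lemma abs_cutoffDeriv_le (h : IsLocalizedState k θ R S n u φ g W) {x : ℝ}
    (hx : x ∈ Icc (-R) R) : |cutoffDeriv R x| ≤ 4 * θ :=
  (_root_.abs_cutoffDeriv_le h.R_pos hx).trans (by linarith [h.inv_R_le, mul_one_div 4 R])

lemma abs_truncate_n_le (h : IsLocalizedState k θ R S n u φ g W) {x : ℝ}
    (hx : x ∈ Icc (-R) R) : |truncate R n x| ≤ θ := by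
  rw [truncate, abs_mul, abs_of_nonneg (cutoff_nonneg R x)]
  exact (mul_le_of_le_one_left (abs_nonneg _) (cutoff_le_one h.R_pos hx)).trans (h.abs_n_le x)

lemma truncate_sq_le (h : IsLocalizedState k θ R S n u φ g W) (f : ℝ → ℝ) {x : ℝ}
    (hx : x ∈ Icc (-R) R) : truncate R f x ^ 2 ≤ f x ^ 2 := by
  rw [truncate, mul_pow]
  exact mul_le_of_le_one_left (sq_nonneg _)
    (pow_le_one₀ (cutoff_nonneg R x) (cutoff_le_one h.R_pos hx))

lemma abs_causalResolvent_truncate_le (h : IsLocalizedState k θ R S n u φ g W) {x : ℝ}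
    (hx : x ∈ Icc (-R) R) : |causalResolvent (-R) (truncate R n) x| ≤ θ :=
  abs_causalResolvent_le h.θ_pos.le hx fun _ => h.abs_truncate_n_le

lemma integral_truncate_sq_le (h : IsLocalizedState k θ R S n u φ g W) {f : ℝ → ℝ}
    (hf : Continuous f) : ∫ x in (-R)..R, truncate R f x ^ 2 ≤ ∫ x in (-R)..R, f x ^ 2 :=
  intervalIntegral.integral_mono_on h.neg_le_self
    (Continuous.intervalIntegrable (by fun_prop) _ _)
    (Continuous.intervalIntegrable (by fun_prop) _ _) fun _ => h.truncate_sq_le f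

lemma integral_n_sq_le (h : IsLocalizedState k θ R S n u φ g W) :
    ∫ x in (-R)..R, n x ^ 2 ≤ S := by
  have hn := h.continuous_n
  have hu := h.continuous_u
  exact (intervalIntegral.integral_mono_on h.neg_le_self
    (Continuous.intervalIntegrable (by fun_prop) _ _)
    (Continuous.intervalIntegrable (by fun_prop) _ _) fun x _ =>
      le_add_of_nonneg_right (sq_nonneg (u x))).trans h.integral_sq_le

lemma integral_u_sq_le (h : IsLocalizedState k θ R S n u φ g W) :
    ∫ x in (-R)..R, u x ^ 2 ≤ S := by
  have hn := h.continuous_n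
  have hu := h.continuous_u
  exact (intervalIntegral.integral_mono_on h.neg_le_self
    (Continuous.intervalIntegrable (by fun_prop) _ _)
    (Continuous.intervalIntegrable (by fun_prop) _ _) fun x _ =>
      le_add_of_nonneg_left (sq_nonneg (n x))).trans h.integral_sq_le

lemma integral_resolvent_sq_le (h : IsLocalizedState k θ R S n u φ g W) :
    ∫ x in (-R)..R, causalResolvent (-R) (truncate R n) x ^ 2 ≤ S :=
  ((integral_causalResolvent_sq_le h.neg_le_self (continuous_truncate R h.continuous_n)).trans
    (h.integral_truncate_sq_le h.continuous_n)).trans h.integral_n_sq_le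

lemma integral_deriv_resolvent_sq_le (h : IsLocalizedState k θ R S n u φ g W) :
    ∫ x in (-R)..R, (truncate R n x - causalResolvent (-R) (truncate R n) x) ^ 2 ≤ S :=
  ((integral_sub_causalResolvent_sq_le h.neg_le_self (continuous_truncate R h.continuous_n)).trans
    (h.integral_truncate_sq_le h.continuous_n)).trans h.integral_n_sq_le

/- The cutoff costs `|χ_R'| ≤ 4 / R ≤ 4 θ`, and `|A| ≤ θ` pays for the quadratic term `u²`. -/
lemma abs_cutoffFlux_le (h : IsLocalizedState k θ R S n u φ g W) (hc : |c| ≤ k) {x : ℝ}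
    (hx : x ∈ Icc (-R) R) :
    |cutoffDeriv R x * causalResolvent (-R) (truncate R n) x
        * (u x ^ 2 / 2 + g x + φ x - c * u x)|
      ≤ 4 * θ * (1 + k) * (n x ^ 2 + u x ^ 2 + (φ x ^ 2 + deriv φ x ^ 2))
        + 4 * θ * (1 + k) * causalResolvent (-R) (truncate R n) x ^ 2 := by
  have hk := h.k_pos
  have hθ := h.θ_pos
  have hA := h.abs_causalResolvent_truncate_le hx
  set A := causalResolvent (-R) (truncate R n) x
  have hg : |g x| ≤ (1 + k) * |n x| := by
    have htri := abs_add_le (g x - k * n x) (k * n x)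
    rw [sub_add_cancel, abs_mul, abs_of_pos hk] at htri
    nlinarith [h.abs_enthalpy_sub_le x, h.θ_le, abs_nonneg (n x)]
  have hcu : |c * u x| ≤ (1 + k) * |u x| := by
    rw [abs_mul]
    nlinarith [abs_nonneg (u x)]
  have hflux : |u x ^ 2 / 2 + g x + φ x - c * u x|
      ≤ u x ^ 2 / 2 + (1 + k) * (|n x| + |u x| + |φ x|) := by
    have hφ : |φ x| ≤ (1 + k) * |φ x| := le_mul_of_one_le_left (abs_nonneg _) (by linarith)
    have hu := abs_of_nonneg (show 0 ≤ u x ^ 2 / 2 by positivity)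
    linarith [abs_sub (u x ^ 2 / 2 + g x + φ x) (c * u x), abs_add_le (u x ^ 2 / 2 + g x) (φ x),
      abs_add_le (u x ^ 2 / 2) (g x)]
  have hamgm : |A| * (u x ^ 2 / 2 + (1 + k) * (|n x| + |u x| + |φ x|))
      ≤ (1 + k) * (n x ^ 2 + u x ^ 2 + (φ x ^ 2 + deriv φ x ^ 2) + A ^ 2) := by
    have hu : |A| * (u x ^ 2 / 2) ≤ (1 + k) * (u x ^ 2 / 4) := by
      nlinarith [h.θ_le, sq_nonneg (u x)]
    have hlin : |A| * (|n x| + |u x| + |φ x|) ≤ A ^ 2 + 3 / 4 * (n x ^ 2 + u x ^ 2 + φ x ^ 2) := by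
      rw [← sq_abs A, ← sq_abs (n x), ← sq_abs (u x), ← sq_abs (φ x)]
      nlinarith [sq_nonneg (2 * |A| - 3 * |n x|), sq_nonneg (2 * |A| - 3 * |u x|),
        sq_nonneg (2 * |A| - 3 * |φ x|)]
    have hrest : 0 ≤ (1 + k) * (n x ^ 2 + φ x ^ 2 + 4 * deriv φ x ^ 2) := by positivity
    linarith [mul_le_mul_of_nonneg_left hlin (show 0 ≤ 1 + k by linarith)]
  rw [abs_mul, abs_mul]
  calc |cutoffDeriv R x| * |A| * |u x ^ 2 / 2 + g x + φ x - c * u x|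
      ≤ 4 * θ * |A| * (u x ^ 2 / 2 + (1 + k) * (|n x| + |u x| + |φ x|)) := by
        gcongr
        exact h.abs_cutoffDeriv_le hx
    _ = 4 * θ * (|A| * (u x ^ 2 / 2 + (1 + k) * (|n x| + |u x| + |φ x|))) := by ring
    _ ≤ 4 * θ * ((1 + k) * (n x ^ 2 + u x ^ 2 + (φ x ^ 2 + deriv φ x ^ 2) + A ^ 2)) := by gcongr
    _ = _ := by ring

lemma cutoffFluxRate_ge (h : IsLocalizedState k θ R S n u φ g W) (hc : |c| ≤ k) :
    -(28 * (1 + k) * θ * S) ≤ cutoffFluxRate c R n u φ g := by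
  have hn := h.continuous_n
  have hu := h.continuous_u
  have hg := h.continuous_enthalpy
  have hφ := h.solvesPoisson.continuous
  have hφ' := h.solvesPoisson.continuous_deriv
  have hle := linear_comb_le_integral h.neg_le_self
    (f := fun x => n x ^ 2 + u x ^ 2 + (φ x ^ 2 + deriv φ x ^ 2))
    (g := fun x => causalResolvent (-R) (truncate R n) x ^ 2)
    (h := fun x => cutoffDeriv R x * causalResolvent (-R) (truncate R n) x
      * (u x ^ 2 / 2 + g x + φ x - c * u x))
    (α := -(4 * θ * (1 + k))) (β := -(4 * θ * (1 + k)))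
    (by fun_prop) (by fun_prop) (by fun_prop) fun x hx => by
      linarith [neg_le_of_abs_le (h.abs_cutoffFlux_le hc hx)]
  have hcoef : 0 ≤ 4 * θ * (1 + k) := by
    have := h.k_pos
    have := h.θ_pos
    positivity
  have hfield := mul_le_mul_of_nonneg_left h.integral_field_le hcoef
  have hres := mul_le_mul_of_nonneg_left h.integral_resolvent_sq_le hcoef
  rw [cutoffFluxRate]
  linarith

lemma abs_integral_truncate_mul_le (h : IsLocalizedState k θ R S n u φ g W) {f : ℝ → ℝ}
    {ρ C : ℝ} (hρ : 0 < ρ) (hf : Continuous f)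
    (hfS : ∫ x in (-R)..R, f x ^ 2 ≤ C * ρ ^ 2 * S) :
    |∫ x in (-R)..R, truncate R u x * f x| ≤ (1 + C) / 2 * ρ * S := by
  have hu := mul_le_mul_of_nonneg_left
    ((h.integral_truncate_sq_le h.continuous_u).trans h.integral_u_sq_le)
    (show 0 ≤ ρ / 2 by positivity)
  have hf' := mul_le_mul_of_nonneg_left hfS (show 0 ≤ 1 / (2 * ρ) by positivity)
  have hC : 1 / (2 * ρ) * (C * ρ ^ 2 * S) = C / 2 * ρ * S := by field_simp
  linarith [abs_integral_mul_le h.neg_le_self (continuous_truncate R h.continuous_u) hf hρ]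

lemma integral_truncate_mul_sq_le (h : IsLocalizedState k θ R S n u φ g W) :
    ∫ x in (-R)..R, truncate R (fun z => n z * u z) x ^ 2 ≤ θ ^ 2 * S := by
  have hn := h.continuous_n
  have hu := h.continuous_u
  calc ∫ x in (-R)..R, truncate R (fun z => n z * u z) x ^ 2
      ≤ ∫ x in (-R)..R, θ ^ 2 * u x ^ 2 := by
        refine intervalIntegral.integral_mono_on h.neg_le_self
          (Continuous.intervalIntegrable (by fun_prop) _ _)
          (Continuous.intervalIntegrable (by fun_prop) _ _) fun x hx =>
            (h.truncate_sq_le _ hx).trans ?_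
        rw [mul_pow, ← sq_abs (n x)]
        gcongr
        exact h.abs_n_le x
    _ ≤ θ ^ 2 * S := by
        rw [intervalIntegral.integral_const_mul]
        gcongr
        exact h.integral_u_sq_le

lemma transportRate_le (h : IsLocalizedState k θ R S n u φ g W) :
    transportRate R n u ≤ (∫ x in (-R)..R, u x ^ 2) + θ * S := by
  have hR := h.neg_le_self
  set a := truncate R u
  set r := truncate R fun z => n z * u z
  have ha : Continuous a := continuous_truncate R h.continuous_u
  have hr : Continuous r := continuous_truncate R (h.continuous_n.mul h.continuous_u)
  have hsplit : truncate R (fun z => (1 + n z) * u z) = fun x => a x + r x := by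
    ext x
    simp only [a, r, truncate]
    ring
  have hlinear := (integral_mul_sub_causalResolvent_le hR ha).trans
    (h.integral_truncate_sq_le h.continuous_u)
  have hquad : |∫ x in (-R)..R, a x * (r x - causalResolvent (-R) r x)| ≤ (1 + 1) / 2 * θ * S :=
    h.abs_integral_truncate_mul_le h.θ_pos (by fun_prop) <| by
      rw [one_mul]
      exact (integral_sub_causalResolvent_sq_le hR hr).trans h.integral_truncate_mul_sq_le
  rw [transportRate, hsplit]
  calc ∫ x in (-R)..R, a x * (a x + r x - causalResolvent (-R) (fun x => a x + r x) x)
      = 1 * (∫ x in (-R)..R, a x * (a x - causalResolvent (-R) a x))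
        + 1 * ∫ x in (-R)..R, a x * (r x - causalResolvent (-R) r x) := by
        rw [← integral_linear_comb 1 1 (by fun_prop) (by fun_prop)]
        refine intervalIntegral.integral_congr fun x _ => ?_
        simp only [causalResolvent_add _ ha hr]
        ring
    _ ≤ _ := by linarith [le_abs_self (∫ x in (-R)..R, a x * (r x - causalResolvent (-R) r x))]

lemma cutoffMass_sq_le (h : IsLocalizedState k θ R S n u φ g W) (hc : |c| ≤ k) {x : ℝ}
    (hx : x ∈ Icc (-R) R) :
    (cutoffDeriv R x * ((1 + n x) * u x - c * n x)) ^ 2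
      ≤ 50 * ((1 + k) * θ) ^ 2 * (n x ^ 2 + u x ^ 2) := by
  have hk := h.k_pos
  have hcsq : c ^ 2 ≤ k ^ 2 := sq_le_sq' (abs_le.1 hc).1 (abs_le.1 hc).2
  have hχ : cutoffDeriv R x ^ 2 ≤ (4 * θ) ^ 2 := by
    rw [← sq_abs]
    exact pow_le_pow_left₀ (abs_nonneg _) (h.abs_cutoffDeriv_le hx) 2
  have hdens : (1 + n x) ^ 2 ≤ 25 / 16 := by
    have := abs_le.1 ((h.abs_n_le x).trans h.θ_le)
    nlinarith
  have hflux : ((1 + n x) * u x - c * n x) ^ 2 ≤ 25 / 8 * (1 + k) ^ 2 * (n x ^ 2 + u x ^ 2) :=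
    calc ((1 + n x) * u x - c * n x) ^ 2
        ≤ 2 * ((1 + n x) ^ 2 * u x ^ 2) + 2 * (c ^ 2 * n x ^ 2) := by
          linarith [sq_nonneg ((1 + n x) * u x + c * n x)]
      _ ≤ 2 * (25 / 16 * u x ^ 2) + 2 * (k ^ 2 * n x ^ 2) := by gcongr
      _ ≤ 25 / 8 * ((1 + k) ^ 2 * u x ^ 2) + 25 / 8 * ((1 + k) ^ 2 * n x ^ 2) := by
          have hone : u x ^ 2 ≤ (1 + k) ^ 2 * u x ^ 2 :=
            le_mul_of_one_le_left (sq_nonneg _) (one_le_pow₀ (by linarith))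
          have hksq : k ^ 2 * n x ^ 2 ≤ (1 + k) ^ 2 * n x ^ 2 := by
            gcongr
            linarith
          linarith [mul_nonneg (sq_nonneg k) (sq_nonneg (n x))]
      _ = _ := by ring
  calc _ = cutoffDeriv R x ^ 2 * ((1 + n x) * u x - c * n x) ^ 2 := mul_pow _ _ 2
    _ ≤ (4 * θ) ^ 2 * (25 / 8 * (1 + k) ^ 2 * (n x ^ 2 + u x ^ 2)) := by gcongr
    _ = _ := by ring

lemma cutoffMassRate_ge (h : IsLocalizedState k θ R S n u φ g W) (hc : |c| ≤ k) :
    -(26 * (1 + k) * θ * S) ≤ cutoffMassRate c R n u := by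
  have hn := h.continuous_n
  have hu := h.continuous_u
  have hk := h.k_pos
  have hθ := h.θ_pos
  set f := fun z => cutoffDeriv R z * ((1 + n z) * u z - c * n z)
  have hf : Continuous f := by fun_prop
  have hsq : ∫ x in (-R)..R, f x ^ 2 ≤ 50 * ((1 + k) * θ) ^ 2 * S := by
    refine (intervalIntegral.integral_mono_on h.neg_le_self
      (Continuous.intervalIntegrable (by fun_prop) _ _)
      (Continuous.intervalIntegrable (by fun_prop) _ _) fun x hx =>
        h.cutoffMass_sq_le hc hx).trans ?_
    rw [intervalIntegral.integral_const_mul]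
    gcongr
    exact h.integral_sq_le
  have hmain := h.abs_integral_truncate_mul_le (show 0 < (1 + k) * θ by positivity)
    (continuous_causalResolvent (-R) hf)
    ((integral_causalResolvent_sq_le h.neg_le_self hf).trans hsq)
  have hS : 0 ≤ (1 + k) * θ * S := mul_nonneg (by positivity) h.nonneg_S
  rw [cutoffMassRate]
  linarith [neg_le_of_abs_le hmain]

lemma abs_sub_causalResolvent_truncate_le (h : IsLocalizedState k θ R S n u φ g W) {x : ℝ}
    (hx : x ∈ Icc (-R) R) :
    |truncate R n x - causalResolvent (-R) (truncate R n) x| ≤ 2 * θ := by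
  linarith [abs_sub (truncate R n x) (causalResolvent (-R) (truncate R n) x),
    h.abs_truncate_n_le hx, h.abs_causalResolvent_truncate_le hx]

lemma le_truncate_mul_pressure (h : IsLocalizedState k θ R S n u φ g W) {x : ℝ}
    (hx : x ∈ Icc (-R) R) {Y : ℝ} (hY : |Y| ≤ 2 * θ) :
    k * (truncate R n x * Y) + truncate R φ x * Y - θ * (n x ^ 2 + u x ^ 2) - θ * Y ^ 2
      ≤ cutoff R x * Y * (u x ^ 2 / 2 + g x + φ x) := by
  have hθ := h.θ_pos
  have hχ0 := cutoff_nonneg R x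
  have hχ1 := cutoff_le_one h.R_pos hx
  have hkin : |cutoff R x * (Y * (u x ^ 2 / 2))| ≤ θ * u x ^ 2 := by
    rw [abs_mul, abs_mul, abs_of_nonneg hχ0, abs_of_nonneg (show 0 ≤ u x ^ 2 / 2 by positivity)]
    calc cutoff R x * (|Y| * (u x ^ 2 / 2)) ≤ 1 * (2 * θ * (u x ^ 2 / 2)) := by gcongr
      _ = θ * u x ^ 2 := by ring
  have henth : |cutoff R x * (Y * (g x - k * n x))| ≤ θ * (n x ^ 2 + Y ^ 2) := by
    rw [abs_mul, abs_mul, abs_of_nonneg hχ0]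
    calc cutoff R x * (|Y| * |g x - k * n x|) ≤ 1 * (|Y| * (θ * |n x|)) := by
          gcongr
          exact h.abs_enthalpy_sub_le x
      _ ≤ θ * (|n x| ^ 2 + |Y| ^ 2) := by
          nlinarith [sq_nonneg (|n x| - |Y|), sq_nonneg (|n x| + |Y|)]
      _ = θ * (n x ^ 2 + Y ^ 2) := by rw [sq_abs, sq_abs]
  rw [truncate, truncate]
  linarith [neg_le_of_abs_le hkin, neg_le_of_abs_le henth]

lemma truncateDeriv_sq_le (h : IsLocalizedState k θ R S n u φ g W) {x : ℝ}
    (hx : x ∈ Icc (-R) R) :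
    truncateDeriv R φ x ^ 2 ≤ 2 * (φ x ^ 2 + deriv φ x ^ 2) := by
  have hχ : cutoff R x ^ 2 ≤ 1 := pow_le_one₀ (cutoff_nonneg R x) (cutoff_le_one h.R_pos hx)
  have hχ' : cutoffDeriv R x ^ 2 ≤ 1 := by
    rw [← sq_abs]
    exact pow_le_one₀ (abs_nonneg _) ((h.abs_cutoffDeriv_le hx).trans (by linarith [h.θ_le]))
  calc truncateDeriv R φ x ^ 2
      ≤ 2 * (cutoffDeriv R x ^ 2 * φ x ^ 2 + cutoff R x ^ 2 * deriv φ x ^ 2) := by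
        rw [truncateDeriv]
        linarith [sq_nonneg (cutoffDeriv R x * φ x - cutoff R x * deriv φ x)]
    _ ≤ 2 * (1 * φ x ^ 2 + 1 * deriv φ x ^ 2) := by gcongr
    _ = _ := by ring

lemma truncateDeriv_sq_ge (h : IsLocalizedState k θ R S n u φ g W) {x : ℝ}
    (hx : x ∈ Icc (-R) R) :
    deriv φ x ^ 2 - 4 * ((x / R) ^ 2 * deriv φ x ^ 2) - 4 * θ * (φ x ^ 2 + deriv φ x ^ 2)
      ≤ truncateDeriv R φ x ^ 2 := by
  have hθ := h.θ_pos
  have hχ0 := cutoff_nonneg R x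
  have hcross : |cutoff R x * cutoffDeriv R x * (φ x * deriv φ x)|
      ≤ 2 * θ * (φ x ^ 2 + deriv φ x ^ 2) := by
    rw [abs_mul, abs_mul, abs_of_nonneg hχ0, abs_mul (φ x)]
    calc cutoff R x * |cutoffDeriv R x| * (|φ x| * |deriv φ x|)
        ≤ 1 * (4 * θ) * ((|φ x| ^ 2 + |deriv φ x| ^ 2) / 2) := by
          gcongr
          · exact cutoff_le_one h.R_pos hx
          · exact h.abs_cutoffDeriv_le hx
          · linarith [sq_nonneg (|φ x| - |deriv φ x|)]
      _ = _ := by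
          rw [sq_abs, sq_abs]
          ring
  have hdiag : (1 - 4 * (x / R) ^ 2) * deriv φ x ^ 2 ≤ cutoff R x ^ 2 * deriv φ x ^ 2 := by
    gcongr
    linarith [one_sub_cutoff_le R x, sq_nonneg (1 - cutoff R x)]
  calc _ ≤ cutoff R x ^ 2 * deriv φ x ^ 2
        + 2 * (cutoff R x * cutoffDeriv R x * (φ x * deriv φ x))
        + (cutoffDeriv R x * φ x) ^ 2 := by
        linarith [neg_le_of_abs_le hcross, sq_nonneg (cutoffDeriv R x * φ x)]
    _ = truncateDeriv R φ x ^ 2 := by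
        rw [truncateDeriv]
        ring

lemma truncationError_sq_le (h : IsLocalizedState k θ R S n u φ g W) {x : ℝ}
    (hx : x ∈ Icc (-R) R) :
    truncationError R φ x ^ 2 ≤ 128 * θ ^ 2 * (φ x ^ 2 + deriv φ x ^ 2) := by
  have hθ := h.θ_pos
  have hφ := h.abs_φ_le x
  have hq : |cutoff R x * (qfun (φ x) - φ x)| ≤ θ * |φ x| := by
    rw [abs_mul, abs_of_nonneg (cutoff_nonneg R x)]
    calc cutoff R x * |qfun (φ x) - φ x| ≤ 1 * φ x ^ 2 := by
          gcongr
          · exact cutoff_le_one h.R_pos hx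
          · exact abs_qfun_sub_self_le (hφ.trans (by linarith [h.θ_le]))
      _ = |φ x| * |φ x| := by rw [one_mul, ← sq, sq_abs]
      _ ≤ θ * |φ x| := by gcongr
  have hχ' : |2 * cutoffDeriv R x * deriv φ x| ≤ 8 * θ * |deriv φ x| := by
    rw [abs_mul, abs_mul, abs_two]
    nlinarith [h.abs_cutoffDeriv_le hx, abs_nonneg (deriv φ x)]
  have hχ'' : |cutoffDeriv₂ R x * φ x| ≤ 2 * θ * |φ x| := by
    rw [abs_mul]
    gcongr
    calc |cutoffDeriv₂ R x| ≤ 8 / R ^ 2 := abs_cutoffDeriv₂_le h.R_pos hx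
      _ = 8 * (1 / R) * (1 / R) := by ring
      _ ≤ 8 * (1 / 4) * θ := by
          have hR := h.inv_R_le
          have hR4 := hR.trans h.θ_le
          have hR0 := h.R_pos
          gcongr
      _ = 2 * θ := by ring
  have hsum : |truncationError R φ x| ≤ θ * (3 * |φ x| + 8 * |deriv φ x|) := by
    rw [truncationError]
    exact (abs_add_three _ _ _).trans (by linarith)
  calc truncationError R φ x ^ 2 ≤ (θ * (3 * |φ x| + 8 * |deriv φ x|)) ^ 2 :=
        sq_le_sq' (neg_le_of_abs_le hsum) (le_of_abs_le hsum)
    _ = θ ^ 2 * (3 * |φ x| + 8 * |deriv φ x|) ^ 2 := mul_pow _ _ 2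
    _ ≤ θ ^ 2 * (128 * (|φ x| ^ 2 + |deriv φ x| ^ 2)) := by
        gcongr
        nlinarith [sq_nonneg (8 * |φ x| - 3 * |deriv φ x|)]
    _ = _ := by
        rw [sq_abs, sq_abs]
        ring

lemma integral_truncateDeriv_sq_le (h : IsLocalizedState k θ R S n u φ g W) :
    ∫ x in (-R)..R, truncateDeriv R φ x ^ 2 ≤ 10 * S := by
  have hφ := h.solvesPoisson.continuous
  have hφ' := h.solvesPoisson.continuous_deriv
  have hle := integral_le_linear_comb h.neg_le_self (α := 2) (β := 0)
    (f := fun x => φ x ^ 2 + deriv φ x ^ 2) (g := fun _ => 0)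
    (h := fun x => truncateDeriv R φ x ^ 2) (by fun_prop) (by fun_prop)
    (by unfold truncateDeriv; fun_prop) fun x hx => by linarith [h.truncateDeriv_sq_le hx]
  linarith [h.integral_poisson_le]

lemma integral_truncateDeriv_sq_ge (h : IsLocalizedState k θ R S n u φ g W) :
    (∫ x in (-R)..R, deriv φ x ^ 2) - 68 * θ * S ≤ ∫ x in (-R)..R, truncateDeriv R φ x ^ 2 := by
  have hn := h.continuous_n
  have hu := h.continuous_u
  have hφ := h.solvesPoisson.continuous
  have hφ' := h.solvesPoisson.continuous_deriv
  have hsplit := integral_le_linear_comb h.neg_le_self (α := 4) (β := 4 * θ)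
    (f := fun x => (x / R) ^ 2 * (n x ^ 2 + u x ^ 2 + (φ x ^ 2 + deriv φ x ^ 2)))
    (g := fun x => φ x ^ 2 + deriv φ x ^ 2)
    (h := fun x => deriv φ x ^ 2 - truncateDeriv R φ x ^ 2) (by fun_prop) (by fun_prop)
    (by unfold truncateDeriv; fun_prop) fun x hx => by
      have : 0 ≤ (x / R) ^ 2 * (n x ^ 2 + u x ^ 2 + φ x ^ 2) := by positivity
      linarith [h.truncateDeriv_sq_ge hx]
  rw [intervalIntegral.integral_sub (Continuous.intervalIntegrable (by fun_prop) _ _)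
    (Continuous.intervalIntegrable (by unfold truncateDeriv; fun_prop) _ _)] at hsplit
  have hpoisson := mul_le_mul_of_nonneg_left h.integral_poisson_le
    (show 0 ≤ 4 * θ by linarith [h.θ_pos])
  linarith [h.integral_tail_le]

lemma integral_truncationError_sq_le (h : IsLocalizedState k θ R S n u φ g W) :
    ∫ x in (-R)..R, truncationError R φ x ^ 2 ≤ 640 * θ ^ 2 * S := by
  have hφ := h.solvesPoisson.continuous
  have hφ' := h.solvesPoisson.continuous_deriv
  have herr := (h.solvesPoisson.isTruncatedPoisson h.continuous_n h.R_pos.ne').continuous_error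
  have hle := integral_le_linear_comb h.neg_le_self (α := 128 * θ ^ 2) (β := 0)
    (f := fun x => φ x ^ 2 + deriv φ x ^ 2) (g := fun _ => 0)
    (h := fun x => truncationError R φ x ^ 2) (by fun_prop) (by fun_prop) (by fun_prop)
    fun x hx => by linarith [h.truncationError_sq_le hx]
  linarith [mul_le_mul_of_nonneg_left h.integral_poisson_le (show 0 ≤ 128 * θ ^ 2 by positivity)]

lemma integral_truncate_φ_sq_le (h : IsLocalizedState k θ R S n u φ g W) :
    ∫ x in (-R)..R, truncate R φ x ^ 2 ≤ 5 * S := by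
  have hφ := h.solvesPoisson.continuous
  have hφ' := h.solvesPoisson.continuous_deriv
  exact (h.integral_truncate_sq_le hφ).trans ((intervalIntegral.integral_mono_on h.neg_le_self
    (Continuous.intervalIntegrable (by fun_prop) _ _)
    (Continuous.intervalIntegrable (by fun_prop) _ _) fun x _ =>
      le_add_of_nonneg_right (sq_nonneg (deriv φ x))).trans h.integral_poisson_le)

lemma integral_truncate_n_mul_ge (h : IsLocalizedState k θ R S n u φ g W) :
    (∫ x in (-R)..R, deriv φ x ^ 2) - 718 * θ * S
      ≤ ∫ x in (-R)..R, truncate R n x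
        * (truncate R n x - causalResolvent (-R) (truncate R n) x) := by
  have hθ := h.θ_pos
  have hmain := ((h.solvesPoisson.isTruncatedPoisson h.continuous_n
    h.R_pos.ne').integral_sub_causalResolvent_sq_ge h.neg_le_self hθ
      (by linarith [h.θ_le])).trans (integral_sub_causalResolvent_sq_le_integral_mul h.neg_le_self
      (continuous_truncate R h.continuous_n))
  have herr := mul_le_mul_of_nonneg_left h.integral_truncationError_sq_le (inv_nonneg.2 hθ.le)
  have hcancel : θ⁻¹ * (640 * θ ^ 2 * S) = 640 * θ * S := by field_simp
  linarith [h.integral_truncateDeriv_sq_ge,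
    mul_le_mul_of_nonneg_left h.integral_truncateDeriv_sq_le hθ.le]

lemma integral_truncate_φ_mul_ge (h : IsLocalizedState k θ R S n u φ g W) :
    (∫ x in (-R)..R, deriv φ x ^ 2) - 233 * θ * S
      ≤ ∫ x in (-R)..R, truncate R φ x
        * (truncate R n x - causalResolvent (-R) (truncate R n) x) := by
  have hθ := h.θ_pos
  have hmain := (h.solvesPoisson.isTruncatedPoisson h.continuous_n
    h.R_pos.ne').integral_mul_sub_causalResolvent_ge h.neg_le_self hθ
  have herr := mul_le_mul_of_nonneg_left h.integral_truncationError_sq_le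
    (show 0 ≤ θ⁻¹ / 4 by positivity)
  have hcancel : θ⁻¹ / 4 * (640 * θ ^ 2 * S) = 160 * θ * S := by
    field_simp
    ring
  linarith [h.integral_truncateDeriv_sq_ge,
    mul_le_mul_of_nonneg_left h.integral_truncate_φ_sq_le hθ.le]

lemma pressureRate_ge (h : IsLocalizedState k θ R S n u φ g W) :
    (1 + k) * ((∫ x in (-R)..R, deriv φ x ^ 2) - 720 * θ * S) ≤ pressureRate R n u φ g := by
  have hn := h.continuous_n
  have hu := h.continuous_u
  have hg := h.continuous_enthalpy
  have hφ := h.solvesPoisson.continuous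
  have hθ := h.θ_pos
  set Y := fun x => truncate R n x - causalResolvent (-R) (truncate R n) x
  have hY : Continuous Y := by fun_prop
  have hsplit := linear_comb_le_integral h.neg_le_self (α := 1) (β := -θ)
    (f := fun x => k * (truncate R n x * Y x) + 1 * (truncate R φ x * Y x))
    (g := fun x => 1 * (n x ^ 2 + u x ^ 2) + 1 * Y x ^ 2)
    (h := fun x => cutoff R x * Y x * (u x ^ 2 / 2 + g x + φ x))
    (by fun_prop) (by fun_prop) (by fun_prop) fun x hx => by
      linarith [h.le_truncate_mul_pressure hx (h.abs_sub_causalResolvent_truncate_le hx)]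
  rw [integral_linear_comb k 1 (by fun_prop) (by fun_prop),
    integral_linear_comb 1 1 (by fun_prop) (by fun_prop)] at hsplit
  have hS : 0 ≤ θ * S := mul_nonneg hθ.le h.nonneg_S
  have hnY := mul_le_mul_of_nonneg_left h.integral_truncate_n_mul_ge h.k_pos.le
  have hsq : θ * ∫ x in (-R)..R, (n x ^ 2 + u x ^ 2) ≤ θ * S :=
    mul_le_mul_of_nonneg_left h.integral_sq_le hθ.le
  have hYsq : θ * ∫ x in (-R)..R, Y x ^ 2 ≤ θ * S :=
    mul_le_mul_of_nonneg_left h.integral_deriv_resolvent_sq_le hθ.le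
  rw [pressureRate]
  linarith [h.integral_truncate_φ_mul_ge, mul_nonneg h.k_pos.le hS]

lemma abs_cubicFlux_le (h : IsLocalizedState k θ R S n u φ g W) (x : ℝ) :
    |n x * u x ^ 2 + (n x * g x - W x - k / 2 * n x ^ 2)| ≤ 2 * θ * (n x ^ 2 + u x ^ 2) := by
  have hkin : |n x * u x ^ 2| ≤ θ * u x ^ 2 := by
    rw [abs_mul, abs_of_nonneg (sq_nonneg (u x))]
    gcongr
    exact h.abs_n_le x
  have henth : |n x * (g x - k * n x)| ≤ θ * n x ^ 2 := by
    rw [abs_mul, ← sq_abs (n x)]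
    nlinarith [h.abs_enthalpy_sub_le x, abs_nonneg (n x)]
  have hu : 0 ≤ θ * u x ^ 2 := mul_nonneg h.θ_pos.le (sq_nonneg _)
  have hinternal := abs_le.1 (h.abs_internal_sub_le x)
  rw [abs_le]
  constructor <;> linarith [abs_le.1 hkin, abs_le.1 henth]

lemma le_virialWeight_mul_flux (h : IsLocalizedState k θ R S n u φ g W) (hc : |c| ≤ k) {x : ℝ}
    (hx : x ∈ Icc (-R) R) :
    quadraticFlux k c n u φ x - 2 * θ * (n x ^ 2 + u x ^ 2) - 6 * (1 + k) * ((x / R) ^ 2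
        * (n x ^ 2 + u x ^ 2 + (φ x ^ 2 + deriv φ x ^ 2)))
      ≤ virialWeight R x * ((1 / 2 + n x) * u x ^ 2 + (n x * g x - W x)
        + (Real.exp (φ x) - 1 - φ x) - deriv φ x ^ 2 / 2 - c * n x * u x) := by
  have hk := h.k_pos
  have hv : |virialWeight R x| ≤ 1 :=
    abs_le.2 ⟨neg_one_le_virialWeight R x, virialWeight_le_one h.R_pos hx⟩
  have hv1 := virialWeight_le_one h.R_pos hx
  have hv6 := one_sub_virialWeight_le R x
  set v := virialWeight R x
  set B := quadraticFlux k c n u φ x + deriv φ x ^ 2 / 2 with hB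
  set Q := Real.exp (φ x) - 1 - φ x
  have hquad : (1 - v) * B ≤ 6 * (x / R) ^ 2 * ((1 + k) * (n x ^ 2 + u x ^ 2)) := by
    have hB' : B ≤ (1 + k) * (n x ^ 2 + u x ^ 2) := le_of_abs_le (abs_quadraticFlux_add_le hc x)
    calc (1 - v) * B ≤ (1 - v) * ((1 + k) * (n x ^ 2 + u x ^ 2)) := by gcongr
      _ ≤ _ := by gcongr
  have hcubic : |v * (n x * u x ^ 2 + (n x * g x - W x - k / 2 * n x ^ 2))|
      ≤ 2 * θ * (n x ^ 2 + u x ^ 2) := by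
    rw [abs_mul]
    exact (mul_le_of_le_one_left (abs_nonneg _) hv).trans (h.abs_cubicFlux_le x)
  have hQ0 : 0 ≤ Q := by linarith [Real.add_one_le_exp (φ x)]
  have hQφ : Q ≤ φ x ^ 2 := by
    have := le_of_abs_le (abs_qfun_sub_self_le ((h.abs_φ_le x).trans (by linarith [h.θ_le])))
    rwa [qfun] at this
  have hpot : -(6 * (x / R) ^ 2 * φ x ^ 2) ≤ v * Q :=
    calc -(6 * (x / R) ^ 2 * φ x ^ 2) ≤ -(6 * (x / R) ^ 2 * Q) := by gcongr
      _ ≤ (1 - 6 * (x / R) ^ 2) * Q := by linarith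
      _ ≤ v * Q := mul_le_mul_of_nonneg_right (by linarith) hQ0
  have hfield : 0 ≤ (1 - v) * deriv φ x ^ 2 := mul_nonneg (by linarith) (sq_nonneg _)
  have hdrop : 0 ≤ (x / R) ^ 2 * (deriv φ x ^ 2 + k * (φ x ^ 2 + deriv φ x ^ 2)) := by positivity
  have hflux : v * ((1 / 2 + n x) * u x ^ 2 + (n x * g x - W x) + Q - deriv φ x ^ 2 / 2
        - c * n x * u x) = B - (1 - v) * B
      + v * (n x * u x ^ 2 + (n x * g x - W x - k / 2 * n x ^ 2)) + v * Q
      - v * deriv φ x ^ 2 / 2 := by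
    rw [hB, quadraticFlux]
    ring
  rw [hflux]
  linarith [neg_le_of_abs_le hcubic]

lemma momentumRate_ge (h : IsLocalizedState k θ R S n u φ g W) (hc : |c| ≤ k) :
    (∫ x in (-R)..R, quadraticFlux k c n u φ x) - (74 + 72 * k) * θ * S
      ≤ momentumRate c R n u φ g W := by
  have hn := h.continuous_n
  have hu := h.continuous_u
  have hg := h.continuous_enthalpy
  have hW := h.continuous_internal
  have hφ := h.solvesPoisson.continuous
  have hφ' := h.solvesPoisson.continuous_deriv
  have hquad : Continuous (quadraticFlux k c n u φ) := by
    unfold quadraticFlux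
    fun_prop
  have hle := linear_comb_le_integral h.neg_le_self (α := 1) (β := -1)
    (f := quadraticFlux k c n u φ)
    (g := fun x => 2 * θ * (n x ^ 2 + u x ^ 2) + 6 * (1 + k) * ((x / R) ^ 2
        * (n x ^ 2 + u x ^ 2 + (φ x ^ 2 + deriv φ x ^ 2))))
    (h := fun x => virialWeight R x * ((1 / 2 + n x) * u x ^ 2 + (n x * g x - W x)
        + (Real.exp (φ x) - 1 - φ x) - deriv φ x ^ 2 / 2 - c * n x * u x))
    hquad (by fun_prop) (by fun_prop) fun x hx => by
      linarith [h.le_virialWeight_mul_flux hc hx]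
  rw [integral_linear_comb (2 * θ) (6 * (1 + k)) (by fun_prop) (by fun_prop)] at hle
  have hsq := mul_le_mul_of_nonneg_left h.integral_sq_le (show 0 ≤ 2 * θ by linarith [h.θ_pos])
  have htail := mul_le_mul_of_nonneg_left h.integral_tail_le
    (show 0 ≤ 6 * (1 + k) by linarith [h.k_pos])
  rw [momentumRate]
  linarith

lemma integral_quadraticFlux_ge (h : IsLocalizedState k θ R S n u φ g W) {ν : ℝ}
    (hν : ∀ p q : ℝ, ν * (p ^ 2 + q ^ 2)
      ≤ k / (2 * (1 + k)) * q ^ 2 + k / 2 * p ^ 2 - c * (p * q)) :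
    ν * (∫ x in (-R)..R, (n x ^ 2 + u x ^ 2)) + 1 / (2 * (1 + k)) * (∫ x in (-R)..R, u x ^ 2)
        - 1 / 2 * (∫ x in (-R)..R, deriv φ x ^ 2)
      ≤ ∫ x in (-R)..R, quadraticFlux k c n u φ x := by
  have hn := h.continuous_n
  have hu := h.continuous_u
  have hφ' := h.solvesPoisson.continuous_deriv
  have hκ : k / (2 * (1 + k)) + 1 / (2 * (1 + k)) = 1 / 2 := by
    have := h.k_pos
    field_simp
    ring
  have hle := linear_comb_le_integral h.neg_le_self (α := ν) (β := 1)
    (f := fun x => n x ^ 2 + u x ^ 2)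
    (g := fun x => 1 / (2 * (1 + k)) * u x ^ 2 + -(1 / 2) * deriv φ x ^ 2)
    (h := quadraticFlux k c n u φ) (by fun_prop) (by fun_prop)
    (by unfold quadraticFlux; fun_prop) fun x _ => by
      have hsplit : k / (2 * (1 + k)) * u x ^ 2 + 1 / (2 * (1 + k)) * u x ^ 2 = u x ^ 2 / 2 := by
        rw [← add_mul, hκ]
        ring
      rw [quadraticFlux]
      linarith [hν (n x) (u x)]
  rw [integral_linear_comb (1 / (2 * (1 + k))) (-(1 / 2)) (by fun_prop) (by fun_prop)] at hle
  linarith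

/- The multiple `1 / (2 (1 + k))` of the resolvent virial is chosen so that the gain `(1 + k) ∫ φ'²`
of `pressureRate` cancels the negative term `-∫ φ'² / 2` of the momentum flux. -/
theorem le_virialRate (h : IsLocalizedState k θ R S n u φ g W) (hc : |c| ≤ k) {ν : ℝ}
    (hν : ∀ p q : ℝ, ν * (p ^ 2 + q ^ 2)
      ≤ k / (2 * (1 + k)) * q ^ 2 + k / 2 * p ^ 2 - c * (p * q)) :
    ν * (∫ x in (-R)..R, (n x ^ 2 + u x ^ 2)) - 501 * (1 + k) * θ * S
      ≤ momentumRate c R n u φ g W + 1 / (2 * (1 + k)) * (cutoffFluxRate c R n u φ g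
        + pressureRate R n u φ g - transportRate R n u + cutoffMassRate c R n u) := by
  have hk := h.k_pos
  have hS : 0 ≤ θ * S := mul_nonneg h.θ_pos.le h.nonneg_S
  have hrates : -(54 * (1 + k) * θ * S) + (1 + k) * ((∫ x in (-R)..R, deriv φ x ^ 2) - 720 * θ * S)
        - (∫ x in (-R)..R, u x ^ 2) - (1 + k) * θ * S
      ≤ cutoffFluxRate c R n u φ g + pressureRate R n u φ g - transportRate R n u
        + cutoffMassRate c R n u := by
    linarith [h.cutoffFluxRate_ge hc, h.pressureRate_ge, h.transportRate_le,
      h.cutoffMassRate_ge hc, mul_nonneg hk.le hS]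
  have hκ := mul_le_mul_of_nonneg_left hrates (show 0 ≤ 1 / (2 * (1 + k)) by positivity)
  have hcancel : 1 / (2 * (1 + k)) * (-(54 * (1 + k) * θ * S)
        + (1 + k) * ((∫ x in (-R)..R, deriv φ x ^ 2) - 720 * θ * S)
        - (∫ x in (-R)..R, u x ^ 2) - (1 + k) * θ * S)
      = 1 / 2 * (∫ x in (-R)..R, deriv φ x ^ 2) - 1 / (2 * (1 + k)) * (∫ x in (-R)..R, u x ^ 2)
        - 387.5 * θ * S := by
    field_simp
    ring
  linarith [h.momentumRate_ge hc, h.integral_quadraticFlux_ge hν, mul_nonneg hk.le hS]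

end IsLocalizedState

end StaticEstimate

section Virial

/-- A classical solution of the Euler–Poisson system in a frame moving with velocity `c t`, where
`nt = ∂ₜn` and `ut = ∂ₜu` are the time derivatives in that frame. -/
structure IsMovingSolution (w c : ℝ → ℝ) (n u φ nt ut : ℝ → ℝ → ℝ) : Prop where
  neg_one_lt : ∀ t x, -1 < n t x
  continuous_n : Continuous (Function.uncurry n)
  continuous_u : Continuous (Function.uncurry u)
  continuous_nt : Continuous (Function.uncurry nt)
  continuous_ut : Continuous (Function.uncurry ut)
  differentiable_n : ∀ t, Differentiable ℝ (n t)
  differentiable_u : ∀ t, Differentiable ℝ (u t)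
  solvesPoisson : ∀ t, SolvesPoisson (n t) (φ t)
  hasDerivAt_n : ∀ t x, HasDerivAt (fun s => n s x) (nt t x) t
  hasDerivAt_u : ∀ t x, HasDerivAt (fun s => u s x) (ut t x) t
  hasDerivAt_massFlux :
    ∀ t x, HasDerivAt (fun z => (1 + n t z) * u t z - c t * n t z) (-nt t x) x
  hasDerivAt_momentumFlux : ∀ t x, HasDerivAt
    (fun z => u t z ^ 2 / 2 + w (n t z) + φ t z - c t * u t z) (-ut t x) x

/-- The virial `∫ x χ_R n u` of the momentum density `n u`. -/
def momentumVirial (R : ℝ) (n u : ℝ → ℝ) : ℝ :=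
  ∫ x in (-R)..R, x * cutoff R x * (n x * u x)

/-- The correction `∫ χ_R u A` of the virial, with `A = (1 + ∂ₓ)⁻¹ (χ_R n)`. -/
def resolventVirial (R : ℝ) (n u : ℝ → ℝ) : ℝ :=
  ∫ x in (-R)..R, truncate R u x * causalResolvent (-R) (truncate R n) x

lemma hasDerivAt_Wfun {w : ℝ → ℝ} {a : ℝ} (hw : ∀ b, -1 < b → DifferentiableAt ℝ w b)
    (ha : -1 < a) : HasDerivAt (Wfun w) (w a) a := by
  have hcont : ContinuousOn w (Ioi (-1)) := fun b hb => (hw b hb).continuousAt.continuousWithinAt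
  refine intervalIntegral.integral_hasDerivAt_right
    (hcont.mono fun b hb => ?_).intervalIntegrable
    (hcont.stronglyMeasurableAtFilter isOpen_Ioi a ha) (hw a ha).continuousAt
  exact (lt_min (by norm_num) ha).trans_le hb.1

lemma integral_mul_eq_integral_deriv_mul_flux {a b : ℝ} {f f' F m : ℝ → ℝ}
    (hf : ∀ x, HasDerivAt f (f' x) x) (hf' : Continuous f') (hF : ∀ x, HasDerivAt F (-m x) x)
    (hm : Continuous m) (ha : f a = 0) (hb : f b = 0) :
    ∫ x in a..b, f x * m x = ∫ x in a..b, f' x * F x := by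
  have hparts := intervalIntegral.integral_mul_deriv_eq_deriv_mul (a := a) (b := b)
    (fun x _ => hf x) (fun x _ => hF x) (hf'.intervalIntegrable _ _)
    (hm.neg.intervalIntegrable _ _)
  simp only [mul_neg, intervalIntegral.integral_neg, ha, hb, zero_mul, sub_zero, zero_sub,
    neg_inj] at hparts
  exact hparts

lemma hasDerivAt_truncate (R : ℝ) {f : ℝ → ℝ} {f' x : ℝ} (hf : HasDerivAt f f' x) :
    HasDerivAt (truncate R f) (cutoffDeriv R x * f x + cutoff R x * f') x :=
  (hasDerivAt_cutoff R x).mul hf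

lemma integral_truncate_mul_causalResolvent {R c : ℝ} (hR : R ≠ 0) {n u φ g m : ℝ → ℝ}
    (hn : Continuous n) (hu : Continuous u) (hφ : Continuous φ) (hg : Continuous g)
    (hm : Continuous m)
    (hflux : ∀ x, HasDerivAt (fun z => u z ^ 2 / 2 + g z + φ z - c * u z) (-m x) x) :
    ∫ x in (-R)..R, truncate R m x * causalResolvent (-R) (truncate R n) x
      = cutoffFluxRate c R n u φ g + pressureRate R n u φ g
        - c * ∫ x in (-R)..R, truncate R u x
          * (truncate R n x - causalResolvent (-R) (truncate R n) x) := by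
  have hA := hasDerivAt_causalResolvent (-R) (continuous_truncate R hn)
  have hparts := integral_mul_eq_integral_deriv_mul_flux (a := -R) (b := R)
    (fun x => hasDerivAt_truncate R (hA x)) (by fun_prop) hflux hm
    (by simp [truncate, cutoff_neg_self hR]) (by simp [truncate, cutoff_self hR])
  rw [cutoffFluxRate, pressureRate, ← intervalIntegral.integral_const_mul,
    ← intervalIntegral.integral_add (Continuous.intervalIntegrable (by fun_prop) _ _)
      (Continuous.intervalIntegrable (by fun_prop) _ _),
    ← intervalIntegral.integral_sub (Continuous.intervalIntegrable (by fun_prop) _ _)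
      (Continuous.intervalIntegrable (by fun_prop) _ _)]
  refine (intervalIntegral.integral_congr fun x _ => ?_).trans
    (hparts.trans (intervalIntegral.integral_congr fun x _ => ?_)) <;>
  · simp only [truncate]
    ring

lemma continuous_uncurry_causalResolvent (a : ℝ) {f : ℝ → ℝ → ℝ}
    (hf : Continuous (Function.uncurry f)) :
    Continuous (Function.uncurry fun t => causalResolvent a (f t)) := by
  have hprimitive : Continuous fun q : ℝ × ℝ => ∫ z in a..q.2, Real.exp z * f q.1 z := by
    refine intervalIntegral.continuous_parametric_intervalIntegral_of_continuous
      (f := fun (q : ℝ × ℝ) z => Real.exp z * f q.1 z)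
      ((by fun_prop : Continuous fun r : (ℝ × ℝ) × ℝ => Real.exp r.2).mul
        (?_ : Continuous fun r : (ℝ × ℝ) × ℝ => f r.1.1 r.2)) continuous_snd
    exact hf.comp (by fun_prop : Continuous fun r : (ℝ × ℝ) × ℝ => (r.1.1, r.2))
  exact (by fun_prop : Continuous fun q : ℝ × ℝ => Real.exp (-q.2)).mul hprimitive

lemma hasDerivAt_causalResolvent_param (a t x : ℝ) {f f' : ℝ → ℝ → ℝ} (hf : ∀ s, Continuous (f s))
    (hf' : Continuous (Function.uncurry f')) (hd : ∀ s x, HasDerivAt (fun r => f r x) (f' s x) s) :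
    HasDerivAt (fun s => causalResolvent a (f s) x) (causalResolvent a (f' t) x) t :=
  (hasDerivAt_intervalIntegral_of_continuous (F := fun s z => Real.exp z * f s z)
    (F' := fun s z => Real.exp z * f' s z) a x t (fun s => Real.continuous_exp.mul (hf s))
    ((Real.continuous_exp.comp continuous_snd).mul hf')
    (fun s z => (hd s z).const_mul _)).const_mul _

lemma continuous_uncurry_truncate (R : ℝ) {f : ℝ → ℝ → ℝ} (hf : Continuous (Function.uncurry f)) :
    Continuous (Function.uncurry fun t => truncate R (f t)) :=
  ((continuous_cutoff R).comp continuous_snd).mul hf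

namespace IsMovingSolution

variable {w c : ℝ → ℝ} {n u φ nt ut : ℝ → ℝ → ℝ}

/- The momentum density `n u` satisfies the conservation law
`∂ₜ(n u) = -∂ₓ((1/2 + n) u² + n w(n) - W(n) + e^φ - 1 - φ - φ'²/2 - c n u)`. -/
lemma hasDerivAt_flux_mul (h : IsMovingSolution w c n u φ nt ut)
    (hw : ∀ a, -1 < a → DifferentiableAt ℝ w a) (t x : ℝ) :
    HasDerivAt (fun z => (1 / 2 + n t z) * u t z ^ 2 + (n t z * w (n t z) - Wfun w (n t z))
        + (Real.exp (φ t z) - 1 - φ t z) - deriv (φ t) z ^ 2 / 2 - c t * n t z * u t z)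
      (-(nt t x * u t x + n t x * ut t x)) x := by
  have hn := (h.differentiable_n t x).hasDerivAt
  have hu := (h.differentiable_u t x).hasDerivAt
  have hφ := (h.solvesPoisson t).hasDerivAt x
  have hwn := (hw _ (h.neg_one_lt t x)).hasDerivAt.comp x hn
  have hnt := ((hn.const_add 1).fun_mul hu).fun_sub (hn.const_mul (c t)) |>.unique
    (h.hasDerivAt_massFlux t x)
  have hut := ((((hu.fun_pow 2).div_const 2).fun_add hwn).fun_add hφ).fun_sub
    (hu.const_mul (c t)) |>.unique (h.hasDerivAt_momentumFlux t x)
  refine ((((((hn.const_add (1 / 2)).fun_mul (hu.fun_pow 2)).fun_add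
    ((hn.fun_mul hwn).fun_sub ((hasDerivAt_Wfun hw (h.neg_one_lt t x)).comp x hn))).fun_add
    ((hφ.exp.sub_const 1).fun_sub hφ)).fun_sub
    ((((h.solvesPoisson t).hasDerivAt_deriv x).fun_pow 2).div_const 2)).fun_sub
    ((hn.const_mul (c t)).fun_mul hu)).congr_deriv ?_
  simp only [Function.comp_apply, qfun] at hut ⊢
  push_cast at hut ⊢
  linear_combination u t x * hnt + n t x * hut

lemma hasDerivAt_momentumVirial (h : IsMovingSolution w c n u φ nt ut)
    (hw : ∀ a, -1 < a → DifferentiableAt ℝ w a) {R : ℝ} (hR : R ≠ 0) (t : ℝ) :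
    HasDerivAt (fun s => momentumVirial R (n s) (u s))
      (momentumRate (c t) R (n t) (u t) (φ t) (fun x => w (n t x)) fun x => Wfun w (n t x)) t := by
  have hdensity : Continuous (Function.uncurry fun s x => nt s x * u s x + n s x * ut s x) :=
    (h.continuous_nt.mul h.continuous_u).add (h.continuous_n.mul h.continuous_ut)
  have hcutoff : Continuous fun x => x * cutoff R x := by fun_prop
  have hd := hasDerivAt_intervalIntegral_of_continuous
    (F := fun s x => x * cutoff R x * (n s x * u s x))
    (F' := fun s x => x * cutoff R x * (nt s x * u s x + n s x * ut s x)) (-R) R t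
    (fun s => hcutoff.mul
      ((h.differentiable_n s).continuous.mul (h.differentiable_u s).continuous))
    ((hcutoff.comp continuous_snd).mul hdensity)
    (fun s x => ((h.hasDerivAt_n s x).fun_mul (h.hasDerivAt_u s x)).const_mul _)
  refine hd.congr_deriv (integral_mul_eq_integral_deriv_mul_flux (hasDerivAt_id_mul_cutoff hR)
    (continuous_virialWeight R) (h.hasDerivAt_flux_mul hw t) (hdensity.uncurry_left t) ?_ ?_)
  · rw [cutoff_neg_self hR, mul_zero]
  · rw [cutoff_self hR, mul_zero]

lemma causalResolvent_truncate_nt (h : IsMovingSolution w c n u φ nt ut) {R : ℝ} (hR : R ≠ 0)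
    (t x : ℝ) :
    causalResolvent (-R) (truncate R (nt t)) x
      = -(truncate R (fun z => (1 + n t z) * u t z) x
          - causalResolvent (-R) (truncate R fun z => (1 + n t z) * u t z) x)
        + c t * (truncate R (n t) x - causalResolvent (-R) (truncate R (n t)) x)
        + causalResolvent (-R)
          (fun z => cutoffDeriv R z * ((1 + n t z) * u t z - c t * n t z)) x := by
  have hn := (h.differentiable_n t).continuous
  have hu := (h.differentiable_u t).continuous
  have hnt := h.continuous_nt.uncurry_left t
  have heq := eq_causalResolvent (a := -R) (f := truncate R (nt t))
    (g := fun x => -truncate R (fun z => (1 + n t z) * u t z - c t * n t z) x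
      + (causalResolvent (-R) (truncate R fun z => (1 + n t z) * u t z) x
        - c t * causalResolvent (-R) (truncate R (n t)) x)
      + causalResolvent (-R) (fun z => cutoffDeriv R z * ((1 + n t z) * u t z - c t * n t z)) x)
    (by fun_prop) (fun z => ?_) ?_ x
  · simp only [truncate] at heq ⊢
    linarith
  · refine (((hasDerivAt_truncate R (h.hasDerivAt_massFlux t z)).fun_neg.fun_add
      ((hasDerivAt_causalResolvent (-R) (by fun_prop) z).fun_sub
        ((hasDerivAt_causalResolvent (-R) (by fun_prop) z).const_mul (c t)))).fun_add
      (hasDerivAt_causalResolvent (-R) (by fun_prop) z)).congr_deriv ?_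
    simp only [truncate]
    ring
  · simp only [causalResolvent_self, truncate, cutoff_neg_self hR]
    ring

lemma hasDerivAt_resolventVirial_integral (h : IsMovingSolution w c n u φ nt ut) (R t : ℝ) :
    HasDerivAt (fun s => resolventVirial R (n s) (u s))
      (∫ x in (-R)..R, (truncate R (ut t) x * causalResolvent (-R) (truncate R (n t)) x
        + truncate R (u t) x * causalResolvent (-R) (truncate R (nt t)) x)) t := by
  have hn : ∀ s, Continuous (truncate R (n s)) := fun s =>
    continuous_truncate R (h.differentiable_n s).continuous
  refine hasDerivAt_intervalIntegral_of_continuous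
    (F := fun s x => truncate R (u s) x * causalResolvent (-R) (truncate R (n s)) x)
    (F' := fun s x => truncate R (ut s) x * causalResolvent (-R) (truncate R (n s)) x
        + truncate R (u s) x * causalResolvent (-R) (truncate R (nt s)) x) (-R) R t
    (fun s => (continuous_truncate R (h.differentiable_u s).continuous).mul
      (continuous_causalResolvent (-R) (hn s))) ?_ fun s x => ?_
  · have hA :=
      continuous_uncurry_causalResolvent (-R) (continuous_uncurry_truncate R h.continuous_n)
    have hAt :=
      continuous_uncurry_causalResolvent (-R) (continuous_uncurry_truncate R h.continuous_nt)
    exact ((continuous_uncurry_truncate R h.continuous_ut).mul hA).add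
      ((continuous_uncurry_truncate R h.continuous_u).mul hAt)
  · exact ((h.hasDerivAt_u s x).const_mul _).fun_mul (hasDerivAt_causalResolvent_param (-R) s x hn
      (continuous_uncurry_truncate R h.continuous_nt) fun r z => (h.hasDerivAt_n r z).const_mul _)

lemma integral_truncate_mul_resolvent_nt (h : IsMovingSolution w c n u φ nt ut) {R : ℝ}
    (hR : R ≠ 0) (t : ℝ) :
    ∫ x in (-R)..R, truncate R (u t) x * causalResolvent (-R) (truncate R (nt t)) x
      = -transportRate R (n t) (u t) + cutoffMassRate (c t) R (n t) (u t)
        + c t * ∫ x in (-R)..R, truncate R (u t) x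
          * (truncate R (n t) x - causalResolvent (-R) (truncate R (n t)) x) := by
  have hn := (h.differentiable_n t).continuous
  have hu := (h.differentiable_u t).continuous
  simp only [h.causalResolvent_truncate_nt hR]
  rw [transportRate, cutoffMassRate, ← intervalIntegral.integral_const_mul,
    ← intervalIntegral.integral_neg,
    ← intervalIntegral.integral_add (Continuous.intervalIntegrable (by fun_prop) _ _)
      (Continuous.intervalIntegrable (by fun_prop) _ _),
    ← intervalIntegral.integral_add (Continuous.intervalIntegrable (by fun_prop) _ _)
      (Continuous.intervalIntegrable (by fun_prop) _ _)]
  refine intervalIntegral.integral_congr fun x _ => ?_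
  ring

lemma hasDerivAt_resolventVirial (h : IsMovingSolution w c n u φ nt ut)
    (hw : ∀ a, -1 < a → DifferentiableAt ℝ w a) {R : ℝ} (hR : R ≠ 0) (t : ℝ) :
    HasDerivAt (fun s => resolventVirial R (n s) (u s))
      (cutoffFluxRate (c t) R (n t) (u t) (φ t) (fun x => w (n t x))
        + pressureRate R (n t) (u t) (φ t) (fun x => w (n t x)) - transportRate R (n t) (u t)
        + cutoffMassRate (c t) R (n t) (u t)) t := by
  have hn := (h.differentiable_n t).continuous
  have hu := (h.differentiable_u t).continuous
  have hnt := h.continuous_nt.uncurry_left t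
  have hut := h.continuous_ut.uncurry_left t
  have hwn : Continuous fun x => w (n t x) := continuous_iff_continuousAt.2 fun x =>
    (hw _ (h.neg_one_lt t x)).continuousAt.comp hn.continuousAt
  refine (h.hasDerivAt_resolventVirial_integral R t).congr_deriv ?_
  rw [intervalIntegral.integral_add (Continuous.intervalIntegrable (by fun_prop) _ _)
      (Continuous.intervalIntegrable (by fun_prop) _ _),
    integral_truncate_mul_causalResolvent hR hn hu (h.solvesPoisson t).continuous hwn hut
      (h.hasDerivAt_momentumFlux t), h.integral_truncate_mul_resolvent_nt hR]
  ring

end IsMovingSolution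

namespace IsLocalizedState

variable {k θ R S c : ℝ} {n u φ g W : ℝ → ℝ}

lemma abs_momentumVirial_le (h : IsLocalizedState k θ R S n u φ g W) :
    |momentumVirial R n u| ≤ R * S := by
  have hR := h.R_pos
  have hn := h.continuous_n
  have hu := h.continuous_u
  calc |momentumVirial R n u|
      ≤ ∫ x in (-R)..R, |x * cutoff R x * (n x * u x)| :=
        intervalIntegral.abs_integral_le_integral_abs h.neg_le_self
    _ ≤ ∫ x in (-R)..R, R * (n x ^ 2 + u x ^ 2) := by
        refine intervalIntegral.integral_mono_on h.neg_le_self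
          (Continuous.intervalIntegrable (by fun_prop) _ _)
          (Continuous.intervalIntegrable (by fun_prop) _ _) fun x hx => ?_
        rw [abs_mul, abs_mul, abs_of_nonneg (cutoff_nonneg R x)]
        have hweight : |x| * cutoff R x ≤ R :=
          (mul_le_of_le_one_right (abs_nonneg x) (cutoff_le_one hR hx)).trans (abs_le.2 hx)
        have hprod : |n x * u x| ≤ n x ^ 2 + u x ^ 2 :=
          abs_le.2 ⟨by nlinarith [sq_nonneg (n x + u x)], by nlinarith [sq_nonneg (n x - u x)]⟩
        gcongr
    _ ≤ R * S := by
        rw [intervalIntegral.integral_const_mul]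
        gcongr
        exact h.integral_sq_le

lemma abs_resolventVirial_le (h : IsLocalizedState k θ R S n u φ g W) :
    |resolventVirial R n u| ≤ S := by
  have := h.abs_integral_truncate_mul_le one_pos
    (continuous_causalResolvent (-R) (continuous_truncate R h.continuous_n))
    (C := 1) (by simpa using h.integral_resolvent_sq_le)
  rw [resolventVirial]
  linarith

end IsLocalizedState

lemma exists_lt_abs_of_le_deriv {I I' : ℝ → ℝ} {m : ℝ} (hm : 0 < m)
    (hI : ∀ t, HasDerivAt I (I' t) t) (hI' : ∀ t, m ≤ I' t) (D : ℝ) : ∃ t, D < |I t| := by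
  by_contra! hD
  have hD0 : 0 ≤ D := (abs_nonneg _).trans (hD 0)
  have hgrowth := mul_sub_le_image_sub_of_le_deriv (fun t => (hI t).differentiableAt)
    (fun t => (hI' t).trans_eq (hI t).deriv.symm) (x := 0) (y := (2 * D + 1) / m) (by positivity)
  rw [sub_zero, mul_div_cancel₀ _ hm.ne'] at hgrowth
  linarith [neg_le_of_abs_le (hD 0), le_of_abs_le (hD ((2 * D + 1) / m))]

/- The corrected virial is bounded by `(R + 1) D`, so it cannot increase at a positive rate. -/
theorem IsMovingSolution.false_of_isLocalizedState {k θ R D ν m : ℝ} {w c S : ℝ → ℝ}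
    {n u φ nt ut : ℝ → ℝ → ℝ} (h : IsMovingSolution w c n u φ nt ut)
    (hw : ∀ a, -1 < a → DifferentiableAt ℝ w a)
    (hloc : ∀ t, IsLocalizedState k θ R (S t) (n t) (u t) (φ t) (fun x => w (n t x))
      fun x => Wfun w (n t x))
    (hc : ∀ t, |c t| ≤ k)
    (hν : ∀ t p q, ν * (p ^ 2 + q ^ 2)
      ≤ k / (2 * (1 + k)) * q ^ 2 + k / 2 * p ^ 2 - c t * (p * q))
    (hS : ∀ t, S t ≤ D) (hm : 0 < m)
    (hgain : ∀ t, m ≤ ν * (∫ x in (-R)..R, (n t x ^ 2 + u t x ^ 2))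
      - 501 * (1 + k) * θ * S t) : False := by
  have hR := (hloc 0).R_pos
  have hk := (hloc 0).k_pos
  have hκ : 1 / (2 * (1 + k)) ≤ 1 := by
    rw [div_le_one (by positivity)]
    linarith
  obtain ⟨t, ht⟩ := exists_lt_abs_of_le_deriv hm
    (fun t => (h.hasDerivAt_momentumVirial hw hR.ne' t).fun_add
      ((h.hasDerivAt_resolventVirial hw hR.ne' t).const_mul (1 / (2 * (1 + k)))))
    (fun t => (hgain t).trans ((hloc t).le_virialRate (hc t) (hν t))) ((R + 1) * D)
  refine ht.not_ge ((abs_add_le _ _).trans ?_)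
  rw [abs_mul, abs_of_pos (show 0 < 1 / (2 * (1 + k)) by positivity)]
  have hmom := (hloc t).abs_momentumVirial_le.trans (mul_le_mul_of_nonneg_left (hS t) hR.le)
  have hres := mul_le_of_le_one_left (abs_nonneg (resolventVirial R (n t) (u t))) hκ
  linarith [(hloc t).abs_resolventVirial_le, hS t]

end Virial

section MovingFrame

/-- The time derivative of `f t (x + y t)`, the profile of `f` in the frame moving along `y`. -/
def movingTimeDeriv (f : ℝ → ℝ → ℝ) (y : ℝ → ℝ) (t x : ℝ) : ℝ :=
  fderiv ℝ (Function.uncurry f) (t, x + y t) (1, deriv y t)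

variable {f : ℝ → ℝ → ℝ} {y : ℝ → ℝ}

lemma differentiable_of_uncurry (hf : ContDiff ℝ 1 (Function.uncurry f)) (t : ℝ) :
    Differentiable ℝ (f t) :=
  (hf.differentiable one_ne_zero).comp ((differentiable_const t).prodMk differentiable_id)

lemma hasDerivAt_movingTimeDeriv (hf : ContDiff ℝ 1 (Function.uncurry f)) (hy : ContDiff ℝ 1 y)
    (t x : ℝ) : HasDerivAt (fun s => f s (x + y s)) (movingTimeDeriv f y t x) t := by
  have hF := (hf.differentiable one_ne_zero (t, x + y t)).hasFDerivAt
  exact hF.comp_hasDerivAt t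
    ((hasDerivAt_id t).prodMk ((hy.differentiable one_ne_zero t).hasDerivAt.const_add x))

lemma continuous_movingTimeDeriv (hf : ContDiff ℝ 1 (Function.uncurry f)) (hy : ContDiff ℝ 1 y) :
    Continuous (Function.uncurry (movingTimeDeriv f y)) := by
  have := hy.continuous
  have := hy.continuous_deriv le_rfl
  exact ((hf.continuous_fderiv one_ne_zero).comp (by fun_prop :
    Continuous fun q : ℝ × ℝ => (q.1, q.2 + y q.1))).clm_apply (by fun_prop :
    Continuous fun q : ℝ × ℝ => ((1 : ℝ), deriv y q.1))

lemma movingTimeDeriv_eq (hf : ContDiff ℝ 1 (Function.uncurry f)) (y : ℝ → ℝ) (t x : ℝ) :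
    movingTimeDeriv f y t x
      = deriv (fun s => f s (x + y t)) t + deriv y t * deriv (f t) (x + y t) := by
  have hF := (hf.differentiable one_ne_zero (t, x + y t)).hasFDerivAt
  have ht := (hF.comp_hasDerivAt t ((hasDerivAt_id t).prodMk (hasDerivAt_const t (x + y t)))).deriv
  have hx := (hF.comp_hasDerivAt (x + y t)
    ((hasDerivAt_const (x + y t) t).prodMk (hasDerivAt_id (x + y t)))).deriv
  have hdir : ((1 : ℝ), deriv y t) = (1, 0) + deriv y t • ((0 : ℝ), (1 : ℝ)) := by simp
  rw [movingTimeDeriv, hdir, map_add, map_smul, smul_eq_mul]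
  exact congrArg₂ (· + deriv y t * ·) ht.symm hx.symm

lemma hasDerivAt_movingFlux (hf : ContDiff ℝ 1 (Function.uncurry f)) {F : ℝ → ℝ} {t x : ℝ}
    (hF : DifferentiableAt ℝ F (x + y t))
    (heq : deriv (fun s => f s (x + y t)) t = -deriv F (x + y t)) :
    HasDerivAt (fun z => F (z + y t) - deriv y t * f t (z + y t)) (-movingTimeDeriv f y t x) x := by
  refine ((hF.hasDerivAt.comp_add_const x (y t)).fun_sub
    (((differentiable_of_uncurry hf t _).hasDerivAt.comp_add_const x (y t)).const_mul
      (deriv y t))).congr_deriv ?_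
  rw [movingTimeDeriv_eq hf, heq]
  ring

end MovingFrame

namespace IsEPwSolution

variable {w : ℝ → ℝ} {n u φ : ℝ → ℝ → ℝ}

lemma neg_one_lt (h : IsEPwSolution w n u φ) (t x : ℝ) : -1 < n t x := by
  linarith [h.dens_pos t x]

lemma solvesPoisson (h : IsEPwSolution w n u φ) (t : ℝ) : SolvesPoisson (n t) (φ t) :=
  ⟨h.reg_phi_space t, h.eq_phi t⟩

lemma differentiable_flux (h : IsEPwSolution w n u φ)
    (hw : ∀ a, -1 < a → DifferentiableAt ℝ w a) (t : ℝ) :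
    Differentiable ℝ fun z => u t z ^ 2 / 2 + w (n t z) + φ t z := fun x =>
  ((((differentiable_of_uncurry h.reg_u t x).fun_pow 2).div_const 2).fun_add
    ((hw _ (h.neg_one_lt t x)).comp x (differentiable_of_uncurry h.reg_n t x))).fun_add
    ((h.solvesPoisson t).hasDerivAt x).differentiableAt

theorem isMovingSolution (h : IsEPwSolution w n u φ) (hw : ∀ a, -1 < a → DifferentiableAt ℝ w a)
    {y : ℝ → ℝ} (hy : ContDiff ℝ 1 y) :
    IsMovingSolution w (deriv y) (fun t x => n t (x + y t)) (fun t x => u t (x + y t))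
      (fun t x => φ t (x + y t)) (movingTimeDeriv n y) (movingTimeDeriv u y) where
  neg_one_lt t x := h.neg_one_lt t _
  continuous_n := h.reg_n.continuous.comp (by
    have := hy.continuous
    fun_prop : Continuous fun q : ℝ × ℝ => (q.1, q.2 + y q.1))
  continuous_u := h.reg_u.continuous.comp (by
    have := hy.continuous
    fun_prop : Continuous fun q : ℝ × ℝ => (q.1, q.2 + y q.1))
  continuous_nt := continuous_movingTimeDeriv h.reg_n hy
  continuous_ut := continuous_movingTimeDeriv h.reg_u hy
  differentiable_n t := (differentiable_of_uncurry h.reg_n t).comp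
    (differentiable_id.add_const (y t))
  differentiable_u t := (differentiable_of_uncurry h.reg_u t).comp
    (differentiable_id.add_const (y t))
  solvesPoisson t := (h.solvesPoisson t).comp_add_const (y t)
  hasDerivAt_n := hasDerivAt_movingTimeDeriv h.reg_n hy
  hasDerivAt_u := hasDerivAt_movingTimeDeriv h.reg_u hy
  hasDerivAt_massFlux t x := hasDerivAt_movingFlux (F := fun z => (1 + n t z) * u t z) h.reg_n
    (((differentiable_of_uncurry h.reg_n t _).const_add 1).fun_mul
      (differentiable_of_uncurry h.reg_u t _)) (h.eq_n t _)
  hasDerivAt_momentumFlux t x := hasDerivAt_movingFlux h.reg_u (h.differentiable_flux hw t _)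
    (h.eq_u t _)

lemma isBoundedMomentumFlow (h : IsEPwSolution w n u φ)
    (hw : ∀ a, -1 < a → DifferentiableAt ℝ w a) {G M : ℝ} (hG : ∀ t x, |w (n t x)| ≤ G)
    (hM : ∀ t a b, a ≤ b → ∫ x in a..b, u t x ^ 2 ≤ M) :
    IsBoundedMomentumFlow G M n u (fun t x => w (n t x)) φ (movingTimeDeriv u fun _ => 0) where
  continuous_u t := (differentiable_of_uncurry h.reg_u t).continuous
  continuous_ut := continuous_movingTimeDeriv h.reg_u contDiff_const
  solvesPoisson := h.solvesPoisson
  continuous_time x := (h.reg_phi_time x).continuous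
  abs_enthalpy_le := hG
  integral_sq_le := hM
  hasDerivAt_time t x := by
    simpa using hasDerivAt_movingTimeDeriv h.reg_u (contDiff_const (c := 0)) t x
  hasDerivAt_flux t x := by
    simpa using hasDerivAt_movingFlux (y := fun _ => 0) h.reg_u
      (h.differentiable_flux hw t (x + 0)) (h.eq_u t (x + 0))

end IsEPwSolution

section TailWeight

/-- A weight that vanishes to the order `R⁻²` on bounded sets, is bounded below where `R ≤ |x|`, and
satisfies the smallness condition of `IsSlowWeight`. -/
def tailWeight (R x : ℝ) : ℝ := (16 + x ^ 2) / (R ^ 2 + x ^ 2)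

variable {R : ℝ}

lemma isSlowWeight_one : IsSlowWeight (fun _ => 1) fun _ => 0 where
  hasDerivAt x := hasDerivAt_const x 1
  continuous_deriv := continuous_const
  nonneg _ := zero_le_one
  le_one _ := le_rfl
  abs_deriv_le _ := by norm_num

lemma IsSlowWeight.integrable_mul {ζ ζ' f : ℝ → ℝ} (hζ : IsSlowWeight ζ ζ') (hf : Integrable f) :
    Integrable fun x => ζ x * f x :=
  hf.bdd_mul (c := 1) hζ.continuous.aestronglyMeasurable <| ae_of_all _ fun x => by
    simpa only [Real.norm_of_nonneg (hζ.nonneg x)] using hζ.le_one x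

lemma isSlowWeight_tailWeight (hR : 4 ≤ R) : IsSlowWeight (tailWeight R)
    fun x => 2 * x * (R ^ 2 - 16) / (R ^ 2 + x ^ 2) ^ 2 := by
  have hR2 : 16 ≤ R ^ 2 := by nlinarith
  have hden : ∀ x, 0 < R ^ 2 + x ^ 2 := fun x => by positivity
  refine ⟨fun x => ?_, ?_, fun x => ?_, fun x => ?_, fun x => ?_⟩
  · have hsq : HasDerivAt (fun x : ℝ => x ^ 2) (2 * x) x := by
      simpa using hasDerivAt_pow 2 x
    refine ((hsq.const_add 16).fun_div (hsq.const_add (R ^ 2)) (hden x).ne').congr_deriv ?_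
    ring
  · exact Continuous.div (by fun_prop) (by fun_prop) fun x => (pow_pos (hden x) 2).ne'
  · exact div_nonneg (by positivity) (hden x).le
  · exact div_le_one_of_le₀ (by linarith) (hden x).le
  · have hnum : |2 * x * (R ^ 2 - 16)| ≤ (16 + x ^ 2) / 4 * (R ^ 2 + x ^ 2) := by
      rw [abs_mul, abs_of_nonneg (sub_nonneg.2 hR2), abs_mul, abs_two]
      refine mul_le_mul ?_ ?_ (sub_nonneg.2 hR2) (by positivity)
      · rw [← sq_abs x]
        linarith [sq_nonneg (|x| - 4)]
      · linarith [sq_nonneg x]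
    rw [abs_div, abs_of_pos (pow_pos (hden x) 2), div_le_iff₀ (pow_pos (hden x) 2), tailWeight]
    refine hnum.trans_eq ?_
    field_simp [(hden x).ne']

lemma sq_div_le_two_mul_tailWeight (hR : 0 < R) {x : ℝ} (hx : |x| ≤ R) :
    (x / R) ^ 2 ≤ 2 * tailWeight R x := by
  have hx2 : x ^ 2 ≤ R ^ 2 := sq_le_sq.2 (hx.trans (le_abs_self R))
  rw [tailWeight, div_pow, ← mul_div_assoc, div_le_div_iff₀ (by positivity) (by positivity)]
  nlinarith [sq_nonneg x]

lemma one_le_two_mul_tailWeight (hR : 0 < R) {x : ℝ} (hx : R ≤ |x|) : 1 ≤ 2 * tailWeight R x := by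
  have hx2 : R ^ 2 ≤ x ^ 2 := sq_le_sq.2 ((abs_of_pos hR).trans_le hx)
  rw [tailWeight, ← mul_div_assoc, one_le_div (by positivity)]
  linarith

lemma tailWeight_le_of_abs_le (hR : 0 < R) {r x : ℝ} (hx : |x| ≤ r) :
    tailWeight R x ≤ (16 + r ^ 2) / R ^ 2 := by
  have hx2 : x ^ 2 ≤ r ^ 2 := sq_le_sq.2 (hx.trans (le_abs_self r))
  exact div_le_div₀ (by positivity) (by linarith) (by positivity) (by linarith [sq_nonneg x])

variable {f : ℝ → ℝ}

lemma intervalIntegral_le_integral {a b : ℝ} (hab : a ≤ b) (hf : ∀ x, 0 ≤ f x)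
    (hi : Integrable f) : ∫ x in a..b, f x ≤ ∫ x, f x := by
  rw [intervalIntegral.integral_of_le hab]
  exact setIntegral_le_integral hi (ae_of_all _ hf)

lemma integral_le_add_tailWeight (hR : 4 ≤ R) (hf : ∀ x, 0 ≤ f x) (hi : Integrable f) :
    ∫ x, f x ≤ (∫ x in (-R)..R, f x) + 2 * ∫ x, tailWeight R x * f x := by
  have hζ := isSlowWeight_tailWeight hR
  have hζi := (hζ.integrable_mul hi).const_mul 2
  have hin := hi.indicator (measurableSet_Ioc (a := -R) (b := R))
  rw [intervalIntegral.integral_of_le (by linarith), ← integral_indicator measurableSet_Ioc,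
    ← integral_const_mul, ← integral_add hin hζi]
  refine integral_mono hi (hin.add hζi) fun x => ?_
  have hnonneg := mul_nonneg (hζ.nonneg x) (hf x)
  by_cases hx : x ∈ Ioc (-R) R
  · simp only [indicator_of_mem hx]
    linarith
  · have hRx : R ≤ |x| := by
      by_contra! hlt
      exact hx ⟨(abs_lt.1 hlt).1, (abs_lt.1 hlt).2.le⟩
    have := mul_le_mul_of_nonneg_right (one_le_two_mul_tailWeight (by linarith) hRx) (hf x)
    simp only [indicator_of_notMem hx]
    linarith

lemma integral_tailWeight_comp_add_le (hR : 4 ≤ R) (hf : ∀ x, 0 ≤ f x) (hi : Integrable f)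
    (r y : ℝ) : ∫ x, tailWeight R x * f (x + y)
      ≤ (∫ x in {x | r < |x - y|}, f x) + (16 + r ^ 2) / R ^ 2 * ∫ x, f x := by
  have hζ := isSlowWeight_tailWeight hR
  have hmeas : MeasurableSet {x | r < |x - y|} :=
    (isOpen_lt continuous_const (by fun_prop)).measurableSet
  have hfy := hi.comp_add_right y
  have hin := (hi.indicator hmeas).comp_add_right y
  rw [← integral_indicator hmeas, ← integral_add_right_eq_self f y,
    ← integral_add_right_eq_self ({x | r < |x - y|}.indicator f) y, ← integral_const_mul,
    ← integral_add hin (hfy.const_mul _)]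
  refine integral_mono (hζ.integrable_mul hfy) (hin.add (hfy.const_mul _)) fun x => ?_
  have hfar : 0 ≤ (16 + r ^ 2) / R ^ 2 * f (x + y) := mul_nonneg (by positivity) (hf _)
  by_cases hx : x + y ∈ {x | r < |x - y|}
  · have := mul_le_mul_of_nonneg_right (hζ.le_one x) (hf (x + y))
    simp only [indicator_of_mem hx]
    linarith
  · have hxr : |x| ≤ r := by simpa using hx
    have := mul_le_mul_of_nonneg_right (tailWeight_le_of_abs_le (R := R) (by linarith) hxr)
      (hf (x + y))
    simp only [indicator_of_notMem hx]
    linarith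

end TailWeight

section SmallProfile

lemma Rfun_eq (x : ℝ) : Rfun x = x * qfun x - (qfun x - x) := by
  have h : ∀ s, HasDerivAt (fun s => Real.exp s - s) (qfun s) s := fun s =>
    (Real.hasDerivAt_exp s).fun_sub (hasDerivAt_id' s)
  rw [Rfun, integral_eq_sub_of_continuous_deriv h continuous_qfun, qfun, Real.exp_zero]
  ring

lemma continuous_Rfun : Continuous Rfun := by
  have := continuous_qfun
  rw [funext Rfun_eq]
  fun_prop

lemma Rfun_nonneg (x : ℝ) : 0 ≤ Rfun x := by
  have h := mul_le_mul_of_nonneg_right (Real.add_one_le_exp (-x)) (Real.exp_pos x).le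
  rw [← Real.exp_add, neg_add_cancel, Real.exp_zero] at h
  rw [Rfun_eq, qfun]
  linarith

lemma self_le_qfun (x : ℝ) : x ≤ qfun x := by
  rw [qfun]
  linarith [Real.add_one_le_exp x]

lemma Rfun_le {x : ℝ} (hx : |x| ≤ 1 / 4) : Rfun x ≤ 2 * x ^ 2 := by
  have h : |x * (qfun x - x)| ≤ 1 / 4 * x ^ 2 := by
    rw [abs_mul]
    exact mul_le_mul hx (abs_qfun_sub_self_le (hx.trans (by norm_num))) (abs_nonneg _) (by norm_num)
  rw [Rfun_eq]
  linarith [le_of_abs_le h, self_le_qfun x, sq_nonneg x]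

lemma eq_zero_of_integral_sq_add_sq_nonpos {f g : ℝ → ℝ} (hf : Continuous f) (hg : Continuous g)
    (hi : Integrable fun x => f x ^ 2 + g x ^ 2) (hle : ∫ x, (f x ^ 2 + g x ^ 2) ≤ 0) (x : ℝ) :
    f x = 0 ∧ g x = 0 := by
  have hnonneg : ∀ x, 0 ≤ f x ^ 2 + g x ^ 2 := fun x => by positivity
  have hae := (integral_eq_zero_iff_of_nonneg hnonneg hi).1
    (hle.antisymm (integral_nonneg hnonneg))
  have hx : f x ^ 2 + g x ^ 2 = 0 :=
    congrFun ((((hf.pow 2).add (hg.pow 2)).ae_eq_iff_eq volume continuous_const).1 hae) x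
  exact ⟨by nlinarith [sq_nonneg (f x), sq_nonneg (g x)],
    by nlinarith [sq_nonneg (f x), sq_nonneg (g x)]⟩

/-- A finite-energy state `(n, u, φ)` of size `θ`, for which the enthalpy `w n` and the internal
energy `Wfun w n` are within relative distance `θ` of their linearizations `k n` and `k n² / 2`. -/
structure IsSmallProfile (k θ : ℝ) (w n u φ : ℝ → ℝ) : Prop where
  k_pos : 0 < k
  θ_pos : 0 < θ
  θ_le : θ ≤ 1 / 4
  θ_le_k : θ ≤ k / 4
  continuous_n : Continuous n
  continuous_u : Continuous u
  continuous_enthalpy : Continuous fun x => w (n x)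
  continuous_internal : Continuous fun x => Wfun w (n x)
  solvesPoisson : SolvesPoisson n φ
  abs_n_le : ∀ x, |n x| ≤ θ
  abs_φ_le : ∀ x, |φ x| ≤ θ
  abs_enthalpy_sub_le : ∀ x, |w (n x) - k * n x| ≤ θ * |n x|
  abs_internal_sub_le : ∀ x, |Wfun w (n x) - k / 2 * n x ^ 2| ≤ θ * n x ^ 2
  integrable : Integrable fun x => n x ^ 2 + u x ^ 2

namespace IsSmallProfile

variable {k θ : ℝ} {w n u φ : ℝ → ℝ}

lemma comp_add_const (h : IsSmallProfile k θ w n u φ) (y : ℝ) :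
    IsSmallProfile k θ w (fun x => n (x + y)) (fun x => u (x + y)) fun x => φ (x + y) where
  k_pos := h.k_pos
  θ_pos := h.θ_pos
  θ_le := h.θ_le
  θ_le_k := h.θ_le_k
  continuous_n := h.continuous_n.comp (continuous_add_const y)
  continuous_u := h.continuous_u.comp (continuous_add_const y)
  continuous_enthalpy := h.continuous_enthalpy.comp (continuous_add_const y)
  continuous_internal := h.continuous_internal.comp (continuous_add_const y)
  solvesPoisson := h.solvesPoisson.comp_add_const y
  abs_n_le _ := h.abs_n_le _
  abs_φ_le _ := h.abs_φ_le _
  abs_enthalpy_sub_le _ := h.abs_enthalpy_sub_le _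
  abs_internal_sub_le _ := h.abs_internal_sub_le _
  integrable := h.integrable.comp_add_right y

lemma integrable_sq (h : IsSmallProfile k θ w n u φ) : Integrable fun x => n x ^ 2 :=
  h.integrable.mono' (h.continuous_n.pow 2).aestronglyMeasurable <| ae_of_all _ fun x => by
    rw [Real.norm_of_nonneg (sq_nonneg _)]
    linarith [sq_nonneg (u x)]

section Elliptic

variable {ζ ζ' : ℝ → ℝ}

lemma integrable_weight_poisson (h : IsSmallProfile k θ w n u φ) (hζ : IsSlowWeight ζ ζ') :
    Integrable fun x => ζ x * (φ x ^ 2 + deriv φ x ^ 2) :=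
  hζ.integrable_poisson h.solvesPoisson h.continuous_n (fun x => (h.abs_φ_le x).trans h.θ_le)
    (hζ.integrable_mul h.integrable_sq)

lemma integral_weight_poisson_le (h : IsSmallProfile k θ w n u φ) (hζ : IsSlowWeight ζ ζ') :
    ∫ x, ζ x * (φ x ^ 2 + deriv φ x ^ 2) ≤ 5 * ∫ x, ζ x * (n x ^ 2 + u x ^ 2) := by
  have hn := hζ.integrable_mul h.integrable_sq
  refine (hζ.integral_poisson_le h.solvesPoisson h.continuous_n
    (fun x => (h.abs_φ_le x).trans h.θ_le) hn).trans (mul_le_mul_of_nonneg_left ?_ (by norm_num))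
  exact integral_mono hn (hζ.integrable_mul h.integrable) fun x =>
    mul_le_mul_of_nonneg_left (le_add_of_nonneg_right (sq_nonneg _)) (hζ.nonneg x)

lemma integrable_poisson (h : IsSmallProfile k θ w n u φ) :
    Integrable fun x => φ x ^ 2 + deriv φ x ^ 2 := by
  simpa using h.integrable_weight_poisson isSlowWeight_one

lemma integral_poisson_le (h : IsSmallProfile k θ w n u φ) :
    ∫ x, (φ x ^ 2 + deriv φ x ^ 2) ≤ 5 * ∫ x, (n x ^ 2 + u x ^ 2) := by
  simpa using h.integral_weight_poisson_le isSlowWeight_one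

end Elliptic

section Energy

lemma abs_internal_le (h : IsSmallProfile k θ w n u φ) (x : ℝ) :
    |Wfun w (n x) - k / 2 * n x ^ 2| ≤ k / 4 * n x ^ 2 :=
  (h.abs_internal_sub_le x).trans (mul_le_mul_of_nonneg_right h.θ_le_k (sq_nonneg _))

lemma le_energyDensity (h : IsSmallProfile k θ w n u φ) (x : ℝ) :
    min (1 / 4) (k / 4) * (n x ^ 2 + u x ^ 2) ≤ energyDensity w n u φ x := by
  have hu := mul_le_mul_of_nonneg_right (min_le_left (1 / 4) (k / 4)) (sq_nonneg (u x))
  have hn := mul_le_mul_of_nonneg_right (min_le_right (1 / 4) (k / 4)) (sq_nonneg (n x))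
  have hkin : 3 / 4 * u x ^ 2 ≤ (1 + n x) * u x ^ 2 := mul_le_mul_of_nonneg_right
    (by linarith [neg_le_of_abs_le (h.abs_n_le x), h.θ_le]) (sq_nonneg _)
  rw [energyDensity]
  linarith [neg_le_of_abs_le (h.abs_internal_le x), sq_nonneg (deriv φ x), Rfun_nonneg (φ x),
    sq_nonneg (u x)]

lemma energyDensity_le (h : IsSmallProfile k θ w n u φ) (x : ℝ) :
    energyDensity w n u φ x
      ≤ (1 + k) * (n x ^ 2 + u x ^ 2) + 2 * (φ x ^ 2 + deriv φ x ^ 2) := by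
  have hkin : (1 + n x) * u x ^ 2 ≤ 2 * u x ^ 2 := mul_le_mul_of_nonneg_right
    (by linarith [le_of_abs_le (h.abs_n_le x), h.θ_le]) (sq_nonneg _)
  have hR := Rfun_le ((h.abs_φ_le x).trans h.θ_le)
  have hkn := mul_nonneg h.k_pos.le (sq_nonneg (n x))
  have hku := mul_nonneg h.k_pos.le (sq_nonneg (u x))
  rw [energyDensity]
  linarith [le_of_abs_le (h.abs_internal_le x), sq_nonneg (deriv φ x), sq_nonneg (n x)]

lemma integrable_energyDensity (h : IsSmallProfile k θ w n u φ) :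
    Integrable (energyDensity w n u φ) := by
  have hW := h.continuous_internal
  have hR := continuous_Rfun.comp h.solvesPoisson.continuous
  have hcont : Continuous (energyDensity w n u φ) :=
    (((((h.continuous_n.const_add 1).const_mul (1 / 2)).mul (h.continuous_u.pow 2)).add hW).add
      ((h.solvesPoisson.continuous_deriv.pow 2).const_mul (1 / 2))).add hR
  refine ((h.integrable.const_mul (1 + k)).add (h.integrable_poisson.const_mul 2)).mono'
    hcont.aestronglyMeasurable (ae_of_all _ fun x => ?_)
  have hk : 0 ≤ min (1 / 4) (k / 4) := le_min (by norm_num) (by linarith [h.k_pos])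
  rw [Real.norm_of_nonneg ((mul_nonneg hk (by positivity)).trans (h.le_energyDensity x))]
  exact h.energyDensity_le x

lemma le_energy (h : IsSmallProfile k θ w n u φ) :
    min (1 / 4) (k / 4) * (∫ x, (n x ^ 2 + u x ^ 2)) ≤ energy w n u φ := by
  rw [energy, ← integral_const_mul]
  exact integral_mono (h.integrable.const_mul _) h.integrable_energyDensity h.le_energyDensity

lemma energy_le (h : IsSmallProfile k θ w n u φ) :
    energy w n u φ ≤ (11 + k) * ∫ x, (n x ^ 2 + u x ^ 2) := by
  have hbound : energy w n u φ
      ≤ ∫ x, ((1 + k) * (n x ^ 2 + u x ^ 2) + 2 * (φ x ^ 2 + deriv φ x ^ 2)) :=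
    integral_mono h.integrable_energyDensity
      ((h.integrable.const_mul (1 + k)).add (h.integrable_poisson.const_mul 2)) h.energyDensity_le
  rw [integral_add (h.integrable.const_mul _) (h.integrable_poisson.const_mul _),
    integral_const_mul, integral_const_mul] at hbound
  linarith [h.integral_poisson_le]

end Energy

/- The energy is comparable to the mass, so its conservation keeps the mass from decaying. -/
lemma integral_le_of_energy_eq {n' u' φ' : ℝ → ℝ} (h : IsSmallProfile k θ w n u φ)
    (h' : IsSmallProfile k θ w n' u' φ') (heq : energy w n u φ = energy w n' u' φ') :
    min (1 / 4) (k / 4) / (11 + k) * (∫ x, (n x ^ 2 + u x ^ 2)) ≤ ∫ x, (n' x ^ 2 + u' x ^ 2) := by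
  have hk := h.k_pos
  rw [div_mul_eq_mul_div, div_le_iff₀ (by positivity), mul_comm _ (11 + k)]
  exact (h.le_energy.trans_eq heq).trans h'.energy_le

lemma eq_zero_of_integral_nonpos (h : IsSmallProfile k θ w n u φ)
    (h0 : ∫ x, (n x ^ 2 + u x ^ 2) ≤ 0) (x : ℝ) : n x = 0 ∧ u x = 0 ∧ φ x = 0 := by
  have hnu := eq_zero_of_integral_sq_add_sq_nonpos h.continuous_n h.continuous_u h.integrable h0 x
  have hφ := eq_zero_of_integral_sq_add_sq_nonpos h.solvesPoisson.continuous
    h.solvesPoisson.continuous_deriv h.integrable_poisson (by linarith [h.integral_poisson_le]) x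
  exact ⟨hnu.1, hnu.2, hφ.1⟩

section Localization

variable {R : ℝ}

lemma integral_tail_le (h : IsSmallProfile k θ w n u φ) (hR : 4 ≤ R) :
    ∫ x in (-R)..R, (x / R) ^ 2 * (n x ^ 2 + u x ^ 2 + (φ x ^ 2 + deriv φ x ^ 2))
      ≤ 12 * ∫ x, tailWeight R x * (n x ^ 2 + u x ^ 2) := by
  have hζ := isSlowWeight_tailWeight hR
  have hn := h.continuous_n
  have hu := h.continuous_u
  have hφ := h.solvesPoisson.continuous
  have hφ' := h.solvesPoisson.continuous_deriv
  have hi : Integrable fun x => 2 * (tailWeight R x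
      * (n x ^ 2 + u x ^ 2 + (φ x ^ 2 + deriv φ x ^ 2))) :=
    (hζ.integrable_mul (h.integrable.add h.integrable_poisson)).const_mul 2
  calc ∫ x in (-R)..R, (x / R) ^ 2 * (n x ^ 2 + u x ^ 2 + (φ x ^ 2 + deriv φ x ^ 2))
      ≤ ∫ x in (-R)..R, 2 * (tailWeight R x * (n x ^ 2 + u x ^ 2 + (φ x ^ 2 + deriv φ x ^ 2))) := by
        refine intervalIntegral.integral_mono_on (by linarith)
          (Continuous.intervalIntegrable (by fun_prop) _ _) hi.intervalIntegrable fun x hx => ?_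
        have hx := sq_div_le_two_mul_tailWeight (by linarith) (abs_le.2 hx)
        exact (mul_le_mul_of_nonneg_right hx (by positivity)).trans_eq (mul_assoc _ _ _)
    _ ≤ ∫ x, 2 * (tailWeight R x * (n x ^ 2 + u x ^ 2 + (φ x ^ 2 + deriv φ x ^ 2))) :=
        intervalIntegral_le_integral (by linarith)
          (fun x => mul_nonneg zero_le_two (mul_nonneg (hζ.nonneg x) (by positivity))) hi
    _ = 2 * ((∫ x, tailWeight R x * (n x ^ 2 + u x ^ 2))
          + ∫ x, tailWeight R x * (φ x ^ 2 + deriv φ x ^ 2)) := by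
        rw [integral_const_mul, ← integral_add (hζ.integrable_mul h.integrable)
          (h.integrable_weight_poisson hζ)]
        simp only [mul_add]
    _ ≤ 12 * ∫ x, tailWeight R x * (n x ^ 2 + u x ^ 2) := by
        linarith [h.integral_weight_poisson_le hζ]

theorem isLocalizedState (h : IsSmallProfile k θ w n u φ) (hR : 4 ≤ R) (hRθ : 1 / R ≤ θ)
    (htail : ∫ x, tailWeight R x * (n x ^ 2 + u x ^ 2) ≤ θ * ∫ x, (n x ^ 2 + u x ^ 2)) :
    IsLocalizedState k θ R (∫ x, (n x ^ 2 + u x ^ 2)) n u φ (fun x => w (n x))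
      fun x => Wfun w (n x) where
  k_pos := h.k_pos
  θ_pos := h.θ_pos
  θ_le := h.θ_le
  R_pos := by linarith
  inv_R_le := hRθ
  continuous_n := h.continuous_n
  continuous_u := h.continuous_u
  continuous_enthalpy := h.continuous_enthalpy
  continuous_internal := h.continuous_internal
  solvesPoisson := h.solvesPoisson
  abs_n_le := h.abs_n_le
  abs_φ_le := h.abs_φ_le
  abs_enthalpy_sub_le := h.abs_enthalpy_sub_le
  abs_internal_sub_le := h.abs_internal_sub_le
  integral_sq_le := intervalIntegral_le_integral (by linarith) (fun x => by positivity) h.integrable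
  integral_poisson_le := (intervalIntegral_le_integral (by linarith) (fun x => by positivity)
    h.integrable_poisson).trans h.integral_poisson_le
  integral_tail_le := (h.integral_tail_le hR).trans (by linarith)

end Localization

end IsSmallProfile

end SmallProfile

section Rigidity

variable {k θ ε : ℝ} {w : ℝ → ℝ}

lemma integral_sq_eq_toReal_eLpNorm_sq {f : ℝ → ℝ} (hf : MemLp f 2) :
    ∫ x, f x ^ 2 = (eLpNorm f 2 volume).toReal ^ 2 := by
  have hnonneg : 0 ≤ ∫ x, f x ^ 2 := integral_nonneg fun x => sq_nonneg _
  rw [hf.eLpNorm_eq_integral_rpow_norm two_ne_zero ENNReal.ofNat_ne_top]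
  simp only [ENNReal.toReal_ofNat, Real.rpow_ofNat, Real.norm_eq_abs, sq_abs]
  rw [ENNReal.toReal_ofReal (by positivity), ← Real.rpow_natCast, ← Real.rpow_mul hnonneg]
  norm_num

lemma integrable_sq_and_integral_sq_le {f : ℝ → ℝ} (hf : Continuous f) {C : ℝ≥0∞} (hC : C ≠ ⊤)
    (h : eLpNorm f 2 volume ≤ C) :
    Integrable (fun x => f x ^ 2) ∧ ∫ x, f x ^ 2 ≤ C.toReal ^ 2 := by
  have hmem : MemLp f 2 := ⟨hf.aestronglyMeasurable, h.trans_lt hC.lt_top⟩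
  refine ⟨hmem.integrable_sq, (integral_sq_eq_toReal_eLpNorm_sq hmem).trans_le ?_⟩
  gcongr

lemma abs_le_of_eLpNorm_top_le {f : ℝ → ℝ} (hf : Continuous f) {δ : ℝ} (hδ : 0 ≤ δ)
    (h : eLpNorm f ⊤ volume ≤ ENNReal.ofReal δ) (x : ℝ) : |f x| ≤ δ := by
  have hae : ∀ᵐ x, |f x| ≤ δ := by
    filter_upwards [ae_le_eLpNormEssSup (f := f) (μ := volume)] with x hx
    rw [eLpNorm_exponent_top] at h
    rw [← Real.norm_eq_abs, ← ENNReal.ofReal_le_ofReal_iff hδ, ofReal_norm]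
    exact hx.trans h
  have hclosed : IsClosed {x | |f x| ≤ δ} := isClosed_le hf.abs continuous_const
  have huniv : {x | |f x| ≤ δ} = univ := hclosed.ae_eq_univ_iff_eq.1 (eventuallyEq_univ.2 hae)
  exact eq_univ_iff_forall.1 huniv x

lemma exists_forall_abs_sub_mul_le (hw0 : w 0 = 0) (hk : HasDerivAt w k 0) (hθ : 0 < θ) :
    ∃ δ, 0 < δ ∧ ∀ s, |s| ≤ δ → |w s - k * s| ≤ θ * |s| := by
  have hlittle := (hasDerivAt_iff_isLittleO_nhds_zero.1 hk).bound hθ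
  obtain ⟨δ, hδ, hball⟩ := Metric.nhds_basis_closedBall.eventually_iff.1 hlittle
  refine ⟨δ, hδ, fun s hs => ?_⟩
  simpa [hw0, mul_comm k] using hball (mem_closedBall_zero_iff.2 hs)

lemma abs_Wfun_sub_le (hw : ∀ a, -1 < a → DifferentiableAt ℝ w a) {δ : ℝ} (hδ : δ < 1)
    (hθ : 0 ≤ θ) (hlin : ∀ s, |s| ≤ δ → |w s - k * s| ≤ θ * |s|) {s : ℝ} (hs : |s| ≤ δ) :
    |Wfun w s - k / 2 * s ^ 2| ≤ θ * s ^ 2 := by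
  have hderiv : ∀ z ∈ Icc (-|s|) |s|, HasDerivWithinAt (fun z => Wfun w z - k / 2 * z ^ 2)
      (w z - k * z) (Icc (-|s|) |s|) z := fun z hz => by
    refine (((hasDerivAt_Wfun hw (by linarith [hz.1])).fun_sub
      ((hasDerivAt_pow 2 z).const_mul (k / 2))).congr_deriv ?_).hasDerivWithinAt
    norm_num
    ring
  have hbound : ∀ z ∈ Icc (-|s|) |s|, ‖w z - k * z‖ ≤ θ * |s| := fun z hz =>
    (hlin z ((abs_le.2 hz).trans hs)).trans (mul_le_mul_of_nonneg_left (abs_le.2 hz) hθ)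
  have hmean := (convex_Icc (-|s|) |s|).norm_image_sub_le_of_norm_hasDerivWithin_le hderiv hbound
    (abs_le.1 ((abs_zero (α := ℝ)).trans_le (abs_nonneg s))) (abs_le.1 le_rfl)
  simpa [Wfun, mul_assoc, ← sq] using hmean

lemma div_sqrt_one_add_le (hk : 0 ≤ k) : k / √(1 + k) ≤ k :=
  div_le_self hk (Real.one_le_sqrt.2 (by linarith))

/- The speed `k / √(1 + k)` is where the quadratic form on the right degenerates. -/
lemma subsonic_coercive (hk : 0 < k) (hε : 0 < ε) {c : ℝ} (hc : |c| ≤ k / √(1 + k) - ε) (p q : ℝ) :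
    ε / (2 * √(1 + k)) * (p ^ 2 + q ^ 2)
      ≤ k / (2 * (1 + k)) * q ^ 2 + k / 2 * p ^ 2 - c * (p * q) := by
  have hs : 0 < √(1 + k) := Real.sqrt_pos.2 (by linarith)
  have hs2 : √(1 + k) ^ 2 = 1 + k := Real.sq_sqrt (by linarith)
  have hs1 : 1 ≤ √(1 + k) := Real.one_le_sqrt.2 (by linarith)
  set s := √(1 + k)
  have hcpq : c * (p * q) ≤ (k / s - ε) * (|p| * |q|) := by
    rw [← abs_mul]
    exact (le_abs_self _).trans ((abs_mul c _).trans_le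
      (mul_le_mul_of_nonneg_right hc (abs_nonneg _)))
  have hamgm : 0 ≤ (k - ε * s) / (2 * s ^ 2) * (|q| - s * |p|) ^ 2 := by
    have : ε * s ≤ k := by
      rw [← le_div_iff₀ hs]
      linarith [abs_nonneg c]
    exact mul_nonneg (div_nonneg (by linarith) (by positivity)) (sq_nonneg _)
  have hsplit : (k - ε * s) / (2 * s ^ 2) * (|q| - s * |p|) ^ 2 = k / (2 * s ^ 2) * q ^ 2
      + k / 2 * p ^ 2 - (k / s - ε) * (|p| * |q|) - ε / (2 * s) * (q ^ 2 + s ^ 2 * p ^ 2) := by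
    rw [← sq_abs p, ← sq_abs q]
    field_simp
    ring
  have hp : ε / (2 * s) * p ^ 2 ≤ ε / (2 * s) * (s ^ 2 * p ^ 2) :=
    mul_le_mul_of_nonneg_left (le_mul_of_one_le_left (sq_nonneg p) (one_le_pow₀ hs1))
      (by positivity)
  rw [← hs2]
  linarith

lemma L2CompactWith.exists_integral_tailWeight_le {n u : ℝ → ℝ → ℝ} {y : ℝ → ℝ}
    (h : L2CompactWith n u y) (hi : ∀ t, Integrable fun x => n t x ^ 2 + u t x ^ 2) {D : ℝ}
    (hD : ∀ t, ∫ x, (n t x ^ 2 + u t x ^ 2) ≤ D) (hθ : 0 < θ) {η : ℝ} (hη : 0 < η) :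
    ∃ R, 4 ≤ R ∧ 1 / R ≤ θ ∧ ∀ t,
      ∫ x, tailWeight R x * (n t (x + y t) ^ 2 + u t (x + y t) ^ 2) ≤ η := by
  obtain ⟨r, -, hr⟩ := h (η / 2) (half_pos hη)
  have hfar : Tendsto (fun R : ℝ => (16 + r ^ 2) * D / R ^ 2) atTop (𝓝 0) :=
    tendsto_const_nhds.div_atTop (tendsto_pow_atTop two_ne_zero)
  have hinv : Tendsto (fun R : ℝ => 1 / R) atTop (𝓝 0) := tendsto_const_nhds.div_atTop tendsto_id
  obtain ⟨R, hR, hRθ, hRfar⟩ := ((eventually_ge_atTop 4).and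
    ((hinv.eventually_le_const hθ).and (hfar.eventually_le_const (half_pos hη)))).exists
  refine ⟨R, hR, hRθ, fun t => ?_⟩
  have htail := integral_tailWeight_comp_add_le hR (fun x => by positivity) (hi t) r (y t)
  have hmass : (16 + r ^ 2) / R ^ 2 * ∫ x, (n t x ^ 2 + u t x ^ 2) ≤ (16 + r ^ 2) * D / R ^ 2 := by
    rw [div_mul_eq_mul_div]
    gcongr
    exact hD t
  linarith [hr t]

namespace IsEPwSolution

variable {n u φ : ℝ → ℝ → ℝ} {y : ℝ → ℝ} {D : ℝ}

lemma isSmallProfile (h : IsEPwSolution w n u φ) (hw : ∀ a, -1 < a → DifferentiableAt ℝ w a)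
    (hk : 0 < k) (hθ : 0 < θ) (hθ4 : θ ≤ 1 / 4) (hθk : θ ≤ k / 4) {δ : ℝ} (hδ : 0 ≤ δ)
    (hδθ : δ ≤ θ / 2) (hlin : ∀ s, |s| ≤ δ → |w s - k * s| ≤ θ * |s|) (hn : ∀ t x, |n t x| ≤ δ)
    (hn2 : ∀ t, Integrable fun x => n t x ^ 2) (hu2 : ∀ t, Integrable fun x => u t x ^ 2)
    (hD : ∀ t, ∫ x, u t x ^ 2 ≤ D) (t : ℝ) : IsSmallProfile k θ w (n t) (u t) (φ t) := by
  have henthalpy : ∀ t x, |w (n t x)| ≤ (k + θ) * δ := fun t x =>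
    calc |w (n t x)| = |w (n t x) - k * n t x + k * n t x| := by rw [sub_add_cancel]
      _ ≤ θ * |n t x| + k * |n t x| := (abs_add_le _ _).trans
          (add_le_add (hlin _ (hn t x)) (by rw [abs_mul, abs_of_pos hk]))
      _ ≤ (k + θ) * δ := by
          rw [← add_mul, add_comm]
          exact mul_le_mul_of_nonneg_left (hn t x) (by positivity)
  have hflow := h.isBoundedMomentumFlow hw henthalpy fun t a b hab =>
    (intervalIntegral_le_integral hab (fun _ => sq_nonneg _) (hu2 t)).trans (hD t)
  have hnc := (differentiable_of_uncurry h.reg_n t).continuous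
  exact
    { k_pos := hk
      θ_pos := hθ
      θ_le := hθ4
      θ_le_k := hθk
      continuous_n := hnc
      continuous_u := (differentiable_of_uncurry h.reg_u t).continuous
      continuous_enthalpy := continuous_iff_continuousAt.2 fun x =>
        (hw _ (h.neg_one_lt t x)).continuousAt.comp hnc.continuousAt
      continuous_internal := continuous_iff_continuousAt.2 fun x =>
        (hasDerivAt_Wfun hw (h.neg_one_lt t x)).continuousAt.comp hnc.continuousAt
      solvesPoisson := h.solvesPoisson t
      abs_n_le := fun x => by linarith [hn t x]
      abs_φ_le := fun x => by
        linarith [hflow.abs_potential_le hδ (by linarith) hn t x]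
      abs_enthalpy_sub_le := fun x => hlin _ (hn t x)
      abs_internal_sub_le := fun x => abs_Wfun_sub_le hw (by linarith) hθ.le hlin (hn t x)
      integrable := (hn2 t).add (hu2 t) }

lemma isSmallProfile_and_integral_le_of_eLpNorm_le (h : IsEPwSolution w n u φ)
    (hw : ∀ a, -1 < a → DifferentiableAt ℝ w a) (hk : 0 < k) (hθ : 0 < θ) (hθ4 : θ ≤ 1 / 4)
    (hθk : θ ≤ k / 4) {δ : ℝ} (hδ : 0 ≤ δ) (hδθ : δ ≤ θ / 2)
    (hlin : ∀ s, |s| ≤ δ → |w s - k * s| ≤ θ * |s|)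
    (hn : ∀ t, eLpNorm (n t) 2 volume + eLpNorm (n t) ⊤ volume ≤ ENNReal.ofReal δ)
    {C : ℝ≥0∞} (hC : C ≠ ⊤) (hu : ∀ t, eLpNorm (u t) 2 volume ≤ C) (t : ℝ) :
    IsSmallProfile k θ w (n t) (u t) (φ t) ∧
      ∫ x, (n t x ^ 2 + u t x ^ 2) ≤ (ENNReal.ofReal δ).toReal ^ 2 + C.toReal ^ 2 := by
  have hnc : ∀ t, Continuous (n t) := fun t => (differentiable_of_uncurry h.reg_n t).continuous
  have hn2 := fun t => integrable_sq_and_integral_sq_le (hnc t) ENNReal.ofReal_ne_top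
    (le_self_add.trans (hn t))
  have hu2 := fun t => integrable_sq_and_integral_sq_le
    (differentiable_of_uncurry h.reg_u t).continuous hC (hu t)
  refine ⟨h.isSmallProfile hw hk hθ hθ4 hθk hδ hδθ hlin
    (fun t => abs_le_of_eLpNorm_top_le (hnc t) hδ (le_add_self.trans (hn t)))
    (fun t => (hn2 t).1) (fun t => (hu2 t).1) (fun t => (hu2 t).2) t, ?_⟩
  rw [integral_add (hn2 t).1 (hu2 t).1]
  exact add_le_add (hn2 t).2 (hu2 t).2

/- Along a localized solution of mass at least `e` the virial would grow at a definite rate. -/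
theorem false_of_le_integral (h : IsEPwSolution w n u φ)
    (hw : ∀ a, -1 < a → DifferentiableAt ℝ w a) (hy : ContDiff ℝ 1 y) (hcomp : L2CompactWith n u y)
    (hsmall : ∀ t, IsSmallProfile k θ w (n t) (u t) (φ t))
    (hD : ∀ t, ∫ x, (n t x ^ 2 + u t x ^ 2) ≤ D) (hε : 0 < ε)
    (hθε : 501 * (1 + k) * θ ≤ ε / (2 * √(1 + k)) / 4)
    (hc : ∀ t, |deriv y t| ≤ k / √(1 + k) - ε) {e : ℝ} (he : 0 < e)
    (hmass : ∀ t, e ≤ ∫ x, (n t x ^ 2 + u t x ^ 2)) : False := by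
  have hk := (hsmall 0).k_pos
  have hθ := (hsmall 0).θ_pos
  have hθ4 := (hsmall 0).θ_le
  have hν : 0 < ε / (2 * √(1 + k)) := by positivity
  obtain ⟨R, hR, hRθ, htail⟩ := hcomp.exists_integral_tailWeight_le (fun t => (hsmall t).integrable)
    hD hθ (mul_pos hθ he)
  have hshift : ∀ t, ∫ x, (n t (x + y t) ^ 2 + u t (x + y t) ^ 2) = ∫ x, (n t x ^ 2 + u t x ^ 2) :=
    fun t => integral_add_right_eq_self (fun x => n t x ^ 2 + u t x ^ 2) (y t)
  have hmoving := fun t => (hsmall t).comp_add_const (y t)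
  have htail' : ∀ t, ∫ x, tailWeight R x * (n t (x + y t) ^ 2 + u t (x + y t) ^ 2)
      ≤ θ * ∫ x, (n t (x + y t) ^ 2 + u t (x + y t) ^ 2) := fun t =>
    (htail t).trans (mul_le_mul_of_nonneg_left ((hmass t).trans_eq (hshift t).symm) hθ.le)
  refine (h.isMovingSolution hw hy).false_of_isLocalizedState (D := D)
    (m := ε / (2 * √(1 + k)) * e / 4) hw (fun t => (hmoving t).isLocalizedState hR hRθ (htail' t))
    (fun t => by linarith [hc t, div_sqrt_one_add_le hk.le])
    (fun t => subsonic_coercive hk hε (hc t)) (fun t => (hshift t).trans_le (hD t))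
    (by positivity) fun t => ?_
  set S := ∫ x, (n t (x + y t) ^ 2 + u t (x + y t) ^ 2)
  have heS : e ≤ S := (hmass t).trans_eq (hshift t).symm
  have hwindow : S / 2 ≤ ∫ x in (-R)..R, (n t (x + y t) ^ 2 + u t (x + y t) ^ 2) := by
    have hsplit := integral_le_add_tailWeight hR (fun x => by positivity) (hmoving t).integrable
    have hθS : θ * S ≤ 1 / 4 * S := mul_le_mul_of_nonneg_right hθ4 (he.le.trans heS)
    linarith [htail' t]
  have hmain := mul_le_mul_of_nonneg_left hwindow hν.le
  have herror := mul_le_mul_of_nonneg_right hθε (he.le.trans heS)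
  have hlower := mul_le_mul_of_nonneg_left heS hν.le
  linarith

theorem eq_zero_of_isSmallProfile (h : IsEPwSolution w n u φ)
    (hw : ∀ a, -1 < a → DifferentiableAt ℝ w a) (hy : ContDiff ℝ 1 y) (hcomp : L2CompactWith n u y)
    (hcons : ConservesEnergy w n u φ)
    (hsmall : ∀ t, IsSmallProfile k θ w (n t) (u t) (φ t))
    (hD : ∀ t, ∫ x, (n t x ^ 2 + u t x ^ 2) ≤ D) (hε : 0 < ε)
    (hθε : 501 * (1 + k) * θ ≤ ε / (2 * √(1 + k)) / 4)
    (hc : ∀ t, |deriv y t| ≤ k / √(1 + k) - ε) (t x : ℝ) : n t x = 0 ∧ u t x = 0 ∧ φ t x = 0 := by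
  refine (hsmall t).eq_zero_of_integral_nonpos (not_lt.1 fun hpos => ?_) x
  have hk := (hsmall t).k_pos
  exact h.false_of_le_integral hw hy hcomp hsmall hD hε hθε hc (by positivity)
    fun s => (hsmall t).integral_le_of_energy_eq (hsmall s) (hcons t s)

end IsEPwSolution

lemma exists_pos_le_and_mul_le {a b C : ℝ} (ha : 0 < a) (hb : 0 < b) (hC : 0 < C) :
    ∃ θ, 0 < θ ∧ θ ≤ a ∧ C * θ ≤ b :=
  ⟨min a (b / C), by positivity, min_le_left _ _,
    (le_div_iff₀' hC).1 (min_le_right a (b / C))⟩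

theorem test_general (w : ℝ → ℝ) (hw0 : w 0 = 0) (hw : ∀ a, -1 < a → DifferentiableAt ℝ w a)
    (k : ℝ) (hk : 0 < k) (hwk : HasDerivAt w k 0) (ε : ℝ) (hε : 0 < ε) :
    ∃ δ : ℝ, 0 < δ ∧
      ∀ (n u φ : ℝ → ℝ → ℝ) (y : ℝ → ℝ),
        IsEPwSolution w n u φ →
        ContDiff ℝ 1 y →
        L2CompactWith n u y →
        ConservesEnergy w n u φ →
        (⨆ t : ℝ, eLpNorm (u t) 2 volume) < ⊤ →
        (⨆ t : ℝ, (eLpNorm (n t) 2 volume + eLpNorm (n t) ⊤ volume)) < ENNReal.ofReal δ →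
        (∃ c : ℝ, c < k / √(1 + k) - ε ∧ ∀ t : ℝ, |deriv y t| ≤ c) →
        ∀ t x : ℝ, n t x = 0 ∧ u t x = 0 ∧ φ t x = 0 := by
  obtain ⟨θ, hθ, hθ4k, hθε⟩ := exists_pos_le_and_mul_le (a := min (1 / 4) (k / 4))
    (b := ε / (2 * √(1 + k)) / 4) (C := 501 * (1 + k)) (by positivity) (by positivity)
    (by positivity)
  obtain ⟨δ₀, hδ₀, hlin⟩ := exists_forall_abs_sub_mul_le hw0 hwk hθ
  refine ⟨min δ₀ (θ / 2), by positivity, fun n u φ y h hy hcomp hcons hu hn ⟨c, hc, hyc⟩ => ?_⟩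
  have hnt : ∀ t, eLpNorm (n t) 2 volume + eLpNorm (n t) ⊤ volume
      ≤ ENNReal.ofReal (min δ₀ (θ / 2)) := fun t =>
    (le_iSup (fun t => eLpNorm (n t) 2 volume + eLpNorm (n t) ⊤ volume) t).trans hn.le
  have hut : ∀ t, eLpNorm (u t) 2 volume ≤ ⨆ t, eLpNorm (u t) 2 volume :=
    le_iSup fun t => eLpNorm (u t) 2 volume
  have hsmall := h.isSmallProfile_and_integral_le_of_eLpNorm_le hw hk hθ
    (hθ4k.trans (min_le_left _ _)) (hθ4k.trans (min_le_right _ _)) (by positivity)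
    (min_le_right _ _) (fun s hs => hlin s (hs.trans (min_le_left _ _))) hnt hu.ne hut
  exact h.eq_zero_of_isSmallProfile hw hy hcomp hcons (fun t => (hsmall t).1)
    (fun t => (hsmall t).2) hε hθε fun t => (hyc t).trans hc.le

end Rigidity

end Development

theorem test
    (p w : ℝ → ℝ) (hp : IsPressure p) (hw : IsWFor p w)
    (k : ℝ) (hk : k = deriv p 1)
    (ε : ℝ) (hε : 0 < ε) :
    ∃ δ : ℝ, 0 < δ ∧
      ∀ (n u φ : ℝ → ℝ → ℝ) (y : ℝ → ℝ),
        IsEPwSolution w n u φ →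
        ContDiff ℝ 1 y →
        L2CompactWith n u y →
        ConservesEnergy w n u φ →
        (⨆ t : ℝ, eLpNorm (u t) 2 volume) < ⊤ →
        (⨆ t : ℝ, (eLpNorm (n t) 2 volume + eLpNorm (n t) ⊤ volume)) < ENNReal.ofReal δ →
        (∃ c : ℝ, c < k / Real.sqrt (1 + k) - ε ∧ ∀ t : ℝ, |deriv y t| ≤ c) →
        ∀ t x : ℝ, n t x = 0 ∧ u t x = 0 ∧ φ t x = 0 := by
  have hk0 : 0 < k := hk ▸ hp.deriv_pos 1 one_pos
  have hwk : HasDerivAt w k 0 := by simpa [hk] using hw.2 0 (by norm_num)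
  exact test_general w hw.1 (fun a ha => (hw.2 a ha).differentiableAt) k hk0 hwk ε hε
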